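/- Let (R, m, k) be a d-dimensional Cohen-Macaulay local ring with an isolated singularity (i.e., R_p is regular for every nonmaximal prime p). Then the maps φ and ψ, defined by φ(X)(p) = ht p − min_{X∈X} depth X_p and ψ(f) = { M ∈ mod R : depth M_p ≥ ht p − f(p) for all p ∈ Spec R }, are mutually inverse bijections between the set of resolving subcategories of mod R containing Ω^d k and the set of grade consistent functions on Spec R. -/

import Mathlib

universe u

open CategoryTheory

namespace ResolvPaper

variable (R : Type u) [CommRing R]

/-- `IsSES f g` means `0 → A → B → C → 0` is a short exact sequence. -/
def IsSES {R : Type u} [CommRing R] {A B C : Type u} [AddCommGroup A] [Module R A]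
    [AddCommGroup B] [Module R B] [AddCommGroup C] [Module R C]
    (f : A →ₗ[R] B) (g : B →ₗ[R] C) : Prop :=
  Function.Injective f ∧ Function.Surjective g ∧ LinearMap.range f = LinearMap.ker g

/-- A resolving subcategory of `mod R`, viewed as a set of bundled modules
closed under isomorphism, containing the finitely generated projective modules, and closed
under direct summands, extensions and syzygies. -/
structure IsResolving (𝒳 : Set (ModuleCat.{u} R)) : Prop where
  fg : ∀ M ∈ 𝒳, Module.Finite R M
  iso_closed : ∀ M N : ModuleCat.{u} R, Nonempty (M ≃ₗ[R] N) → M ∈ 𝒳 → N ∈ 𝒳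
  proj_mem : ∀ M : ModuleCat.{u} R, Module.Finite R M → Module.Projective R M → M ∈ 𝒳
  summand_closed : ∀ M N : ModuleCat.{u} R, ModuleCat.of R (↥M × ↥N) ∈ 𝒳 → M ∈ 𝒳
  ext_closed : ∀ (A B C : ModuleCat.{u} R) (f : A →ₗ[R] B) (g : B →ₗ[R] C),
    IsSES f g → A ∈ 𝒳 → C ∈ 𝒳 → B ∈ 𝒳
  syzygy_closed : ∀ (K P M : ModuleCat.{u} R) (f : K →ₗ[R] P) (g : P →ₗ[R] M),
    IsSES f g → Module.Finite R K → Module.Finite R P → Module.Projective R P →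
    M ∈ 𝒳 → K ∈ 𝒳

/-- The resolving closure: the smallest resolving subcategory containing `S`. -/
def resClosure (S : Set (ModuleCat.{u} R)) : Set (ModuleCat.{u} R) :=
  ⋂₀ {𝒳 | IsResolving R 𝒳 ∧ S ⊆ 𝒳}

/-- An extension-closed subcategory of `mod R`: closed under isomorphism,
direct summands and extensions. -/
def IsExtClosed (𝒳 : Set (ModuleCat.{u} R)) : Prop :=
  (∀ M N : ModuleCat.{u} R, Nonempty (M ≃ₗ[R] N) → M ∈ 𝒳 → N ∈ 𝒳) ∧
  (∀ M N : ModuleCat.{u} R, ModuleCat.of R (↥M × ↥N) ∈ 𝒳 → M ∈ 𝒳) ∧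
  (∀ (A B C : ModuleCat.{u} R) (f : A →ₗ[R] B) (g : B →ₗ[R] C),
    IsSES f g → A ∈ 𝒳 → C ∈ 𝒳 → B ∈ 𝒳)

/-- The extension closure of a set of modules. -/
def extClosure (S : Set (ModuleCat.{u} R)) : Set (ModuleCat.{u} R) :=
  ⋂₀ {𝒳 | IsExtClosed R 𝒳 ∧ S ⊆ 𝒳}

/-- `add R`: direct summands of finite free modules. -/
def addR : Set (ModuleCat.{u} R) :=
  {M | ∃ (n : ℕ) (N : ModuleCat.{u} R), Nonempty ((↥M × ↥N) ≃ₗ[R] (Fin n → R))}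

/-- `pdLE n M` : the projective dimension of `M` is at most `n`. -/
def pdLE : ℕ → ModuleCat.{u} R → Prop
  | 0, M => Module.Projective R M
  | n+1, M => ∃ (K P : ModuleCat.{u} R) (f : K →ₗ[R] P) (g : P →ₗ[R] M),
      Module.Finite R P ∧ Module.Projective R P ∧ IsSES f g ∧ pdLE n K

/-- The projective dimension, an element of `WithBot ℕ∞`; the zero module
has projective dimension `⊥ = -∞`. -/
noncomputable def pdim (M : ModuleCat.{u} R) : WithBot ℕ∞ :=
  sInf {x : WithBot ℕ∞ | (x = ⊥ ∧ Subsingleton M) ∨ ∃ n : ℕ, x = (n : ℕ∞) ∧ pdLE R n M}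

/-- The depth of `M` with respect to the ideal `I`: the supremum of lengths of weakly
`M`-regular sequences contained in `I`.  The zero module has depth `∞`. -/
noncomputable def depthE (I : Ideal R) (M : Type u) [AddCommGroup M] [Module R M] : ℕ∞ :=
  sSup {x : ℕ∞ | ∃ rs : List R, (∀ r ∈ rs, r ∈ I) ∧
    RingTheory.Sequence.IsWeaklyRegular M rs ∧ x = rs.length}

/-- The grade of an ideal: the length of a maximal `R`-regular sequence in `I`. -/
noncomputable def gradeE (I : Ideal R) : ℕ∞ := depthE R I R

/-- A grade consistent function on `Spec R`. -/
def GradeConsistent (f : PrimeSpectrum R → ℕ) : Prop :=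
  (∀ p : PrimeSpectrum R, (f p : ℕ∞) ≤ gradeE R p.asIdeal) ∧
  (∀ p q : PrimeSpectrum R, p.asIdeal ≤ q.asIdeal → f p ≤ f q)

/-- The localization of a module at a prime, as a module over the local ring `R_p`. -/
noncomputable abbrev localizeM (p : PrimeSpectrum R) (M : ModuleCat.{u} R) :
    ModuleCat.{u} (Localization.AtPrime p.asIdeal) :=
  ModuleCat.of (Localization.AtPrime p.asIdeal) (LocalizedModule p.asIdeal.primeCompl M)

/-- `pd_{R_p} M_p`. -/
noncomputable def localPdim (p : PrimeSpectrum R) (M : ModuleCat.{u} R) : WithBot ℕ∞ :=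
  pdim (Localization.AtPrime p.asIdeal) (localizeM R p M)

/-- `depth_{R_p} M_p`. -/
noncomputable def localDepth (p : PrimeSpectrum R) (M : ModuleCat.{u} R) : ℕ∞ :=
  depthE (Localization.AtPrime p.asIdeal)
    (IsLocalRing.maximalIdeal (Localization.AtPrime p.asIdeal))
    (LocalizedModule p.asIdeal.primeCompl M)

/-- The height of a prime ideal. -/
noncomputable def heightE (p : PrimeSpectrum R) : ℕ∞ := Order.height p

/-- `PD(R)` : finitely generated modules of finite projective dimension. -/
def PDcat : Set (ModuleCat.{u} R) :=
  {M | Module.Finite R M ∧ ∃ n : ℕ, pdLE R n M}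

/-- `MCM(R)` : maximal Cohen-Macaulay modules. -/
def MCMcat : Set (ModuleCat.{u} R) :=
  {M | Module.Finite R M ∧ ∀ p : PrimeSpectrum R, heightE R p ≤ localDepth R p M}

/-- The nonfree locus of a module. -/
def NF (M : ModuleCat.{u} R) : Set (PrimeSpectrum R) :=
  {p | ¬ Module.Free (Localization.AtPrime p.asIdeal) (LocalizedModule p.asIdeal.primeCompl M)}

/-- The infinite projective dimension locus of a module. -/
def IPD (M : ModuleCat.{u} R) : Set (PrimeSpectrum R) :=
  {p | localPdim R p M = (⊤ : WithBot ℕ∞)}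

/-- The infinite projective dimension locus of a collection of modules. -/
def IPDcat (𝒳 : Set (ModuleCat.{u} R)) : Set (PrimeSpectrum R) :=
  ⋃ M ∈ 𝒳, IPD R M

/-- The modules in `mod R` whose infinite projective dimension locus lies in `W`. -/
def IPDinv (W : Set (PrimeSpectrum R)) : Set (ModuleCat.{u} R) :=
  {M | Module.Finite R M ∧ IPD R M ⊆ W}

/-- A specialization closed subset of `Spec R`. -/
def SpecClosed (W : Set (PrimeSpectrum R)) : Prop :=
  ∀ p ∈ W, ∀ q : PrimeSpectrum R, p.asIdeal ≤ q.asIdeal → q ∈ W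

/-- Membership in `add 𝒳_p`: direct summands of localizations of finite direct sums
of members of `𝒳`. -/
def memAddLocal (𝒳 : Set (ModuleCat.{u} R)) (p : PrimeSpectrum R)
    (N : ModuleCat.{u} (Localization.AtPrime p.asIdeal)) : Prop :=
  ∃ (n : ℕ) (X : Fin n → ModuleCat.{u} R), (∀ i, X i ∈ 𝒳) ∧
    ∃ (N' : ModuleCat.{u} (Localization.AtPrime p.asIdeal)),
      Nonempty ((↥N × ↥N') ≃ₗ[Localization.AtPrime p.asIdeal]
        ((i : Fin n) → LocalizedModule p.asIdeal.primeCompl (X i)))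

/-- `K` is an `n`-th syzygy of `M` computed from a minimal free resolution over the
local ring `S`. -/
def IsMinSyz (S : Type u) [CommRing S] [IsLocalRing S] :
    ℕ → ModuleCat.{u} S → ModuleCat.{u} S → Prop
  | 0, M, K => Nonempty (K ≃ₗ[S] M)
  | n+1, M, K => ∃ (F : ModuleCat.{u} S) (g : F →ₗ[S] M) (K' : ModuleCat.{u} S)
      (i : K' →ₗ[S] F),
      Module.Finite S F ∧ Module.Free S F ∧ Function.Surjective g ∧
      (LinearMap.ker g ≤ (IsLocalRing.maximalIdeal S) • (⊤ : Submodule S F)) ∧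
      Function.Injective i ∧ LinearMap.range i = LinearMap.ker g ∧
      IsMinSyz S n K' K

/-- `K` is an `n`-th syzygy of `M` in some projective resolution (over any ring). -/
def IsSyz : ℕ → ModuleCat.{u} R → ModuleCat.{u} R → Prop
  | 0, M, K => Nonempty (K ≃ₗ[R] M)
  | n+1, M, K => ∃ (F : ModuleCat.{u} R) (g : F →ₗ[R] M) (K' : ModuleCat.{u} R)
      (i : K' →ₗ[R] F),
      Module.Finite R F ∧ Module.Projective R F ∧ Function.Surjective g ∧
      Function.Injective i ∧ LinearMap.range i = LinearMap.ker g ∧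
      IsSyz n K' K

/-- `T` is (isomorphic to) the Auslander transpose of `M`, computed from a minimal
free presentation over the local ring `S`. -/
def IsTranspose (S : Type u) [CommRing S] [IsLocalRing S] (M T : ModuleCat.{u} S) : Prop :=
  ∃ (F1 F0 : ModuleCat.{u} S) (d : F1 →ₗ[S] F0) (e : F0 →ₗ[S] M),
    Module.Finite S F0 ∧ Module.Free S F0 ∧ Module.Finite S F1 ∧ Module.Free S F1 ∧
    Function.Surjective e ∧ LinearMap.range d = LinearMap.ker e ∧
    LinearMap.ker e ≤ (IsLocalRing.maximalIdeal S) • (⊤ : Submodule S F0) ∧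
    LinearMap.ker d ≤ (IsLocalRing.maximalIdeal S) • (⊤ : Submodule S F1) ∧
    Nonempty (T ≃ₗ[S] ((Module.Dual S F1) ⧸ LinearMap.range d.dualMap))

/-- `T` is (isomorphic to) `Tr Ω^n M` over the local ring `S`. -/
def IsTrOmega (S : Type u) [CommRing S] [IsLocalRing S] (n : ℕ) (M T : ModuleCat.{u} S) :
    Prop :=
  ∃ K : ModuleCat.{u} S, IsMinSyz S n M K ∧ IsTranspose S K T

/-- Resolving subcategory `𝒳` is dominant on `W ⊆ Spec R`. -/
def DominantOn (𝒳 : Set (ModuleCat.{u} R)) (W : Set (PrimeSpectrum R)) : Prop :=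
  ∀ p ∈ W, ∃ (n : ℕ) (K : ModuleCat.{u} (Localization.AtPrime p.asIdeal)),
    IsMinSyz (Localization.AtPrime p.asIdeal) n
      (ModuleCat.of (Localization.AtPrime p.asIdeal)
        (IsLocalRing.ResidueField (Localization.AtPrime p.asIdeal))) K ∧
    memAddLocal R 𝒳 p K

/-- Dominant resolving subcategory. -/
def Dominant (𝒳 : Set (ModuleCat.{u} R)) : Prop := DominantOn R 𝒳 Set.univ

/-- A (noetherian) local ring is Cohen-Macaulay if its depth equals its Krull dimension. -/
def IsCMLocalRing (S : Type u) [CommRing S] [IsLocalRing S] : Prop :=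
  IsNoetherianRing S ∧
    ((depthE S (IsLocalRing.maximalIdeal S) S : WithBot ℕ∞) = ringKrullDim S)

/-- A regular local ring: a noetherian local ring whose maximal ideal is generated by
`dim S` elements. -/
def IsRegLocalRing (S : Type u) [CommRing S] [IsLocalRing S] : Prop :=
  IsNoetherianRing S ∧ ∃ s : Finset S,
    Ideal.span (s : Set S) = IsLocalRing.maximalIdeal S ∧
    ringKrullDim S = (s.card : WithBot ℕ∞)

/-- The singular locus of `R`. -/
def SingLocus : Set (PrimeSpectrum R) :=
  {p | ¬ IsRegLocalRing (Localization.AtPrime p.asIdeal)}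

/-- A hypersurface local ring: the completion is a quotient of a regular local ring by
one element. -/
def IsHypersurfaceLocalRing (S : Type u) [CommRing S] [IsLocalRing S] : Prop :=
  ∃ (T : Type u) (_ : CommRing T) (_ : IsLocalRing T) (f : T),
    IsRegLocalRing T ∧
    Nonempty ((AdicCompletion (IsLocalRing.maximalIdeal S) S) ≃+* (T ⧸ Ideal.span {f}))

/-- A complete intersection local ring: the completion is a quotient of a regular local
ring by a regular sequence. -/
def IsCompleteIntersectionLocalRing (S : Type u) [CommRing S] [IsLocalRing S] : Prop :=
  ∃ (T : Type u) (_ : CommRing T) (_ : IsLocalRing T) (rs : List T),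
    IsRegLocalRing T ∧ RingTheory.Sequence.IsRegular T rs ∧
    Nonempty ((AdicCompletion (IsLocalRing.maximalIdeal S) S) ≃+*
      (T ⧸ Ideal.ofList rs))

/-- The subquotient `A / (A ⊓ B)` of two submodules, used for homology. -/
def subquot {S M : Type u} [CommRing S] [AddCommGroup M] [Module S M]
    (A B : Submodule S M) : Type u :=
  A ⧸ (B.comap A.subtype)

noncomputable instance {S M : Type u} [CommRing S] [AddCommGroup M] [Module S M]
    (A B : Submodule S M) : AddCommGroup (subquot A B) :=
  inferInstanceAs (AddCommGroup (A ⧸ (B.comap A.subtype)))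

noncomputable instance {S M : Type u} [CommRing S] [AddCommGroup M] [Module S M]
    (A B : Submodule S M) : Module S (subquot A B) :=
  inferInstanceAs (Module S (A ⧸ (B.comap A.subtype)))

/-- `E` is (isomorphic to) `Ext^{j+1}_S(M, S)`, computed from a finite free resolution. -/
def IsExtPos (S : Type u) [CommRing S] (j : ℕ) (M E : ModuleCat.{u} S) : Prop :=
  ∃ (F : ℕ → ModuleCat.{u} S) (d : ∀ i : ℕ, (F (i+1) : Type u) →ₗ[S] F i)
    (e : (F 0 : Type u) →ₗ[S] M),
    (∀ i, Module.Finite S (F i)) ∧ (∀ i, Module.Free S (F i)) ∧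
    Function.Surjective e ∧ LinearMap.range (d 0) = LinearMap.ker e ∧
    (∀ i, LinearMap.range (d (i+1)) = LinearMap.ker (d i)) ∧
    Nonempty (E ≃ₗ[S]
      subquot (LinearMap.ker ((d (j+1)).dualMap)) (LinearMap.range ((d j).dualMap)))

/-- `T` is (isomorphic to) `Tor_n^S(M, N)`, computed from a projective resolution of `M`. -/
def IsTor (S : Type u) [CommRing S] (n : ℕ) (M N T : ModuleCat.{u} S) : Prop :=
  ∃ (F : ℕ → ModuleCat.{u} S) (d : ∀ i : ℕ, (F (i+1) : Type u) →ₗ[S] F i)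
    (e : (F 0 : Type u) →ₗ[S] M),
    (∀ i, Module.Projective S (F i)) ∧
    Function.Surjective e ∧ LinearMap.range (d 0) = LinearMap.ker e ∧
    (∀ i, LinearMap.range (d (i+1)) = LinearMap.ker (d i)) ∧
    (match n with
      | 0 => Nonempty (T ≃ₗ[S] TensorProduct S M N)
      | (j+1) => Nonempty (T ≃ₗ[S]
          subquot (LinearMap.ker (LinearMap.rTensor (↥N) (d j)))
            (LinearMap.range (LinearMap.rTensor (↥N) (d (j+1))))))

/-- `idLE n M` : the injective dimension of `M` is at most `n`. -/
def idLE (S : Type u) [CommRing S] : ℕ → ModuleCat.{u} S → Prop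
  | 0, M => Module.Injective S M
  | n+1, M => ∃ (I C : ModuleCat.{u} S) (f : M →ₗ[S] I) (g : I →ₗ[S] C),
      IsSES f g ∧ Module.Injective S I ∧ idLE S n C

/-- `PD_0^n(R)` over a local ring: modules of projective dimension at most `n` that are
free on the punctured spectrum. -/
def PD0n [IsLocalRing R] (n : ℕ) : Set (ModuleCat.{u} R) :=
  {M | Module.Finite R M ∧ pdLE R n M ∧
    ∀ p : PrimeSpectrum R, p.asIdeal ≠ IsLocalRing.maximalIdeal R →
      Module.Free (Localization.AtPrime p.asIdeal) (LocalizedModule p.asIdeal.primeCompl M)}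

/-- `PD_0(R)` over a local ring: modules of finite projective dimension that are
free on the punctured spectrum. -/
def PD0 [IsLocalRing R] : Set (ModuleCat.{u} R) :=
  {M | Module.Finite R M ∧ (∃ n : ℕ, pdLE R n M) ∧
    ∀ p : PrimeSpectrum R, p.asIdeal ≠ IsLocalRing.maximalIdeal R →
      Module.Free (Localization.AtPrime p.asIdeal) (LocalizedModule p.asIdeal.primeCompl M)}

/-- The residue field of a local ring, as a bundled module. -/
noncomputable abbrev residueMod (S : Type u) [CommRing S] [IsLocalRing S] : ModuleCat.{u} S :=
  ModuleCat.of S (IsLocalRing.ResidueField S)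


/-- The map `ψ` defined by depth conditions:
`ψ(f) = { M ∈ mod R | depth M_p ≥ ht p - f(p) for all p }`. -/
def psiDepth (f : PrimeSpectrum R → ℕ) : Set (ModuleCat.{u} R) :=
  {M | Module.Finite R M ∧
    ∀ p : PrimeSpectrum R, heightE R p - (f p : ℕ∞) ≤ localDepth R p M}

section genSES
open scoped Pointwise
variable {S : Type u} [CommRing S]
variable {A B C : Type u} [AddCommGroup A] [Module S A] [AddCommGroup B] [Module S B]
  [AddCommGroup C] [Module S C]

lemma ses_shortExact {f : A →ₗ[S] B} {g : B →ₗ[S] C} (h : IsSES f g) :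
    ∃ w, (ShortComplex.mk (ModuleCat.ofHom f) (ModuleCat.ofHom g) w).ShortExact := by
  have hw : ModuleCat.ofHom f ≫ ModuleCat.ofHom g = 0 := by
    ext x
    have : f x ∈ LinearMap.ker g := h.2.2 ▸ LinearMap.mem_range_self f x
    simpa using this
  refine ⟨hw, ?_⟩
  have := h.2.2
  exact
    { exact := by
        rw [ShortComplex.moduleCat_exact_iff]
        intro x hx
        have hx' : x ∈ LinearMap.ker g := by simpa using hx
        rw [← this] at hx'
        obtain ⟨y, hy⟩ := hx'
        exact ⟨y, hy⟩
      mono_f := (ModuleCat.mono_iff_injective _).2 h.1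
      epi_g := (ModuleCat.epi_iff_surjective _).2 h.2.1 }

lemma isSES_prod : IsSES (LinearMap.inl S A B) (LinearMap.snd S A B) :=
  ⟨LinearMap.inl_injective, LinearMap.snd_surjective, LinearMap.range_inl S A B⟩

/-- regular element SES -/
lemma isSES_smul {x : S} (hx : IsSMulRegular A x) :
    IsSES (LinearMap.lsmul S A x) (Submodule.mkQ (x • (⊤ : Submodule S A))) := by
  refine ⟨hx, Submodule.mkQ_surjective _, ?_⟩
  rw [Submodule.ker_mkQ]
  ext y
  simp [Submodule.mem_smul_pointwise_iff_exists]

end genSES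

section depthZ
open Abelian
variable (S : Type u) [CommRing S] [IsLocalRing S]

/-- vanishing of `Ext^i(k, M)` -/
def ZE (i : ℕ) (M : Type u) [AddCommGroup M] [Module S M] : Prop :=
  Subsingleton (Ext (residueMod S) (ModuleCat.of S M) i)

/-- homological depth at least `t` -/
def Dge (t : ℕ) (M : Type u) [AddCommGroup M] [Module S M] : Prop :=
  ∀ i < t, ZE S i M

variable {S}
variable {A B C : Type u} [AddCommGroup A] [Module S A] [AddCommGroup B] [Module S B]
  [AddCommGroup C] [Module S C]

lemma ZE_iff {i : ℕ} : ZE S i A ↔ ∀ x : Ext (residueMod S) (ModuleCat.of S A) i, x = 0 := by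
  constructor
  · intro h x
    exact h.elim _ _
  · intro h
    exact ⟨fun x y => by rw [h x, h y]⟩

lemma ZE_mid {f : A →ₗ[S] B} {g : B →ₗ[S] C} (h : IsSES f g) {i : ℕ} (hA : ZE S i A)
    (hC : ZE S i C) : ZE S i B := by
  obtain ⟨w, hS⟩ := ses_shortExact h
  rw [ZE_iff] at *
  intro x
  obtain ⟨y, hy⟩ := Ext.covariant_sequence_exact₂ _ hS x (hC _)
  rw [← hy, hA y]; simp

lemma ZE_right {f : A →ₗ[S] B} {g : B →ₗ[S] C} (h : IsSES f g) {i : ℕ} (hA : ZE S (i+1) A)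
    (hB : ZE S i B) : ZE S i C := by
  obtain ⟨w, hS⟩ := ses_shortExact h
  rw [ZE_iff] at *
  intro x
  obtain ⟨y, hy⟩ := Ext.covariant_sequence_exact₃ _ hS x rfl (hA _)
  rw [← hy, hB y]; simp

lemma ZE_left {f : A →ₗ[S] B} {g : B →ₗ[S] C} (h : IsSES f g) {i : ℕ} (hB : ZE S (i+1) B)
    (hC : ZE S i C) : ZE S (i+1) A := by
  obtain ⟨w, hS⟩ := ses_shortExact h
  rw [ZE_iff] at *
  intro x
  obtain ⟨y, hy⟩ := Ext.covariant_sequence_exact₁ _ hS x (hB _) rfl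
  rw [← hy, hC y]; simp

lemma ZE_retract {i : ℕ} (a : A →ₗ[S] B) (b : B →ₗ[S] A) (h : b ∘ₗ a = LinearMap.id)
    (hB : ZE S i B) : ZE S i A := by
  rw [ZE_iff] at *
  intro x
  have h1 : ModuleCat.ofHom a ≫ ModuleCat.ofHom b = 𝟙 _ := by
    rw [← ModuleCat.ofHom_comp, h]; rfl
  have : (x.comp (Ext.mk₀ (ModuleCat.ofHom a)) (add_zero i)).comp (Ext.mk₀ (ModuleCat.ofHom b))
      (add_zero i) = x := by
    rw [Ext.comp_assoc_of_third_deg_zero, Ext.mk₀_comp_mk₀, h1]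
    simp
  rw [← this, hB (x.comp (Ext.mk₀ (ModuleCat.ofHom a)) (add_zero i))]
  simp

lemma ZE_zero_iff_hom : ZE S 0 A ↔ Subsingleton (IsLocalRing.ResidueField S →ₗ[S] A) := by
  unfold ZE
  rw [Ext.addEquiv₀.subsingleton_congr]
  exact (ModuleCat.homAddEquiv (M := residueMod S) (N := ModuleCat.of S A)).subsingleton_congr

lemma ZE_zero_iff : ZE S 0 A ↔
    ∀ x : A, (∀ r ∈ IsLocalRing.maximalIdeal S, r • x = 0) → x = 0 := by
  rw [ZE_zero_iff_hom]
  constructor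
  · intro h x hx
    let φ : (S ⧸ IsLocalRing.maximalIdeal S) →ₗ[S] A :=
      Submodule.liftQ _ (LinearMap.toSpanSingleton S A x) (by
        intro r hr
        simpa using hx r hr)
    let φ' : IsLocalRing.ResidueField S →ₗ[S] A := φ
    have h0 : φ' = 0 := h.elim _ _
    have : φ (Submodule.Quotient.mk 1) = 0 := LinearMap.congr_fun h0 _
    have h3 : φ (Submodule.Quotient.mk 1) = (LinearMap.toSpanSingleton S A x) 1 :=
      Submodule.liftQ_apply _ _ _
    rw [h3] at this
    simpa using this
  · intro h
    constructor
    intro f g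
    ext y
    rw [← sub_eq_zero, ← LinearMap.sub_apply]
    apply h
    intro r hr
    rw [← map_smul]
    obtain ⟨s, rfl⟩ := IsLocalRing.residue_surjective y
    have : r • IsLocalRing.residue S s = 0 := by
      rw [Algebra.smul_def]
      have : algebraMap S (IsLocalRing.ResidueField S) r = 0 := by
        exact (IsLocalRing.residue_eq_zero_iff r).2 hr
      rw [this, zero_mul]
    rw [this, map_zero]

lemma ZE_zero_of_inj (f : A →ₗ[S] B) (hf : Function.Injective f) (hB : ZE S 0 B) : ZE S 0 A := by
  rw [ZE_zero_iff] at *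
  intro x hx
  apply hf
  rw [map_zero]
  apply hB
  intro r hr
  rw [← map_smul, hx r hr, map_zero]

/-- multiplication by an element of the maximal ideal is zero on Ext -/
lemma Ext_smul_zero {i : ℕ} {c : S} (hc : c ∈ IsLocalRing.maximalIdeal S)
    (x : Ext (residueMod S) (ModuleCat.of S A) i) :
    x.comp (Ext.mk₀ (ModuleCat.ofHom (c • LinearMap.id : A →ₗ[S] A))) (add_zero i) = 0 := by
  have h : c ∈ Module.annihilator S (residueMod S) := by
    rw [Module.mem_annihilator]
    intro y
    change IsLocalRing.ResidueField S at y
    change c • y = 0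
    rw [Algebra.smul_def]
    have : algebraMap S (IsLocalRing.ResidueField S) c = 0 :=
      (IsLocalRing.residue_eq_zero_iff c).2 hc
    rw [this, zero_mul]
  have := Ext.postcomp_smul_id_eq_zero_of_mem_annihilator (N := residueMod S)
    (M := ModuleCat.of S A) h i
  have h2 := congrArg (fun f => f.hom x) this
  exact h2

/-- the key trick -/
lemma ZE_trick {f : A →ₗ[S] B} {g : B →ₗ[S] C} (h : IsSES f g) (s : C →ₗ[S] B) (r : B →ₗ[S] C)
    (hrs : r ∘ₗ s = LinearMap.id) {c : S} (hc : c ∈ IsLocalRing.maximalIdeal S)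
    (hgs : g ∘ₗ s = c • LinearMap.id) {i : ℕ} (hA : ZE S i A) : ZE S i C := by
  obtain ⟨w, hS⟩ := ses_shortExact h
  rw [ZE_iff] at *
  intro x
  have h1 : ModuleCat.ofHom s ≫ ModuleCat.ofHom r = 𝟙 _ := by
    rw [← ModuleCat.ofHom_comp, hrs]; rfl
  set y := x.comp (Ext.mk₀ (ModuleCat.ofHom s)) (add_zero i) with hy
  have hy0 : y = 0 := by
    obtain ⟨z, hz⟩ := Ext.covariant_sequence_exact₂ _ hS y (by
      change y.comp (Ext.mk₀ (ModuleCat.ofHom g)) _ = 0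
      rw [hy, Ext.comp_assoc_of_third_deg_zero, Ext.mk₀_comp_mk₀, ← ModuleCat.ofHom_comp, hgs]
      exact Ext_smul_zero hc x)
    rw [← hz, hA z]; simp
  have : y.comp (Ext.mk₀ (ModuleCat.ofHom r)) (add_zero i) = x := by
    rw [hy, Ext.comp_assoc_of_third_deg_zero, Ext.mk₀_comp_mk₀, h1]
    simp
  rw [← this, hy0]; simp

lemma ZE_of_subsingleton [Subsingleton A] (i : ℕ) : ZE S i A := by
  have h0 : ∀ A' : Type u, ∀ [AddCommGroup A'] [Module S A'] [Subsingleton A'], ZE S 0 A' := by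
    intro A' _ _ _
    rw [ZE_zero_iff]
    intro x _
    exact Subsingleton.elim _ _
  have hz : (LinearMap.id : A →ₗ[S] A) = 0 := by ext x; exact Subsingleton.elim _ _
  rw [ZE_iff]
  intro x
  have : x.comp (Ext.mk₀ (𝟙 (ModuleCat.of S A))) (add_zero i) = x := by simp
  rw [← this]
  have h1 : 𝟙 (ModuleCat.of S A) = 0 := by ext x; exact Subsingleton.elim _ _
  rw [h1]; simp

lemma Dge_zero : Dge S 0 A := fun i hi => absurd hi (Nat.not_lt_zero i)
lemma Dge.mono {s t : ℕ} (h : s ≤ t) (hA : Dge S t A) : Dge S s A :=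
  fun i hi => hA i (hi.trans_le h)
lemma Dge_retract {t : ℕ} (a : A →ₗ[S] B) (b : B →ₗ[S] A) (h : b ∘ₗ a = LinearMap.id)
    (hB : Dge S t B) : Dge S t A := fun i hi => ZE_retract a b h (hB i hi)
lemma Dge_equiv {t : ℕ} (e : A ≃ₗ[S] B) (hB : Dge S t B) : Dge S t A :=
  Dge_retract e.toLinearMap e.symm.toLinearMap (by ext; simp) hB
lemma Dge_of_subsingleton [Subsingleton A] (t : ℕ) : Dge S t A := fun i _ => ZE_of_subsingleton i
lemma Dge_mid {f : A →ₗ[S] B} {g : B →ₗ[S] C} (h : IsSES f g) {t : ℕ} (hA : Dge S t A)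
    (hC : Dge S t C) : Dge S t B := fun i hi => ZE_mid h (hA i hi) (hC i hi)
lemma Dge_right {f : A →ₗ[S] B} {g : B →ₗ[S] C} (h : IsSES f g) {t : ℕ} (hA : Dge S (t+1) A)
    (hB : Dge S t B) : Dge S t C := fun i hi => ZE_right h (hA (i+1) (by omega)) (hB i hi)
lemma Dge_left {f : A →ₗ[S] B} {g : B →ₗ[S] C} (h : IsSES f g) {t : ℕ} (hB : Dge S (t+1) B)
    (hC : Dge S t C) : Dge S (t+1) A := by
  intro i hi
  cases i with
  | zero => exact ZE_zero_of_inj f h.1 (hB 0 hi)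
  | succ i => exact ZE_left h (hB _ hi) (hC i (by omega))
lemma Dge_trick {f : A →ₗ[S] B} {g : B →ₗ[S] C} (h : IsSES f g) (s : C →ₗ[S] B) (r : B →ₗ[S] C)
    (hrs : r ∘ₗ s = LinearMap.id) {c : S} (hc : c ∈ IsLocalRing.maximalIdeal S)
    (hgs : g ∘ₗ s = c • LinearMap.id) {t : ℕ} (hA : Dge S t A) : Dge S t C :=
  fun i hi => ZE_trick h s r hrs hc hgs (hA i hi)

lemma Dge_prod {t : ℕ} (hA : Dge S t A) (hB : Dge S t B) : Dge S t (A × B) :=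
  Dge_mid isSES_prod hA hB

lemma Dge_pi {t : ℕ} (hS : Dge S t S) (n : ℕ) : Dge S t (Fin n → S) := by
  induction n with
  | zero => exact Dge_of_subsingleton t
  | succ n ih => exact Dge_equiv (Fin.consLinearEquiv S (fun _ : Fin (n+1) => S)).symm
                  (Dge_prod hS ih)

lemma Dge_projective {t : ℕ} (hS : Dge S t S) [Module.Finite S A] [Module.Projective S A] :
    Dge S t A := by
  obtain ⟨n, f, hf⟩ := Module.Finite.exists_fin' S A
  obtain ⟨g, hg⟩ := Module.projective_lifting_property f LinearMap.id hf
  exact Dge_retract g f hg (Dge_pi hS n)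

lemma Dge_succ_iff_quot {x : S} (hx : IsSMulRegular A x) (hm : x ∈ IsLocalRing.maximalIdeal S)
    {t : ℕ} : Dge S (t+1) A ↔ Dge S t (QuotSMulTop x A) := by
  constructor
  · intro h
    exact Dge_right (isSES_smul hx) h (h.mono (Nat.le_succ t))
  · intro h i hi
    rw [ZE_iff]
    intro y
    obtain ⟨w, hS⟩ := ses_shortExact (isSES_smul hx)
    have hz : y.comp (Ext.mk₀ (ModuleCat.ofHom (LinearMap.lsmul S A x))) (add_zero i) = 0 := by
      have : LinearMap.lsmul S A x = x • LinearMap.id := by ext; simp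
      rw [this]; exact Ext_smul_zero hm y
    cases i with
    | zero =>
      have : ZE S 0 A := by
        rw [ZE_zero_iff]
        intro z hz
        exact hx (by simpa using hz x hm)
      rw [ZE_iff] at this
      exact this y
    | succ i =>
      obtain ⟨z, hz⟩ := Ext.covariant_sequence_exact₁ _ hS y hz rfl
      have h2 := ZE_iff.1 (h i (by omega)) z
      rw [← hz, h2]; simp

lemma exists_regular_of_Dge [IsNoetherianRing S] [Module.Finite S A] {t : ℕ} (h : Dge S (t+1) A) :
    ∃ x ∈ IsLocalRing.maximalIdeal S, IsSMulRegular A x := by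
  have h0 := ZE_zero_iff_hom.1 (h 0 (by omega))
  have : Module.Finite S (IsLocalRing.ResidueField S) :=
    Module.Finite.of_surjective (Algebra.linearMap S (IsLocalRing.ResidueField S))
      IsLocalRing.residue_surjective
  obtain ⟨x, hx, hr⟩ := IsSMulRegular.subsingleton_linearMap_iff.1 h0
  refine ⟨x, ?_, hr⟩
  rw [Module.mem_annihilator] at hx
  have := hx 1
  rw [Algebra.smul_def, mul_one] at this
  exact (IsLocalRing.residue_eq_zero_iff x).1 this

open RingTheory.Sequence

lemma Dge_of_weaklyRegular (rs : List S) (hrs : ∀ r ∈ rs, r ∈ IsLocalRing.maximalIdeal S)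
    (h : IsWeaklyRegular A rs) : Dge S rs.length A := by
  induction rs generalizing A with
  | nil => exact Dge_zero
  | cons r rs ih =>
    rw [isWeaklyRegular_cons_iff] at h
    rw [List.length_cons, Dge_succ_iff_quot h.1 (hrs r (by simp))]
    exact ih (fun r hr => hrs r (by simp [hr])) h.2

lemma exists_weaklyRegular_of_Dge [IsNoetherianRing S] (t : ℕ) : ∀ (A : Type u) [AddCommGroup A]
    [Module S A] [Module.Finite S A], Dge S t A →
    ∃ rs : List S, (∀ r ∈ rs, r ∈ IsLocalRing.maximalIdeal S) ∧ IsWeaklyRegular A rs ∧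
      rs.length = t := by
  induction t with
  | zero => intro A _ _ _ _; exact ⟨[], by simp, IsWeaklyRegular.nil S A, rfl⟩
  | succ t ih =>
    intro A _ _ _ h
    obtain ⟨x, hx, hr⟩ := exists_regular_of_Dge h
    obtain ⟨rs, h1, h2, h3⟩ := ih (QuotSMulTop x A) ((Dge_succ_iff_quot hr hx).1 h)
    refine ⟨x :: rs, ?_, ?_, by simp [h3]⟩
    · intro r hr'
      rcases List.mem_cons.1 hr' with rfl | h
      · exact hx
      · exact h1 r h
    · rw [isWeaklyRegular_cons_iff]; exact ⟨hr, h2⟩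

lemma le_depthE_iff [IsNoetherianRing S] [Module.Finite S A] (t : ℕ) :
    (t : ℕ∞) ≤ depthE S (IsLocalRing.maximalIdeal S) A ↔ Dge S t A := by
  constructor
  · intro h
    cases t with
    | zero => exact Dge_zero
    | succ t =>
      have h2 : (t : ℕ∞) < depthE S (IsLocalRing.maximalIdeal S) A :=
        lt_of_lt_of_le (by exact_mod_cast Nat.lt_succ_self t) h
      obtain ⟨x, ⟨rs, h3, h4, rfl⟩, h5⟩ := lt_sSup_iff.1 h2
      have h6 : t < rs.length := by exact_mod_cast h5
      exact (Dge_of_weaklyRegular rs h3 h4).mono h6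
  · intro h
    obtain ⟨rs, h1, h2, h3⟩ := exists_weaklyRegular_of_Dge t A h
    exact le_sSup ⟨rs, h1, h2, by rw [h3]⟩

end depthZ

section PB
variable {S : Type u} [CommRing S]
variable {A B C D A' : Type u} [AddCommGroup A] [Module S A] [AddCommGroup B] [Module S B]
  [AddCommGroup C] [Module S C] [AddCommGroup D] [Module S D] [AddCommGroup A'] [Module S A']

lemma IsSES.zero {f : A →ₗ[S] B} {g : B →ₗ[S] C} (h : IsSES f g) (x : A) : g (f x) = 0 := by
  have : f x ∈ LinearMap.ker g := h.2.2 ▸ LinearMap.mem_range_self f x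
  simpa using this

lemma IsSES.lift {f : A →ₗ[S] B} {g : B →ₗ[S] C} (h : IsSES f g) {y : B} (hy : g y = 0) :
    ∃ x, f x = y := by
  have : y ∈ LinearMap.ker g := hy
  rw [← h.2.2] at this
  exact this

lemma IsSES.of {f : A →ₗ[S] B} {g : B →ₗ[S] C} (h1 : Function.Injective f)
    (h2 : Function.Surjective g) (h3 : ∀ x, g (f x) = 0) (h4 : ∀ y, g y = 0 → ∃ x, f x = y) :
    IsSES f g := by
  refine ⟨h1, h2, le_antisymm ?_ ?_⟩
  · rintro _ ⟨x, rfl⟩; exact h3 x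
  · intro y hy; exact h4 y hy

lemma isSES_ker {g : B →ₗ[S] C} (hg : Function.Surjective g) :
    IsSES (LinearMap.ker g).subtype g :=
  ⟨Submodule.injective_subtype _, hg, Submodule.range_subtype _⟩

lemma isSES_quot (N : Submodule S B) : IsSES N.subtype N.mkQ :=
  ⟨Submodule.injective_subtype _, Submodule.mkQ_surjective _, by
    rw [Submodule.range_subtype, Submodule.ker_mkQ]⟩

/-- pullback -/
def PB (g : B →ₗ[S] D) (h : C →ₗ[S] D) : Submodule S (B × C) :=
  LinearMap.ker (g.coprod (-h))

lemma mem_PB {g : B →ₗ[S] D} {h : C →ₗ[S] D} {x : B × C} : x ∈ PB g h ↔ g x.1 = h x.2 := by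
  simp [PB, LinearMap.mem_ker, LinearMap.coprod_apply, ← sub_eq_add_neg, sub_eq_zero]

/-- first projection -/
def PBfst (g : B →ₗ[S] D) (h : C →ₗ[S] D) : PB g h →ₗ[S] B :=
  LinearMap.fst S B C ∘ₗ (PB g h).subtype

/-- second projection -/
def PBsnd (g : B →ₗ[S] D) (h : C →ₗ[S] D) : PB g h →ₗ[S] C :=
  LinearMap.snd S B C ∘ₗ (PB g h).subtype

@[simp] lemma PBfst_apply (g : B →ₗ[S] D) (h : C →ₗ[S] D) (x : PB g h) :
    PBfst g h x = x.1.1 := rfl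
@[simp] lemma PBsnd_apply (g : B →ₗ[S] D) (h : C →ₗ[S] D) (x : PB g h) :
    PBsnd g h x = x.1.2 := rfl

/-- universal property -/
def PBlift {g : B →ₗ[S] D} {h : C →ₗ[S] D} (a : A →ₗ[S] B) (b : A →ₗ[S] C)
    (hab : ∀ x, g (a x) = h (b x)) : A →ₗ[S] PB g h :=
  LinearMap.codRestrict (PB g h) (a.prod b) (fun x => mem_PB.2 (hab x))

@[simp] lemma PBlift_apply {g : B →ₗ[S] D} {h : C →ₗ[S] D} (a : A →ₗ[S] B) (b : A →ₗ[S] C)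
    (hab : ∀ x, g (a x) = h (b x)) (x : A) : (PBlift a b hab x).1 = (a x, b x) := rfl

lemma PB_ext {g : B →ₗ[S] D} {h : C →ₗ[S] D} {x y : PB g h} (h1 : x.1.1 = y.1.1)
    (h2 : x.1.2 = y.1.2) : x = y := Subtype.ext (Prod.ext h1 h2)

lemma PB_ses_snd {f : A →ₗ[S] B} {g : B →ₗ[S] D} (hs : IsSES f g) (h : C →ₗ[S] D) :
    IsSES (PBlift (g := g) (h := h) f 0 (fun x => by simp [hs.zero])) (PBsnd g h) := by
  refine IsSES.of ?_ ?_ ?_ ?_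
  · intro x y hxy
    exact hs.1 (congrArg (fun z => z.1.1) hxy)
  · intro c
    obtain ⟨b, hb⟩ := hs.2.1 (h c)
    exact ⟨⟨(b, c), mem_PB.2 hb⟩, rfl⟩
  · intro x; simp
  · rintro ⟨⟨b, c⟩, hbc⟩ hy
    have hc : c = 0 := hy
    subst hc
    have hb : g b = 0 := by simpa using mem_PB.1 hbc
    obtain ⟨x, hx⟩ := hs.lift hb
    exact ⟨x, PB_ext (by simpa using hx) (by simp)⟩

lemma PB_ses_fst {f : A →ₗ[S] C} {h : C →ₗ[S] D} (hs : IsSES f h) (g : B →ₗ[S] D) :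
    IsSES (PBlift (g := g) (h := h) 0 f (fun x => by simp [hs.zero])) (PBfst g h) := by
  refine IsSES.of ?_ ?_ ?_ ?_
  · intro x y hxy
    exact hs.1 (congrArg (fun z => z.1.2) hxy)
  · intro b
    obtain ⟨c, hc⟩ := hs.2.1 (g b)
    exact ⟨⟨(b, c), mem_PB.2 hc.symm⟩, rfl⟩
  · intro x; simp
  · rintro ⟨⟨b, c⟩, hbc⟩ hy
    have hc : b = 0 := hy
    subst hc
    have hb : h c = 0 := by simpa using (mem_PB.1 hbc).symm
    obtain ⟨x, hx⟩ := hs.lift hb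
    exact ⟨x, PB_ext (by simp) (by simpa using hx)⟩

lemma PB_ses {g : B →ₗ[S] D} (hg : Function.Surjective g) (h : C →ₗ[S] D) :
    IsSES (PB g h).subtype (g.coprod (-h)) := by
  apply isSES_ker
  intro d
  obtain ⟨b, hb⟩ := hg d
  exact ⟨(b, 0), by simpa using hb⟩

lemma ses_ker_congr {f : A →ₗ[S] B} {g : B →ₗ[S] C} (h : IsSES f g) :
    Nonempty (A ≃ₗ[S] LinearMap.ker g) :=
  ⟨(LinearEquiv.ofInjective f h.1).trans (LinearEquiv.ofEq _ _ h.2.2)⟩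

lemma equiv_prod_ker (a : A →ₗ[S] B) (b : B →ₗ[S] A) (h : b ∘ₗ a = LinearMap.id) :
    Nonempty (B ≃ₗ[S] A × LinearMap.ker b) := by
  have hb : ∀ x, b (a x) = x := fun x => LinearMap.congr_fun h x
  refine ⟨LinearEquiv.ofBijective (b.prod (LinearMap.codRestrict (LinearMap.ker b)
    (LinearMap.id - a ∘ₗ b) (fun x => by simp [hb]))) ⟨?_, ?_⟩⟩
  · rw [← LinearMap.ker_eq_bot, LinearMap.ker_eq_bot']
    intro x hx
    have h1 : b x = 0 := congrArg Prod.fst hx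
    have h2 : x - a (b x) = 0 := congrArg (fun z => (z.2 : B)) hx
    simpa [h1] using h2
  · rintro ⟨y, ⟨z, hz⟩⟩
    have hz' : b z = 0 := hz
    refine ⟨a y + z, Prod.ext ?_ (Subtype.ext ?_)⟩ <;> simp [hb, hz']

/-- horseshoe -/
lemma horseshoe {f : A →ₗ[S] B} {g : B →ₗ[S] C} (h : IsSES f g) {P Q : Type u}
    [AddCommGroup P] [Module S P] [AddCommGroup Q] [Module S Q] [Module.Projective S Q]
    {a : P →ₗ[S] A} {c : Q →ₗ[S] C} (ha : Function.Surjective a) (hc : Function.Surjective c) :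
    ∃ b : P × Q →ₗ[S] B, Function.Surjective b ∧ (∀ x, g (b x) = c x.2) ∧
      (∀ p, b (p, 0) = f (a p)) ∧
      ∃ (i : LinearMap.ker a →ₗ[S] LinearMap.ker b) (j : LinearMap.ker b →ₗ[S] LinearMap.ker c),
        IsSES i j := by
  obtain ⟨l, hl⟩ := Module.projective_lifting_property g c h.2.1
  have hl' : ∀ q, g (l q) = c q := fun q => LinearMap.congr_fun hl q
  let b : P × Q →ₗ[S] B := (f ∘ₗ a).coprod l
  have hb : ∀ x, b x = f (a x.1) + l x.2 := fun x => rfl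
  have hgb : ∀ x, g (b x) = c x.2 := fun x => by rw [hb, map_add, h.zero, hl', zero_add]
  refine ⟨b, ?_, hgb, fun p => by simp [hb], ?_⟩
  · intro y
    obtain ⟨q, hq⟩ := hc (g y)
    have : g (y - l q) = 0 := by rw [map_sub, hl', hq, sub_self]
    obtain ⟨x, hx⟩ := h.lift this
    obtain ⟨p, rfl⟩ := ha x
    exact ⟨(p, q), by rw [hb, hx, sub_add_cancel]⟩
  · let i : LinearMap.ker a →ₗ[S] LinearMap.ker b :=
      LinearMap.codRestrict _ (LinearMap.inl S P Q ∘ₗ (LinearMap.ker a).subtype) (by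
        rintro ⟨p, hp⟩
        have : a p = 0 := hp
        simp [LinearMap.mem_ker, hb, this])
    let j : LinearMap.ker b →ₗ[S] LinearMap.ker c :=
      LinearMap.codRestrict _ (LinearMap.snd S P Q ∘ₗ (LinearMap.ker b).subtype) (by
        rintro ⟨p, hp⟩
        have : b p = 0 := hp
        simp [LinearMap.mem_ker, ← hgb, this])
    refine ⟨i, j, IsSES.of ?_ ?_ ?_ ?_⟩
    · intro x y hxy
      exact Subtype.ext (congrArg (fun z => z.1.1) hxy)
    · rintro ⟨q, hq⟩
      have hq' : c q = 0 := hq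
      have : g (- l q) = 0 := by rw [map_neg, hl', hq', neg_zero]
      obtain ⟨x, hx⟩ := h.lift this
      obtain ⟨p, rfl⟩ := ha x
      exact ⟨⟨(p, q), by rw [LinearMap.mem_ker, hb, hx]; simp⟩, rfl⟩
    · intro x; rfl
    · rintro ⟨⟨p, q⟩, hpq⟩ hj
      have hq : q = 0 := congrArg Subtype.val hj
      subst hq
      have h0 : b (p, 0) = 0 := hpq
      rw [hb] at h0
      have : a p = 0 := h.1 (by simpa using h0)
      exact ⟨⟨p, this⟩, rfl⟩

end PB

section Res
variable {S : Type u} [CommRing S] {𝒴 𝒵 : Set (ModuleCat.{u} S)}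
variable {A B C D A' : Type u} [AddCommGroup A] [Module S A] [AddCommGroup B] [Module S B]
  [AddCommGroup C] [Module S C] [AddCommGroup D] [Module S D] [AddCommGroup A'] [Module S A']

lemma IsResolving.fin (hY : IsResolving S 𝒴) (h : ModuleCat.of S A ∈ 𝒴) : Module.Finite S A :=
  hY.fg _ h
lemma IsResolving.equiv (hY : IsResolving S 𝒴) (e : A ≃ₗ[S] B) (h : ModuleCat.of S A ∈ 𝒴) :
    ModuleCat.of S B ∈ 𝒴 :=
  hY.iso_closed (ModuleCat.of S A) (ModuleCat.of S B) ⟨e⟩ h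
lemma IsResolving.proj (hY : IsResolving S 𝒴) [Module.Finite S A] [Module.Projective S A] :
    ModuleCat.of S A ∈ 𝒴 := hY.proj_mem (ModuleCat.of S A) ‹_› ‹_›
lemma IsResolving.retract (hY : IsResolving S 𝒴) (a : A →ₗ[S] B) (b : B →ₗ[S] A)
    (h : b ∘ₗ a = LinearMap.id) (hB : ModuleCat.of S B ∈ 𝒴) : ModuleCat.of S A ∈ 𝒴 := by
  obtain ⟨e⟩ := equiv_prod_ker a b h
  exact hY.summand_closed (ModuleCat.of S A) (ModuleCat.of S (LinearMap.ker b)) (hY.equiv e hB)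
lemma IsResolving.ext (hY : IsResolving S 𝒴) {f : A →ₗ[S] B} {g : B →ₗ[S] C} (h : IsSES f g)
    (hA : ModuleCat.of S A ∈ 𝒴) (hC : ModuleCat.of S C ∈ 𝒴) : ModuleCat.of S B ∈ 𝒴 :=
  hY.ext_closed (ModuleCat.of S A) (ModuleCat.of S B) (ModuleCat.of S C) f g h hA hC
lemma IsResolving.prod (hY : IsResolving S 𝒴) (hA : ModuleCat.of S A ∈ 𝒴)
    (hB : ModuleCat.of S B ∈ 𝒴) : ModuleCat.of S (A × B) ∈ 𝒴 := hY.ext isSES_prod hA hB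

lemma fin_left [IsNoetherianRing S] [Module.Finite S B] (f : A →ₗ[S] B)
    (hf : Function.Injective f) : Module.Finite S A :=
  Module.Finite.of_injective f hf

lemma IsResolving.syz [IsNoetherianRing S] (hY : IsResolving S 𝒴) [Module.Finite S B]
    [Module.Projective S B] {f : A →ₗ[S] B} {g : B →ₗ[S] C} (h : IsSES f g)
    (hC : ModuleCat.of S C ∈ 𝒴) : ModuleCat.of S A ∈ 𝒴 :=
  hY.syzygy_closed (ModuleCat.of S A) (ModuleCat.of S B) (ModuleCat.of S C) f g h
    (fin_left f h.1) ‹_› ‹_› hC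

/-- rotation -/
lemma IsResolving.schanuel (hY : IsResolving S 𝒴) {P Q : Type u}
    [AddCommGroup P] [Module S P] [AddCommGroup Q] [Module S Q] [Module.Projective S Q]
    [Module.Finite S Q] [Module.Projective S P] [Module.Finite S P]
    {p : P →ₗ[S] C} {q : Q →ₗ[S] C} (hp : Function.Surjective p) (hq : Function.Surjective q)
    (h : ModuleCat.of S (LinearMap.ker p) ∈ 𝒴) : ModuleCat.of S (LinearMap.ker q) ∈ 𝒴 := by
  have h1 : ModuleCat.of S (PB p q) ∈ 𝒴 := hY.ext (PB_ses_snd (isSES_ker hp) q) h hY.proj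
  obtain ⟨l, hl⟩ := Module.projective_lifting_property q p hq
  have hl' : ∀ x, q (l x) = p x := fun x => LinearMap.congr_fun hl x
  refine hY.retract (B := PB p q) (PBlift 0 (LinearMap.ker q).subtype (by simp))
    (LinearMap.codRestrict _ (PBsnd p q - l ∘ₗ PBfst p q) ?_) ?_ h1
  · rintro ⟨⟨x, y⟩, hxy⟩
    have := mem_PB.1 hxy
    simp [hl', this]
  · ext x; simp

/-- modules whose syzygies lie in `𝒴` -/
def up (𝒴 : Set (ModuleCat.{u} S)) : Set (ModuleCat.{u} S) :=
  {M | ∃ (P : ModuleCat.{u} S) (g : P →ₗ[S] M), Module.Finite S P ∧ Module.Projective S P ∧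
    Function.Surjective g ∧ ModuleCat.of S (LinearMap.ker g) ∈ 𝒴}

lemma mem_up_of {P : Type u} [AddCommGroup P] [Module S P] [Module.Projective S P]
    [Module.Finite S P] {p : P →ₗ[S] C} (hp : Function.Surjective p)
    (h : ModuleCat.of S (LinearMap.ker p) ∈ 𝒴) : ModuleCat.of S C ∈ up 𝒴 :=
  ⟨ModuleCat.of S P, p, ‹_›, ‹_›, hp, h⟩

lemma mem_up_of_ses (hY : IsResolving S 𝒴) [Module.Projective S B]
    [Module.Finite S B] {f : A →ₗ[S] B} {g : B →ₗ[S] C} (h : IsSES f g)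
    (hA : ModuleCat.of S A ∈ 𝒴) : ModuleCat.of S C ∈ up 𝒴 := by
  obtain ⟨e⟩ := ses_ker_congr h
  exact mem_up_of h.2.1 (hY.equiv e hA)

lemma mem_up_iff (hY : IsResolving S 𝒴) {P : Type u} [AddCommGroup P] [Module S P]
    [Module.Projective S P] [Module.Finite S P] {p : P →ₗ[S] C} (hp : Function.Surjective p) :
    ModuleCat.of S C ∈ up 𝒴 ↔ ModuleCat.of S (LinearMap.ker p) ∈ 𝒴 := by
  constructor
  · rintro ⟨Q, q, _, _, hq, h⟩
    exact hY.schanuel hq hp h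
  · exact mem_up_of hp

lemma exists_cover (A : Type u) [AddCommGroup A] [Module S A] [Module.Finite S A] :
    ∃ (n : ℕ) (f : (Fin n → S) →ₗ[S] A), Function.Surjective f := Module.Finite.exists_fin' S A

lemma up_mono (h : 𝒴 ⊆ 𝒵) : up 𝒴 ⊆ up 𝒵 := by
  rintro M ⟨P, g, h1, h2, h3, h4⟩
  exact ⟨P, g, h1, h2, h3, h h4⟩

lemma subset_up [IsNoetherianRing S] (hY : IsResolving S 𝒴) : 𝒴 ⊆ up 𝒴 := by
  intro M hM
  have := hY.fg M hM
  obtain ⟨n, f, hf⟩ := exists_cover (S := S) M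
  exact mem_up_of (C := M) hf (hY.syz (isSES_ker hf) hM)

lemma ker_prodMap_equiv (f : A →ₗ[S] B) (g : C →ₗ[S] D) :
    Nonempty (LinearMap.ker (f.prodMap g) ≃ₗ[S] LinearMap.ker f × LinearMap.ker g) := by
  refine ⟨LinearEquiv.ofBijective ((LinearMap.codRestrict (LinearMap.ker f)
    (LinearMap.fst S A C ∘ₗ (LinearMap.ker (f.prodMap g)).subtype) ?_).prod
    (LinearMap.codRestrict (LinearMap.ker g)
    (LinearMap.snd S A C ∘ₗ (LinearMap.ker (f.prodMap g)).subtype) ?_)) ⟨?_, ?_⟩⟩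
  · rintro ⟨x, hx⟩; exact congrArg Prod.fst hx
  · rintro ⟨x, hx⟩; exact congrArg Prod.snd hx
  · intro x y hxy
    exact Subtype.ext (Prod.ext (congrArg (fun z => (z.1 : A)) hxy)
      (congrArg (fun z => (z.2 : C)) hxy))
  · rintro ⟨⟨x, hx⟩, ⟨y, hy⟩⟩
    exact ⟨⟨(x, y), Prod.ext hx hy⟩, rfl⟩

lemma up_resolving [IsNoetherianRing S] (hY : IsResolving S 𝒴) : IsResolving S (up 𝒴) where
  fg := by
    rintro M ⟨P, g, h1, h2, h3, h4⟩
    exact Module.Finite.of_surjective g h3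
  iso_closed := by
    rintro M N ⟨e⟩ ⟨P, g, h1, h2, h3, h4⟩
    refine ⟨P, e.toLinearMap ∘ₗ g, h1, h2, e.surjective.comp h3, ?_⟩
    rw [LinearEquiv.ker_comp]
    exact h4
  proj_mem := by
    intro M h1 h2
    exact subset_up hY (hY.proj_mem M h1 h2)
  summand_closed := by
    intro M N h
    have : Module.Finite S (M × N) := by
      obtain ⟨P, g, h1, h2, h3, h4⟩ := h
      exact Module.Finite.of_surjective g h3
    have : Module.Finite S M := Module.Finite.of_surjective (LinearMap.fst S M N)
      LinearMap.fst_surjective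
    have : Module.Finite S N := Module.Finite.of_surjective (LinearMap.snd S M N)
      LinearMap.snd_surjective
    obtain ⟨n, f, hf⟩ := exists_cover (S := S) M
    obtain ⟨m, g, hg⟩ := exists_cover (S := S) N
    have hs : Function.Surjective (f.prodMap g) := by
      rintro ⟨x, y⟩
      obtain ⟨a, rfl⟩ := hf x
      obtain ⟨b, rfl⟩ := hg y
      exact ⟨(a, b), rfl⟩
    have h2 := (mem_up_iff hY hs).1 h
    obtain ⟨e⟩ := ker_prodMap_equiv f g
    exact mem_up_of (C := M) hf (hY.summand_closed (ModuleCat.of S (LinearMap.ker f))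
      (ModuleCat.of S (LinearMap.ker g)) (hY.equiv e h2))
  ext_closed := by
    rintro A B C f g h ⟨P, a, h1, h2, h3, h4⟩ ⟨Q, c, h5, h6, h7, h8⟩
    obtain ⟨b, hb, -, -, i, j, hij⟩ := horseshoe h h3 h7
    exact mem_up_of (C := B) hb (hY.ext hij h4 h8)
  syzygy_closed := by
    intro K P M f g h h1 h2 h3 hM
    obtain ⟨e⟩ := ses_ker_congr h
    apply subset_up hY
    exact hY.equiv (B := K) e.symm ((mem_up_iff (C := M) hY h.2.1).1 hM)

/-- rotation lemma -/
lemma rotation [IsNoetherianRing S] (hY : IsResolving S 𝒴) {f : A →ₗ[S] B} {g : B →ₗ[S] C}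
    (h : IsSES f g) (hB : ModuleCat.of S B ∈ 𝒴) (hC : ModuleCat.of S C ∈ up 𝒴) :
    ModuleCat.of S A ∈ 𝒴 := by
  have := (up_resolving hY).fin hC
  obtain ⟨n, p, hp⟩ := exists_cover (S := S) C
  obtain ⟨l, hl⟩ := Module.projective_lifting_property g p h.2.1
  have hl' : ∀ x, g (l x) = p x := fun x => LinearMap.congr_fun hl x
  have hk := (mem_up_iff hY hp).1 hC
  have h1 : ModuleCat.of S (PB g p) ∈ 𝒴 := hY.ext (PB_ses_fst (isSES_ker hp) g) hk hB
  -- A is a retract of PB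
  let r : PB g p →ₗ[S] LinearMap.ker g := LinearMap.codRestrict _ (PBfst g p - l ∘ₗ PBsnd g p) (by
    rintro ⟨⟨x, y⟩, hxy⟩
    have := mem_PB.1 hxy
    simp [hl', this])
  obtain ⟨e⟩ := ses_ker_congr h
  refine hY.equiv e.symm ?_
  refine hY.retract (PBlift (LinearMap.ker g).subtype 0 (by simp)) r ?_ h1
  ext x; simp [r]

lemma up_quot [IsNoetherianRing S] (hZ : IsResolving S 𝒵) {f : A →ₗ[S] B} {g : B →ₗ[S] C}
    (h : IsSES f g) (hA : ModuleCat.of S A ∈ 𝒵) (hB : ModuleCat.of S B ∈ up 𝒵) :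
    ModuleCat.of S C ∈ up 𝒵 := by
  have := (up_resolving hZ).fin hB
  obtain ⟨n, p, hp⟩ := exists_cover (S := S) B
  have hk := (mem_up_iff hZ hp).1 hB
  have hs : Function.Surjective (g ∘ₗ p) := h.2.1.comp hp
  apply mem_up_of hs
  obtain ⟨e⟩ := ses_ker_congr h
  -- 0 → ker p → ker (g p) → ker g → 0
  let i : LinearMap.ker p →ₗ[S] LinearMap.ker (g ∘ₗ p) :=
    LinearMap.codRestrict _ (LinearMap.ker p).subtype (by
      rintro ⟨x, hx⟩
      have : p x = 0 := hx
      simp [this])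
  let j : LinearMap.ker (g ∘ₗ p) →ₗ[S] LinearMap.ker g :=
    LinearMap.codRestrict _ (p ∘ₗ (LinearMap.ker (g ∘ₗ p)).subtype) (by
      rintro ⟨x, hx⟩; exact hx)
  have hij : IsSES i j := by
    refine IsSES.of ?_ ?_ ?_ ?_
    · intro x y hxy; exact Subtype.ext (congrArg (fun z => z.1) hxy)
    · rintro ⟨y, hy⟩
      obtain ⟨x, rfl⟩ := hp y
      exact ⟨⟨x, hy⟩, rfl⟩
    · rintro ⟨x, hx⟩; exact Subtype.ext hx
    · rintro ⟨x, hx⟩ h0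
      exact ⟨⟨x, congrArg Subtype.val h0⟩, rfl⟩
  exact hZ.ext hij hk (hZ.equiv e hA)

/-- iterated up -/
def upn (t : ℕ) (𝒴 : Set (ModuleCat.{u} S)) : Set (ModuleCat.{u} S) := up^[t] 𝒴

lemma upn_zero : upn 0 𝒴 = 𝒴 := rfl
lemma upn_succ (t : ℕ) : upn (t+1) 𝒴 = up (upn t 𝒴) := Function.iterate_succ_apply' _ _ _
lemma upn_succ' (t : ℕ) : upn (t+1) 𝒴 = upn t (up 𝒴) := Function.iterate_succ_apply _ _ _
lemma upn_resolving [IsNoetherianRing S] (hY : IsResolving S 𝒴) (t : ℕ) :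
    IsResolving S (upn t 𝒴) := by
  induction t with
  | zero => exact hY
  | succ t ih => rw [upn_succ]; exact up_resolving ih
lemma upn_mono (h : 𝒴 ⊆ 𝒵) (t : ℕ) : upn t 𝒴 ⊆ upn t 𝒵 := by
  induction t with
  | zero => exact h
  | succ t ih => rw [upn_succ, upn_succ]; exact up_mono ih
lemma upn_subset_succ [IsNoetherianRing S] (hY : IsResolving S 𝒴) (t : ℕ) :
    upn t 𝒴 ⊆ upn (t+1) 𝒴 := by
  rw [upn_succ]; exact subset_up (upn_resolving hY t)

end Res

section Sann
open scoped Pointwise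
variable {S : Type u} [CommRing S] {𝒴 𝒵 : Set (ModuleCat.{u} S)}
variable {A B C D A' : Type u} [AddCommGroup A] [Module S A] [AddCommGroup B] [Module S B]
  [AddCommGroup C] [Module S C] [AddCommGroup D] [Module S D] [AddCommGroup A'] [Module S A']

/-- stable annihilator -/
def sann (S : Type u) [CommRing S] (M : Type u) [AddCommGroup M] [Module S M] : Ideal S where
  carrier := {y | ∃ (P : ModuleCat.{u} S) (a : M →ₗ[S] P) (b : P →ₗ[S] M),
    Module.Finite S P ∧ Module.Projective S P ∧ ∀ x, b (a x) = y • x}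
  zero_mem' := ⟨ModuleCat.of S PUnit, 0, 0, inferInstance, inferInstance, by simp⟩
  add_mem' := by
    rintro y z ⟨P, a, b, h1, h2, h3⟩ ⟨Q, c, d, h4, h5, h6⟩
    exact ⟨ModuleCat.of S (P × Q), a.prod c, b.coprod d, by dsimp; infer_instance,
      by dsimp; infer_instance, fun x => by
        rw [add_smul]
        change b (a x) + d (c x) = _
        rw [h3, h6]⟩
  smul_mem' := by
    rintro c y ⟨P, a, b, h1, h2, h3⟩
    exact ⟨P, a, c • b, h1, h2, fun x => by simp [h3, mul_smul]⟩

lemma mem_sann_of {P : Type u} [AddCommGroup P] [Module S P] [Module.Finite S P]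
    [Module.Projective S P] {y : S} (a : A →ₗ[S] P) (b : P →ₗ[S] A) (h : ∀ x, b (a x) = y • x) :
    y ∈ sann S A := ⟨ModuleCat.of S P, a, b, ‹_›, ‹_›, h⟩

lemma mem_sann_iff {y : S} : y ∈ sann S A ↔ ∃ (P : ModuleCat.{u} S) (a : A →ₗ[S] P)
    (b : P →ₗ[S] A), Module.Finite S P ∧ Module.Projective S P ∧ ∀ x, b (a x) = y • x := Iff.rfl

lemma mem_sann_fin {y : S} (h : y ∈ sann S A) : ∃ (n : ℕ) (a : A →ₗ[S] (Fin n → S))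
    (b : (Fin n → S) →ₗ[S] A), ∀ x, b (a x) = y • x := by
  obtain ⟨P, a, b, h1, h2, h3⟩ := h
  obtain ⟨n, f, hf⟩ := exists_cover (S := S) P
  obtain ⟨l, hl⟩ := Module.projective_lifting_property f LinearMap.id hf
  refine ⟨n, l ∘ₗ a, b ∘ₗ f, fun x => ?_⟩
  have : f (l (a x)) = a x := LinearMap.congr_fun hl (a x)
  simp [this, h3]

lemma sann_retract (a : A →ₗ[S] B) (b : B →ₗ[S] A) (h : ∀ x, b (a x) = x) :
    sann S B ≤ sann S A := by
  rintro y ⟨P, c, d, h1, h2, h3⟩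
  exact ⟨P, c ∘ₗ a, b ∘ₗ d, h1, h2, fun x => by simp [h3, h]⟩

lemma sann_ext {f : A →ₗ[S] B} {g : B →ₗ[S] C} (h : IsSES f g) :
    sann S A * sann S C ≤ sann S B := by
  rw [Ideal.mul_le]
  rintro y ⟨P, a, b, h1, h2, h3⟩ z ⟨Q, c, d, h4, h5, h6⟩
  obtain ⟨l, hl⟩ := Module.projective_lifting_property g d h.2.1
  have hl' : ∀ x, g (l x) = d x := fun x => LinearMap.congr_fun hl x
  let e : B →ₗ[S] LinearMap.range f := LinearMap.codRestrict _
    (z • LinearMap.id - l ∘ₗ c ∘ₗ g) (by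
      intro x
      rw [h.2.2, LinearMap.mem_ker]
      simp [hl', h6])
  let i := (LinearEquiv.ofInjective f h.1).symm.toLinearMap
  have hi : ∀ x, f (i (e x)) = z • x - l (c (g x)) := fun x => by
    have := LinearEquiv.apply_symm_apply (LinearEquiv.ofInjective f h.1) (e x)
    exact congrArg Subtype.val this
  refine mem_sann_of (P := P × Q) ((a ∘ₗ i ∘ₗ e).prod (c ∘ₗ g)) ((f ∘ₗ b).coprod (y • l)) ?_
  intro x
  simp [h3, hi, mul_smul, smul_sub]

lemma sann_syz [Module.Finite S B] [Module.Projective S B] {f : A →ₗ[S] B} {g : B →ₗ[S] C}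
    (h : IsSES f g) : sann S C ≤ sann S A := by
  rintro y ⟨Q, c, d, h4, h5, h6⟩
  obtain ⟨l, hl⟩ := Module.projective_lifting_property g d h.2.1
  have hl' : ∀ x, g (l x) = d x := fun x => LinearMap.congr_fun hl x
  let e : B →ₗ[S] LinearMap.range f := LinearMap.codRestrict _
    (y • LinearMap.id - l ∘ₗ c ∘ₗ g) (by
      intro x
      rw [h.2.2, LinearMap.mem_ker]
      simp [hl', h6])
  let i := (LinearEquiv.ofInjective f h.1).symm.toLinearMap
  have hi : ∀ x, f (i (e x)) = y • x - l (c (g x)) := fun x => by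
    have := LinearEquiv.apply_symm_apply (LinearEquiv.ofInjective f h.1) (e x)
    exact congrArg Subtype.val this
  refine mem_sann_of f (i ∘ₗ e) ?_
  intro x
  apply h.1
  simp [hi, h.zero]

lemma sann_proj [Module.Finite S A] [Module.Projective S A] : sann S A = ⊤ := by
  rw [Ideal.eq_top_iff_one]
  exact mem_sann_of LinearMap.id LinearMap.id (by simp)

lemma ann_le_sann : Module.annihilator S A ≤ sann S A := by
  intro y hy
  rw [Module.mem_annihilator] at hy
  exact mem_sann_of (P := PUnit) 0 0 (by simp [hy])

/-- modules that are projective off `V(I)` -/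
def LFI (I : Ideal S) : Set (ModuleCat.{u} S) :=
  {M | Module.Finite S M ∧ I ≤ (sann S M).radical}

lemma rad_sann_ext {I : Ideal S} {f : A →ₗ[S] B} {g : B →ₗ[S] C} (h : IsSES f g)
    (hA : I ≤ (sann S A).radical) (hC : I ≤ (sann S C).radical) : I ≤ (sann S B).radical := by
  refine le_trans ?_ (Ideal.radical_mono (sann_ext h))
  rw [Ideal.radical_mul]
  exact le_inf hA hC

lemma LFI_resolving [IsNoetherianRing S] (I : Ideal S) : IsResolving S (LFI I) where
  fg := fun M h => h.1
  iso_closed := by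
    rintro M N ⟨e⟩ ⟨h1, h2⟩
    exact ⟨Module.Finite.equiv e, h2.trans (Ideal.radical_mono
      (sann_retract e.symm.toLinearMap e.toLinearMap (by simp)))⟩
  proj_mem := by
    intro M h1 h2
    refine ⟨h1, ?_⟩
    rw [sann_proj]
    exact le_trans le_top Ideal.le_radical
  summand_closed := by
    rintro M N ⟨h1, h2⟩
    have h1' : Module.Finite S (M × N) := h1
    exact ⟨Module.Finite.of_surjective (LinearMap.fst S M N) LinearMap.fst_surjective,
      h2.trans (Ideal.radical_mono (sann_retract (B := M × N) (LinearMap.inl S M N)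
        (LinearMap.fst S M N) (by simp)))⟩
  ext_closed := by
    rintro A B C f g h ⟨h1, h2⟩ ⟨h3, h4⟩
    refine ⟨?_, rad_sann_ext h h2 h4⟩
    have := h.2.2
    have i1 : Module.Finite S (LinearMap.range f) := Module.Finite.range f
    have i2 : Module.Finite S (B ⧸ LinearMap.range f) :=
        Module.Finite.equiv ((Submodule.quotEquivOfEq _ _ this).trans
          (g.quotKerEquivOfSurjective h.2.1)).symm
    exact Module.Finite.of_submodule_quotient (LinearMap.range f)
  syzygy_closed := by
    rintro K P M f g h h1 h2 h3 ⟨h4, h5⟩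
    exact ⟨h1, h5.trans (Ideal.radical_mono (sann_syz h))⟩

/-- modules on which `y` is stably zero -/
def SA (y : S) : Set (ModuleCat.{u} S) := {M | Module.Finite S M ∧ y ∈ sann S M}

lemma SA_of_LFI {I : Ideal S} {x : S} (hx : x ∈ I) (t : ℕ) : ∀ M ∈ upn t (LFI I),
    ∃ N : ℕ, ∀ N' ≥ N, M ∈ upn t (SA (x ^ N')) := by
  induction t with
  | zero =>
    rintro M ⟨h1, h2⟩
    obtain ⟨N, hN⟩ := h2 hx
    exact ⟨N, fun N' hN' => ⟨h1, Ideal.mem_of_dvd _ (pow_dvd_pow x hN') hN⟩⟩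
  | succ t ih =>
    intro M hM
    rw [upn_succ] at hM
    obtain ⟨P, g, h1, h2, h3, h4⟩ := hM
    obtain ⟨N, hN⟩ := ih _ h4
    refine ⟨N, fun N' hN' => ?_⟩
    rw [upn_succ]
    exact ⟨P, g, h1, h2, h3, hN N' hN'⟩

lemma mem_sann_Y {P X : Type u} [AddCommGroup P] [Module S P] [AddCommGroup X] [Module S X]
    [Module.Finite S P] [Module.Projective S P]
    (π : P →ₗ[S] X) (z : S) : z ∈ sann S (PB π (z • LinearMap.id)) := by
  refine mem_sann_of (PBfst _ _) (PBlift (z • LinearMap.id) π (by simp)) ?_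
  rintro ⟨⟨f, x⟩, hfx⟩
  have := mem_PB.1 hfx
  refine PB_ext ?_ ?_
  · simp
  · simpa using this

lemma rad_sann_Y {P X : Type u} [AddCommGroup P] [Module S P] [AddCommGroup X] [Module S X]
    [Module.Finite S P] [Module.Projective S P]
    {π : P →ₗ[S] X} (hπ : Function.Surjective π) (z : S) :
    (sann S X).radical ≤ (sann S (PB π (z • LinearMap.id))).radical :=
  rad_sann_ext (PB_ses_snd (isSES_ker hπ) _) (Ideal.radical_mono (sann_syz (isSES_ker hπ))) le_rfl

/-- tower of the `Y` construction -/
lemma Ytower [IsNoetherianRing S] (J : Ideal S) (Pr : ModuleCat.{u} S → Prop)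
    (hPr : ∀ (X : ModuleCat.{u} S) (n : ℕ) (π : (Fin n → S) →ₗ[S] X) (z : S), z ∈ J →
      Function.Surjective π → Module.Finite S X → Pr X →
      Pr (ModuleCat.of S (PB π (z • LinearMap.id))))
    (X : ModuleCat.{u} S) (hX : Module.Finite S X) (hPX : Pr X) :
    ∃ Y : ModuleCat.{u} S, Module.Finite S Y ∧ Pr Y ∧ J ≤ (sann S Y).radical := by
  have key : ∀ s : Finset S, (∀ z ∈ s, z ∈ J) → ∃ Y : ModuleCat.{u} S, Module.Finite S Y ∧ Pr Y ∧
      ∀ z ∈ s, z ∈ (sann S Y).radical := by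
    classical
    intro s
    induction s using Finset.induction_on with
    | empty => intro _; exact ⟨X, hX, hPX, by simp⟩
    | insert z s hz ih =>
      intro hs
      obtain ⟨Y, h1, h2, h3⟩ := ih (fun w hw => hs w (by simp [hw]))
      obtain ⟨n, π, hπ⟩ := exists_cover (S := S) Y
      refine ⟨ModuleCat.of S (PB π (z • LinearMap.id)), ?_, hPr Y n π z (hs z (by simp)) hπ h1 h2,
        ?_⟩
      · dsimp; infer_instance
      · intro w hw
        rcases Finset.mem_insert.1 hw with rfl | hw
        · exact Ideal.le_radical (mem_sann_Y π w)
        · exact rad_sann_Y hπ z (h3 w hw)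
  obtain ⟨s, hs⟩ := (isNoetherianRing_iff_ideal_fg S).1 inferInstance J
  obtain ⟨Y, h1, h2, h3⟩ := key s (fun z hz => hs ▸ Ideal.subset_span hz)
  refine ⟨Y, h1, h2, ?_⟩
  rw [← hs]
  change Ideal.span _ ≤ _
  rw [Ideal.span_le]
  exact h3

lemma horseshoe_l {f : A →ₗ[S] B} {g : B →ₗ[S] C} (h : IsSES f g) {P Q : Type u}
    [AddCommGroup P] [Module S P] [AddCommGroup Q] [Module S Q]
    {a : P →ₗ[S] A} {c : Q →ₗ[S] C} (ha : Function.Surjective a)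
    (l : Q →ₗ[S] B) (hl' : ∀ q, g (l q) = c q) :
      ∃ (i : LinearMap.ker a →ₗ[S] LinearMap.ker ((f ∘ₗ a).coprod l))
        (j : LinearMap.ker ((f ∘ₗ a).coprod l) →ₗ[S] LinearMap.ker c),
        IsSES i j ∧ ∀ x, (j x : Q) = x.1.2 := by
  let b : P × Q →ₗ[S] B := (f ∘ₗ a).coprod l
  have hb : ∀ x, b x = f (a x.1) + l x.2 := fun x => rfl
  have hgb : ∀ x, g (b x) = c x.2 := fun x => by rw [hb, map_add, h.zero, hl', zero_add]
  let i : LinearMap.ker a →ₗ[S] LinearMap.ker b :=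
      LinearMap.codRestrict _ (LinearMap.inl S P Q ∘ₗ (LinearMap.ker a).subtype) (by
        rintro ⟨p, hp⟩
        have : a p = 0 := hp
        simp [LinearMap.mem_ker, hb, this])
  let j : LinearMap.ker b →ₗ[S] LinearMap.ker c :=
      LinearMap.codRestrict _ (LinearMap.snd S P Q ∘ₗ (LinearMap.ker b).subtype) (by
        rintro ⟨p, hp⟩
        have : b p = 0 := hp
        simp [LinearMap.mem_ker, ← hgb, this])
  refine ⟨i, j, IsSES.of ?_ ?_ ?_ ?_, fun x => rfl⟩
  · intro x y hxy
    exact Subtype.ext (congrArg (fun z => z.1.1) hxy)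
  · rintro ⟨q, hq⟩
    have hq' : c q = 0 := hq
    have : g (- l q) = 0 := by rw [map_neg, hl', hq', neg_zero]
    obtain ⟨x, hx⟩ := h.lift this
    obtain ⟨p, rfl⟩ := ha x
    exact ⟨⟨(p, q), by change b _ = 0; rw [hb, hx]; simp⟩, rfl⟩
  · intro x; rfl
  · rintro ⟨⟨p, q⟩, hpq⟩ hj
    have hq : q = 0 := congrArg Subtype.val hj
    subst hq
    have h0 : b (p, 0) = 0 := hpq
    rw [hb] at h0
    have : a p = 0 := h.1 (by simpa using h0)
    exact ⟨⟨p, this⟩, rfl⟩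

lemma key_pullback [IsNoetherianRing S] (hY : IsResolving S 𝒴) (y : S) (s : ℕ) :
    ∀ (A B E : Type u) [AddCommGroup A] [Module S A] [AddCommGroup B] [Module S B]
      [AddCommGroup E] [Module S E] [Module.Finite S E] (f : B →ₗ[S] E) (π : E →ₗ[S] A),
      IsSES f π → ModuleCat.of S A ∈ upn s (SA y) →
      ModuleCat.of S (PB π (y • LinearMap.id)) ∈ upn s 𝒴 → ModuleCat.of S A ∈ upn s 𝒴 := by
  induction s with
  | zero =>
    intro A B E _ _ _ _ _ _ _ f π h hA hP
    obtain ⟨-, P, a, b, h1, h2, h3⟩ := hA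
    change A →ₗ[S] P at a
    change P →ₗ[S] A at b
    obtain ⟨l, hl⟩ := Module.projective_lifting_property π b h.2.1
    have hl' : ∀ x, π (l x) = b x := fun x => LinearMap.congr_fun hl x
    refine hY.retract (PBlift (l ∘ₗ a) LinearMap.id (fun x => ?_)) (PBsnd _ _) ?_ hP
    · simp only [LinearMap.comp_apply, hl']; exact h3 x
    · ext x; simp
  | succ s ih =>
    intro A B E _ _ _ _ _ _ _ f π h hA hP
    have hBf : Module.Finite S B := fin_left f h.1
    rw [upn_succ] at hA hP ⊢
    obtain ⟨Q, q, h1, h2, hq, h4⟩ := hA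
    obtain ⟨n, r, hr⟩ := exists_cover (S := S) B
    change Q →ₗ[S] A at q
    obtain ⟨l, hl⟩ := Module.projective_lifting_property π q h.2.1
    have hl' : ∀ x, π (l x) = q x := fun x => LinearMap.congr_fun hl x
    obtain ⟨i, j, hij, hj⟩ := horseshoe_l h hr l hl'
    have hfin : Module.Finite S (LinearMap.ker ((f ∘ₗ r).coprod l)) := inferInstance
    refine mem_up_of hq (ih _ _ _ i j hij h4 ?_)
    let Θ : (Fin n → S) × Q →ₗ[S] PB π (y • (LinearMap.id : A →ₗ[S] A)) :=
      PBlift ((f ∘ₗ r).coprod (y • l)) (q ∘ₗ LinearMap.snd S _ _) (by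
        rintro ⟨p, k⟩
        simp [h.zero, hl'])
    let ι : PB j (y • (LinearMap.id : LinearMap.ker q →ₗ[S] LinearMap.ker q)) →ₗ[S]
        (Fin n → S) × Q :=
      (LinearMap.fst S _ _ ∘ₗ (LinearMap.ker ((f ∘ₗ r).coprod l)).subtype ∘ₗ PBfst _ _).prod
        ((LinearMap.ker q).subtype ∘ₗ PBsnd _ _)
    have hs : IsSES (A := PB j (y • (LinearMap.id : LinearMap.ker q →ₗ[S] LinearMap.ker q))) ι Θ := by
      refine IsSES.of ?_ ?_ ?_ ?_
      · rintro ⟨⟨⟨⟨p, q1⟩, hpq⟩, k⟩, hk⟩ ⟨⟨⟨⟨p', q1'⟩, hpq'⟩, k'⟩, hk'⟩ he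
        have e1 : p = p' := congrArg Prod.fst he
        have e2 : k = k' := Subtype.ext (congrArg Prod.snd he)
        subst e1 e2
        have e3 := congrArg Subtype.val (mem_PB.1 hk)
        have e4 := congrArg Subtype.val (mem_PB.1 hk')
        rw [hj] at e3 e4
        have e5 : q1 = q1' := e3.trans e4.symm
        subst e5
        rfl
      · rintro ⟨⟨e, a⟩, hea⟩
        have hea' : π e = y • a := mem_PB.1 hea
        obtain ⟨k, rfl⟩ := hq a
        have : π (e - y • l k) = 0 := by simp [hea', hl']
        obtain ⟨b, hb⟩ := h.lift this
        obtain ⟨p, rfl⟩ := hr b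
        refine ⟨(p, k), PB_ext ?_ rfl⟩
        simp [Θ, hb]
      · rintro ⟨⟨⟨⟨p, q1⟩, hpq⟩, ⟨k, hk0⟩⟩, hk⟩
        have e3 := congrArg Subtype.val (mem_PB.1 hk)
        rw [hj] at e3
        have e4 : q1 = y • k := e3
        subst e4
        have e5 : f (r p) + l (y • k) = 0 := hpq
        have e6 : q k = 0 := hk0
        refine PB_ext ?_ ?_
        · simpa [Θ, ι] using e5
        · simpa [Θ, ι] using e6
      · rintro ⟨p, k⟩ hpk
        have e1 : f (r p) + y • l k = 0 := congrArg (fun z => z.1.1) hpk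
        have e2 : q k = 0 := congrArg (fun z => z.1.2) hpk
        refine ⟨⟨(⟨(p, y • k), by simpa using e1⟩, ⟨k, e2⟩), ?_⟩, rfl⟩
        rw [mem_PB]
        apply Subtype.ext
        rw [hj]
        rfl
    have hYs := upn_resolving hY s
    have h5 := (mem_up_iff hYs hs.2.1).1 hP
    obtain ⟨e⟩ := ses_ker_congr hs
    exact hYs.equiv e.symm h5

lemma ses_quot_pb {P : Type u} [AddCommGroup P] [Module S P] {π : P →ₗ[S] A}
    (hπ : Function.Surjective π) {y : S} (hy : IsSMulRegular A y) :
    IsSES (PBfst π (y • LinearMap.id))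
      (Submodule.mkQ (y • (⊤ : Submodule S A)) ∘ₗ π : P →ₗ[S] QuotSMulTop y A) := by
  refine IsSES.of ?_ ?_ ?_ ?_
  · rintro ⟨⟨p, a⟩, h⟩ ⟨⟨p', a'⟩, h'⟩ he
    have e1 : p = p' := he
    subst e1
    have h1 : π p = y • a := mem_PB.1 h
    have h2 : π p = y • a' := mem_PB.1 h'
    have : a = a' := hy (h1.symm.trans h2)
    subst this; rfl
  · exact (Submodule.mkQ_surjective _).comp hπ
  · rintro ⟨⟨p, a⟩, h⟩
    have h1 : π p = y • a := mem_PB.1 h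
    simp only [LinearMap.comp_apply, PBfst_apply, h1, Submodule.mkQ_apply,
      Submodule.Quotient.mk_eq_zero]
    exact Submodule.smul_mem_pointwise_smul _ _ _ Submodule.mem_top
  · intro p hp
    simp only [LinearMap.comp_apply, Submodule.mkQ_apply,
      Submodule.Quotient.mk_eq_zero] at hp
    obtain ⟨a, -, ha⟩ := hp
    exact ⟨⟨(p, a), mem_PB.2 ha.symm⟩, rfl⟩

lemma quot_mem_up [IsNoetherianRing S] (hY : IsResolving S 𝒴) {y : S} (hy : IsSMulRegular A y)
    (hA : ModuleCat.of S A ∈ 𝒴) : ModuleCat.of S (QuotSMulTop y A) ∈ up 𝒴 := by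
  have := hY.fin hA
  obtain ⟨n, π, hπ⟩ := exists_cover (S := S) A
  exact mem_up_of_ses hY (ses_quot_pb hπ hy)
    (hY.ext (PB_ses_snd (isSES_ker hπ) _) (hY.syz (isSES_ker hπ) hA) hA)

lemma mem_of_quot [IsNoetherianRing S] (hY : IsResolving S 𝒴) {y : S} (hy : IsSMulRegular A y)
    [Module.Finite S A] (s : ℕ)
    (hA : ModuleCat.of S A ∈ upn s (SA y)) (h : ModuleCat.of S (QuotSMulTop y A) ∈ upn (s+1) 𝒴) :
    ModuleCat.of S A ∈ upn s 𝒴 := by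
  have hYs := upn_resolving hY s
  obtain ⟨n, π, hπ⟩ := exists_cover (S := S) A
  have hs := ses_quot_pb hπ hy
  rw [upn_succ] at h
  have h5 := (mem_up_iff hYs hs.2.1).1 h
  obtain ⟨e⟩ := ses_ker_congr hs
  exact key_pullback hY y s _ _ _ _ _ (isSES_ker hπ) hA (hYs.equiv e.symm h5)

end Sann

section Loc
open IsLocalRing
open scoped Pointwise
variable {S : Type u} [CommRing S] {𝒴 𝒵 : Set (ModuleCat.{u} S)}
variable {A B C D A' : Type u} [AddCommGroup A] [Module S A] [AddCommGroup B] [Module S B]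
  [AddCommGroup C] [Module S C] [AddCommGroup D] [Module S D] [AddCommGroup A'] [Module S A']

lemma fin_mid {f : A →ₗ[S] B} {g : B →ₗ[S] C} (h : IsSES f g) [Module.Finite S A]
    [Module.Finite S C] : Module.Finite S B := by
  have i1 : Module.Finite S (LinearMap.range f) := Module.Finite.range f
  have i2 : Module.Finite S (B ⧸ LinearMap.range f) :=
        Module.Finite.equiv ((Submodule.quotEquivOfEq _ _ h.2.2).trans
          (g.quotKerEquivOfSurjective h.2.1)).symm
  exact Module.Finite.of_submodule_quotient (LinearMap.range f)

lemma IsResolving.inter (h1 : IsResolving S 𝒴) (h2 : IsResolving S 𝒵) : IsResolving S (𝒴 ∩ 𝒵) where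
  fg := fun M h => h1.fg M h.1
  iso_closed := fun M N e h => ⟨h1.iso_closed M N e h.1, h2.iso_closed M N e h.2⟩
  proj_mem := fun M a b => ⟨h1.proj_mem M a b, h2.proj_mem M a b⟩
  summand_closed := fun M N h => ⟨h1.summand_closed M N h.1, h2.summand_closed M N h.2⟩
  ext_closed := fun A B C f g h a c => ⟨h1.ext_closed A B C f g h a.1 c.1,
    h2.ext_closed A B C f g h a.2 c.2⟩
  syzygy_closed := fun K P M f g h a b c d => ⟨h1.syzygy_closed K P M f g h a b c d.1,
    h2.syzygy_closed K P M f g h a b c d.2⟩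

/-- finite length modules -/
lemma finlen_mem [IsNoetherianRing S] [IsLocalRing S] (hZ : IsResolving S 𝒵)
    (hk : residueMod S ∈ 𝒵) (N : Type u) [AddCommGroup N] [Module S N] (hN : Module.Finite S N)
    (h : maximalIdeal S ≤ (Module.annihilator S N).radical) : ModuleCat.of S N ∈ 𝒵 := by
  revert h
  induction hN using IsNoetherianRing.induction_on_isQuotientEquivQuotientPrime S with
  | subsingleton N => intro _; exact hZ.proj
  | quotient N p e =>
    intro h
    rw [e.annihilator_eq, Ideal.annihilator_quotient, p.2.isRadical.radical] at h
    have hp : p.1 = maximalIdeal S :=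
      le_antisymm (le_maximalIdeal p.2.ne_top) h
    have hk' : ModuleCat.of S (S ⧸ maximalIdeal S) ∈ 𝒵 := hk
    rw [← hp] at hk'
    exact hZ.equiv e.symm hk'
  | exact N₁ N₂ N₃ f g hf hg hfg h1 h3 =>
    intro h
    have h2 : IsSES f g := ⟨hf, hg, (LinearMap.exact_iff.1 hfg).symm⟩
    exact hZ.ext h2
      (h1 (h.trans (Ideal.radical_mono (LinearMap.annihilator_le_of_injective f hf))))
      (h3 (h.trans (Ideal.radical_mono (LinearMap.annihilator_le_of_surjective g hg))))

lemma ann_mul_sann {f : A →ₗ[S] B} {g : B →ₗ[S] C} (h : IsSES f g) :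
    Module.annihilator S A * sann S B ≤ sann S C := by
  rw [Ideal.mul_le]
  rintro x hx y ⟨P, a, b, h1, h2, h3⟩
  rw [Module.mem_annihilator] at hx
  -- x : B → B kills ker g
  let e := g.quotKerEquivOfSurjective h.2.1
  have hker : LinearMap.ker g ≤ LinearMap.ker (x • (LinearMap.id : B →ₗ[S] B)) := by
    intro z hz
    obtain ⟨w, rfl⟩ := h.lift hz
    simp [← map_smul, hx]
  let θ0 := Submodule.liftQ (LinearMap.ker g) (x • (LinearMap.id : B →ₗ[S] B)) hker
  let θ : C →ₗ[S] B := θ0 ∘ₗ e.symm.toLinearMap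
  have hθ : ∀ z, θ (g z) = x • z := fun z => by
    have : e.symm (g z) = Submodule.Quotient.mk z := by
      rw [LinearEquiv.symm_apply_eq]; rfl
    change θ0 (e.symm (g z)) = _
    rw [this]; rfl
  refine ⟨P, a ∘ₗ θ, g ∘ₗ b, h1, h2, fun c => ?_⟩
  obtain ⟨z, rfl⟩ := h.2.1 c
  simp only [LinearMap.comp_apply, hθ, h3, map_smul]
  rw [← mul_smul, mul_comm]

variable [IsLocalRing S]

/-- locally free on the punctured spectrum -/
abbrev LF (S : Type u) [CommRing S] [IsLocalRing S] : Set (ModuleCat.{u} S) := LFI (maximalIdeal S)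

/-- finite modules of depth at least `t` -/
def DG (S : Type u) [CommRing S] [IsLocalRing S] (t : ℕ) : Set (ModuleCat.{u} S) :=
  {M | Module.Finite S M ∧ Dge S t M}

lemma Dge_ker {f : A →ₗ[S] B} {g : B →ₗ[S] C} (h : IsSES f g) {t : ℕ} (hB : Dge S t B)
    (hC : Dge S t C) : Dge S t A := by
  cases t with
  | zero => exact Dge_zero
  | succ t => exact Dge_left h hB (hC.mono (Nat.le_succ t))

lemma DG_resolving {t : ℕ} (hS : Dge S t S) : IsResolving S (DG S t) where
  fg := fun M h => h.1
  iso_closed := by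
    rintro M N ⟨e⟩ ⟨h1, h2⟩
    exact ⟨Module.Finite.equiv e, Dge_equiv e.symm h2⟩
  proj_mem := fun M h1 h2 => ⟨h1, Dge_projective hS⟩
  summand_closed := by
    rintro M N ⟨h1, h2⟩
    have h1' : Module.Finite S (M × N) := h1
    exact ⟨Module.Finite.of_surjective (LinearMap.fst S M N) LinearMap.fst_surjective,
      Dge_retract (LinearMap.inl S M N) (LinearMap.fst S M N) (LinearMap.fst_comp_inl S M N) h2⟩
  ext_closed := by
    rintro A B C f g h ⟨h1, h2⟩ ⟨h3, h4⟩
    exact ⟨fin_mid h, Dge_mid h h2 h4⟩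
  syzygy_closed := by
    rintro K P M f g h h1 h2 h3 ⟨h4, h5⟩
    exact ⟨h1, Dge_ker h (Dge_projective hS) h5⟩

lemma residue_mem_LF [IsNoetherianRing S] : residueMod S ∈ LF S := by
  refine ⟨Module.Finite.of_surjective (Algebra.linearMap S (ResidueField S))
      residue_surjective, ?_⟩
  refine le_trans ?_ Ideal.le_radical
  refine le_trans ?_ ann_le_sann
  intro r hr
  rw [Module.mem_annihilator]
  intro y
  change ResidueField S at y
  change r • y = 0
  rw [Algebra.smul_def]
  have : algebraMap S (ResidueField S) r = 0 :=
    (residue_eq_zero_iff r).2 hr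
  rw [this, zero_mul]

lemma LF_up [IsNoetherianRing S] {h : ℕ} (hS : Dge S h S) (s : ℕ) : ∀ (j : ℕ), j + s ≤ h →
    ∀ M ∈ upn s (LF S), Dge S j M → M ∈ upn s (LF S ∩ DG S (j + s)) := by
  induction s with
  | zero => intro j _ M hM hj; exact ⟨hM, hM.1, hj⟩
  | succ s ih =>
    intro j hj M hM hd
    rw [upn_succ] at hM ⊢
    obtain ⟨P, g, h1, h2, h3, h4⟩ := hM
    refine ⟨P, g, h1, h2, h3, ?_⟩
    have := ih (j+1) (by omega) _ h4
      (Dge_left (isSES_ker h3) ((Dge_projective hS).mono (by omega)) hd)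
    rwa [show j + 1 + s = j + (s + 1) by ring] at this

open RingTheory.Sequence in
lemma reduce [IsNoetherianRing S] (t : ℕ) : ∀ (s : ℕ) (M : Type u) [AddCommGroup M] [Module S M],
    ModuleCat.of S M ∈ upn s (LF S) → Dge S t M →
    ∃ N : ModuleCat.{u} S, N ∈ upn (s + t) (LF S) ∧
      (∀ 𝒴 : Set (ModuleCat.{u} S), IsResolving S 𝒴 →
        (ModuleCat.of S M ∈ upn s 𝒴 ↔ N ∈ upn (s + t) 𝒴)) ∧
      (∀ j, Dge S (t + j) M ↔ Dge S j N) ∧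
      ∃ rs : List S, rs.length = t ∧ (∀ r ∈ rs, r ∈ maximalIdeal S) ∧ IsWeaklyRegular M rs ∧
        (∀ r ∈ rs, r ∈ Module.annihilator S N) ∧
        Module.annihilator S M ≤ Module.annihilator S N := by
  induction t with
  | zero =>
    intro s M _ _ hM _
    exact ⟨ModuleCat.of S M, hM, fun 𝒴 _ => Iff.rfl, fun j => by rw [zero_add], [], rfl, by simp,
      IsWeaklyRegular.nil S M, by simp, le_rfl⟩
  | succ t ih =>
    intro s M _ _ hM hd
    have hfin := (upn_resolving (LFI_resolving (maximalIdeal S)) s).fin hM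
    obtain ⟨x, hx, hreg⟩ := exists_regular_of_Dge hd
    obtain ⟨N0, hN0⟩ := SA_of_LFI hx s _ hM
    have hSA := hN0 (N0 + 1) (by omega)
    set y := x ^ (N0 + 1) with hy
    have hyreg : IsSMulRegular M y := hreg.pow _
    have hym : y ∈ maximalIdeal S := Ideal.pow_mem_of_mem _ hx _ (Nat.succ_pos _)
    have hq : ∀ 𝒴 : Set (ModuleCat.{u} S), IsResolving S 𝒴 →
        (ModuleCat.of S M ∈ upn s 𝒴 ↔ ModuleCat.of S (QuotSMulTop y M) ∈ upn (s + 1) 𝒴) := by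
      intro 𝒴 hY
      constructor
      · intro h
        rw [upn_succ]
        exact quot_mem_up (upn_resolving hY s) hyreg h
      · exact mem_of_quot hY hyreg s hSA
    obtain ⟨N, h1, h2, h3, rs, h4, h5, h6, h7, h8⟩ := ih (s + 1) (QuotSMulTop y M)
      ((hq _ (LFI_resolving _)).1 hM) ((Dge_succ_iff_quot hyreg hym).1 hd)
    have e : s + 1 + t = s + (t + 1) := by ring
    rw [e] at h1
    refine ⟨N, h1, ?_, ?_, y :: rs, by simp [h4], ?_, ?_, ?_, ?_⟩
    · intro 𝒴 hY
      rw [hq 𝒴 hY, h2 𝒴 hY, e]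
    · intro j
      rw [← h3 j, show t + 1 + j = t + j + 1 by ring, Dge_succ_iff_quot hyreg hym]
    · intro r hr
      rcases List.mem_cons.1 hr with rfl | hr
      · exact hym
      · exact h5 r hr
    · rw [isWeaklyRegular_cons_iff]; exact ⟨hyreg, h6⟩
    · intro r hr
      rcases List.mem_cons.1 hr with rfl | hr
      · apply h8
        rw [Module.mem_annihilator]
        intro m
        obtain ⟨m, rfl⟩ := Submodule.mkQ_surjective _ m
        rw [← map_smul]
        rw [Submodule.mkQ_apply, Submodule.Quotient.mk_eq_zero]
        exact Submodule.smul_mem_pointwise_smul _ _ _ Submodule.mem_top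
      · exact h7 r hr
    · refine le_trans ?_ h8
      exact LinearMap.annihilator_le_of_surjective (Submodule.mkQ (y • (⊤ : Submodule S M)))
        (Submodule.mkQ_surjective _)

lemma exists_socle (h : ¬ Dge S 1 A) : ∃ u : A, u ≠ 0 ∧ ∀ r ∈ maximalIdeal S, r • u = 0 := by
  have : ¬ ZE S 0 A := by
    intro h0
    apply h
    intro i hi
    obtain rfl : i = 0 := by omega
    exact h0
  rw [ZE_zero_iff] at this
  push Not at this
  obtain ⟨u, h1, h2⟩ := this
  exact ⟨u, h2, h1⟩

lemma socle_embed {u : A} (hu : u ≠ 0) (hm : ∀ r ∈ maximalIdeal S, r • u = 0) :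
    ∃ f : ResidueField S →ₗ[S] A, Function.Injective f ∧
      ∀ x ∈ LinearMap.range f, ∃ r : S, x = r • u := by
  have hk : LinearMap.ker (LinearMap.toSpanSingleton S A u) = maximalIdeal S := by
    symm
    apply (maximalIdeal.isMaximal S).eq_of_le
    · intro h
      have : (1 : S) ∈ LinearMap.ker (LinearMap.toSpanSingleton S A u) := by rw [h]; trivial
      apply hu
      simpa using this
    · intro r hr
      simpa using hm r hr
  let φ : (S ⧸ maximalIdeal S) →ₗ[S] A :=
      Submodule.liftQ _ (LinearMap.toSpanSingleton S A u) hk.ge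
  have hφ : Function.Injective φ := by
    rw [← LinearMap.ker_eq_bot]
    exact Submodule.ker_liftQ_eq_bot _ _ _ hk.le
  refine ⟨φ, hφ, ?_⟩
  rintro _ ⟨y, rfl⟩
  obtain ⟨r, rfl⟩ := Submodule.mkQ_surjective _ y
  exact ⟨r, by
    change (Submodule.liftQ _ (LinearMap.toSpanSingleton S A u) hk.ge) (Submodule.Quotient.mk r) = _
    rw [Submodule.liftQ_apply]; rfl⟩

lemma exists_torsion [IsNoetherianRing S] (N : Type u) [AddCommGroup N] [Module S N]
    [Module.Finite S N] : ∃ Γ : Submodule S N,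
      maximalIdeal S ≤ (Module.annihilator S Γ).radical ∧ Dge S 1 (N ⧸ Γ) := by
  have hwf : WellFoundedGT (Submodule S N) := inferInstance
  obtain ⟨Γ, hΓ, hmax⟩ := hwf.wf.has_min
    {Γ : Submodule S N | maximalIdeal S ≤ (Module.annihilator S Γ).radical} ⟨⊥, by
      have : Module.annihilator S (⊥ : Submodule S N) = ⊤ :=
        Module.annihilator_eq_top_iff.2 inferInstance
      simp [this, Ideal.radical_top]⟩
  refine ⟨Γ, hΓ, ?_⟩
  by_contra hd
  obtain ⟨u, hu, hm⟩ := exists_socle hd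
  obtain ⟨v, rfl⟩ := Submodule.mkQ_surjective _ u
  have hv : v ∉ Γ := by
    intro h
    exact hu (by simpa using h)
  have hm' : ∀ r ∈ maximalIdeal S, r • v ∈ Γ := by
    intro r hr
    have := hm r hr
    rwa [← map_smul, Submodule.mkQ_apply, Submodule.Quotient.mk_eq_zero] at this
  refine hmax (Γ ⊔ Submodule.span S {v}) ?_ ?_
  · have h1 : maximalIdeal S * Module.annihilator S Γ ≤
        Module.annihilator S (Γ ⊔ Submodule.span S {v} : Submodule S N) := by
      rw [Ideal.mul_le]
      intro r hr y hy
      rw [Submodule.mem_annihilator] at hy ⊢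
      intro n hn
      obtain ⟨a, ha, b, hb, rfl⟩ := Submodule.mem_sup.1 hn
      obtain ⟨c, rfl⟩ := Submodule.mem_span_singleton.1 hb
      have e1 : (r * y) • a = 0 := by rw [mul_smul, hy a ha, smul_zero]
      have e2 : (r * y) • c • v = 0 := by
        have := hy _ (hm' r hr)
        rw [smul_comm, mul_comm r y, mul_smul, this, smul_zero]
      rw [smul_add, e1, e2, add_zero]
    refine le_trans ?_ (Ideal.radical_mono h1)
    rw [Ideal.radical_mul]
    exact le_inf Ideal.le_radical hΓ
  · change Γ < _
    refine lt_of_le_of_ne le_sup_left ?_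
    intro h
    exact hv (h ▸ Submodule.mem_sup_right (Submodule.mem_span_singleton_self v))

lemma LF_quot_torsion [IsNoetherianRing S] {f : A →ₗ[S] B} {g : B →ₗ[S] C} (h : IsSES f g)
    (hA : maximalIdeal S ≤ (Module.annihilator S A).radical) (t : ℕ)
    (hB : ModuleCat.of S B ∈ upn t (LF S)) : ModuleCat.of S C ∈ upn t (LF S) := by
  have hLF := LFI_resolving (maximalIdeal S)
  have hfin := (upn_resolving hLF t).fin hB
  cases t with
  | zero =>
    refine ⟨Module.Finite.of_surjective g h.2.1, ?_⟩
    refine le_trans ?_ (Ideal.radical_mono (ann_mul_sann h))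
    rw [Ideal.radical_mul]
    exact le_inf hA hB.2
  | succ t =>
    rw [upn_succ] at *
    have : Module.Finite S A := fin_left f h.1
    exact up_quot (upn_resolving hLF t) h
      (finlen_mem (upn_resolving hLF t)
        (by
          clear hB hfin
          induction t with
          | zero => exact residue_mem_LF
          | succ t ih => exact upn_subset_succ hLF t ih) A this hA) hB

lemma residue_mem_upn [IsNoetherianRing S] (t : ℕ) : residueMod S ∈ upn t (LF S) := by
  induction t with
  | zero => exact residue_mem_LF
  | succ t ih => exact upn_subset_succ (LFI_resolving _) t ih

theorem local_thm [IsNoetherianRing S] {h : ℕ} (hS : Dge S h S) (hY : IsResolving S 𝒴)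
    (hP : ∀ M ∈ LF S, Dge S h M → M ∈ 𝒴) (s : ℕ) : ∀ t : ℕ, t + s = h →
    ∀ X ∈ 𝒴, Dge S t X → ¬ Dge S (t+1) X → ∀ M ∈ LF S, Dge S t M → M ∈ 𝒴 := by
  have hLF := LFI_resolving (maximalIdeal S)
  induction s with
  | zero =>
    intro t ht X _ _ _ M hM hd
    rw [add_zero] at ht
    exact hP M hM (ht ▸ hd)
  | succ s ih =>
    intro t ht X hX hX1 hX2
    -- P(t+1)
    have hP1 : ∀ M ∈ LF S, Dge S (t+1) M → M ∈ 𝒴 := by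
      have := hY.fg X hX
      obtain ⟨n, π, hπ⟩ := exists_cover (S := S) X
      have hs := isSES_ker hπ
      refine ih (t+1) (by omega) (ModuleCat.of S (LinearMap.ker π)) (hY.syz hs hX)
        (Dge_left hs ((Dge_pi hS n).mono (by omega)) hX1) ?_
      intro hc
      exact hX2 (Dge_right hs hc ((Dge_pi hS n).mono (by omega)))
    -- cut X down
    obtain ⟨X', hX'f, ⟨hX', hX1', hX2'⟩, hrad⟩ := Ytower (maximalIdeal S)
      (fun Y => Y ∈ 𝒴 ∧ Dge S t Y ∧ ¬ Dge S (t+1) Y) (by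
        rintro Y n π z hz hπ hYf ⟨h1, h2, h3⟩
        have hs := isSES_ker hπ
        refine ⟨hY.ext (PB_ses_snd hs _) (hY.syz hs h1) h1,
          Dge_mid (PB_ses_snd hs _) (Dge_ker hs ((Dge_pi hS n).mono (by omega)) h2) h2, ?_⟩
        intro hc
        refine h3 (Dge_trick (PB_ses hπ (z • LinearMap.id)) (LinearMap.inr S _ _)
          (LinearMap.snd S _ _) (LinearMap.snd_comp_inr S _ _) (c := -z) (neg_mem hz) ?_ hc)
        ext y; simp) X (hY.fg X hX) ⟨hX, hX1, hX2⟩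
    -- residue field in upn t 𝒴
    have hYt := upn_resolving hY t
    have hk : residueMod S ∈ upn t 𝒴 := by
      obtain ⟨N, n1, n2, n3, -⟩ := reduce t 0 X' ⟨hX'f, hrad⟩ hX1'
      rw [zero_add] at n1 n2
      have hNY : N ∈ upn t 𝒴 := (n2 𝒴 hY).1 hX'
      have hN1 : ¬ Dge S 1 N := fun hc => hX2' ((n3 1).2 hc)
      obtain ⟨u, hu, hm⟩ := exists_socle hN1
      obtain ⟨f, hf, -⟩ := socle_embed hu hm
      have hs : IsSES f (LinearMap.range f).mkQ := ⟨hf, Submodule.mkQ_surjective _, by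
        rw [Submodule.ker_mkQ]⟩
      have hq : ModuleCat.of S (N ⧸ LinearMap.range f) ∈ upn (t+1) (LF S) := by
        rw [upn_succ]
        exact up_quot (upn_resolving hLF t) hs (residue_mem_upn t)
          (subset_up (upn_resolving hLF t) n1)
      have hq2 := LF_up hS (t+1) 0 (by omega) _ hq Dge_zero
      rw [zero_add] at hq2
      have hq3 : ModuleCat.of S (N ⧸ LinearMap.range f) ∈ upn (t+1) 𝒴 :=
        upn_mono (fun M hM => hP1 M hM.1 hM.2.2) _ hq2
      rw [upn_succ] at hq3
      exact rotation hYt hs hNY hq3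
    intro M hM hd
    obtain ⟨N, n1, n2, n3, -⟩ := reduce t 0 M hM hd
    rw [zero_add] at n1 n2
    have hNf := (upn_resolving hLF t).fg N n1
    obtain ⟨Γ, g1, g2⟩ := exists_torsion (S := S) N
    have hs := isSES_quot Γ
    have hq : ModuleCat.of S (N ⧸ Γ) ∈ upn t (LF S) := LF_quot_torsion hs g1 t n1
    have hq2 := LF_up hS t 1 (by omega) _ hq g2
    have hq3 : ModuleCat.of S (N ⧸ Γ) ∈ upn t 𝒴 :=
      upn_mono (fun M hM => hP1 M hM.1 (by rw [add_comm t 1]; exact hM.2.2)) _ hq2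
    have hΓ : ModuleCat.of S Γ ∈ upn t 𝒴 := finlen_mem hYt hk Γ inferInstance g1
    exact (n2 𝒴 hY).2 (hYt.ext hs hΓ hq3)

open RingTheory.Sequence

lemma weaklyRegular_retract (rs : List S) : ∀ (A B : Type u) [AddCommGroup A] [Module S A]
    [AddCommGroup B] [Module S B] (a : A →ₗ[S] B) (b : B →ₗ[S] A), b ∘ₗ a = LinearMap.id →
    IsWeaklyRegular B rs → IsWeaklyRegular A rs := by
  induction rs with
  | nil => intro A B _ _ _ _ a b _ _; exact IsWeaklyRegular.nil S A
  | cons r rs ih =>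
    intro A B _ _ _ _ a b h hB
    rw [isWeaklyRegular_cons_iff] at hB ⊢
    refine ⟨?_, ih _ _ (QuotSMulTop.map r a) (QuotSMulTop.map r b) ?_ hB.2⟩
    · intro x y hxy
      have : r • a x = r • a y := by rw [← map_smul, ← map_smul]; exact congrArg a hxy
      have h2 := congrArg b (hB.1 this)
      simpa [← LinearMap.comp_apply, h] using h2
    · rw [← QuotSMulTop.map_comp, h, QuotSMulTop.map_id]

lemma isRegular_of_weakly {rs : List S} (hm : ∀ r ∈ rs, r ∈ maximalIdeal S)
    (h : IsWeaklyRegular S rs) : IsRegular S rs := by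
  refine ⟨h, ?_⟩
  intro hc
  have h1 : Ideal.ofList rs ≤ maximalIdeal S := Ideal.span_le.2 hm
  have h2 : (⊤ : Ideal S) ≤ maximalIdeal S := by
    rw [hc]
    exact le_trans (by simp) h1
  exact (maximalIdeal.isMaximal S).ne_top (top_le_iff.1 h2)

lemma Dge_le_dim [IsNoetherianRing S] {t : ℕ} (h : Dge S t S) : (t : WithBot ℕ∞) ≤ ringKrullDim S := by
  obtain ⟨rs, h1, h2, h3⟩ := exists_weaklyRegular_of_Dge t S h
  have hr := isRegular_of_weakly h1 h2
  rw [← ringKrullDim_add_length_eq_ringKrullDim_of_isRegular rs hr, h3]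
  have h4 : Ideal.ofList rs ≤ maximalIdeal S := Ideal.span_le.2 h1
  have : Nontrivial (S ⧸ Ideal.ofList rs) := Ideal.Quotient.nontrivial_iff.2 (fun hc =>
    (maximalIdeal.isMaximal S).ne_top (top_le_iff.1 (hc ▸ h4)))
  have h5 : (0 : WithBot ℕ∞) ≤ ringKrullDim (S ⧸ Ideal.ofList rs) := ringKrullDim_nonneg_of_nontrivial
  exact le_add_of_nonneg_left h5

lemma top_case [IsNoetherianRing S] {d : ℕ} (hdim : ringKrullDim S = d) (hS : Dge S d S)
    (hY : IsResolving S 𝒴) (hk : residueMod S ∈ upn d 𝒴) :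
    ∀ M ∈ LF S, Dge S d M → M ∈ 𝒴 := by
  intro M hM hd
  have hLF := LFI_resolving (maximalIdeal S)
  have h1 : ModuleCat.of S (M × S) ∈ LF S := hLF.prod hM hLF.proj
  obtain ⟨N, n1, n2, -, rs, r1, r2, r3, r4, -⟩ := reduce d 0 (M × S) h1 (Dge_prod hd hS)
  rw [zero_add] at n1 n2
  have hw : IsWeaklyRegular S rs := weaklyRegular_retract rs S (M × S) (LinearMap.inr S M S)
    (LinearMap.snd S M S) (LinearMap.snd_comp_inr S M S) r3
  have hr := isRegular_of_weakly r2 hw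
  have hdim2 := ringKrullDim_add_length_eq_ringKrullDim_of_isRegular rs hr
  have h4 : Ideal.ofList rs ≤ maximalIdeal S := Ideal.span_le.2 r2
  have hrad : maximalIdeal S ≤ (Ideal.ofList rs).radical := by
    rw [Ideal.radical_eq_sInf]
    refine le_sInf ?_
    rintro p ⟨hp1, hp2⟩
    by_contra hne
    have hlt : p < maximalIdeal S := lt_of_le_of_ne (le_maximalIdeal hp2.ne_top)
      (fun h => hne h.ge)
    have : Nontrivial (S ⧸ Ideal.ofList rs) := Ideal.Quotient.nontrivial_iff.2 (fun hc =>
      (maximalIdeal.isMaximal S).ne_top (top_le_iff.1 (hc ▸ h4)))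
    have h0 : Ring.KrullDimLE 0 (S ⧸ Ideal.ofList rs) := by
      rw [Ring.krullDimLE_iff]
      rw [r1, hdim] at hdim2
      by_contra hc
      have h6 : (1 : WithBot ℕ∞) ≤ ringKrullDim (S ⧸ Ideal.ofList rs) := by
        push Not at hc
        revert hc
        generalize ringKrullDim (S ⧸ Ideal.ofList rs) = x
        intro hc
        induction x with
        | bot => exact absurd hc (by simp)
        | coe x =>
          have : (0 : ℕ∞) < x := by exact_mod_cast hc
          have := Order.one_le_iff_pos.2 this
          exact_mod_cast this
      have h7 : (1 : WithBot ℕ∞) + (d : WithBot ℕ∞) ≤ d := by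
        rw [← hdim2]; gcongr
        rw [hdim2]
      have : (1 + d : ℕ) ≤ d := by exact_mod_cast h7
      omega
    have hpq : (p.map (Ideal.Quotient.mk (Ideal.ofList rs))).IsPrime :=
      Ideal.map_isPrime_of_surjective Ideal.Quotient.mk_surjective (by simpa using hp1)
    have hmax := Ideal.IsPrime.isMaximal' (I := p.map (Ideal.Quotient.mk (Ideal.ofList rs)))
    have hmax2 := Ideal.comap_isMaximal_of_surjective (Ideal.Quotient.mk (Ideal.ofList rs))
      Ideal.Quotient.mk_surjective (K := p.map (Ideal.Quotient.mk (Ideal.ofList rs)))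
    rw [Ideal.comap_map_of_surjective _ Ideal.Quotient.mk_surjective] at hmax2
    have : p ⊔ Ideal.comap (Ideal.Quotient.mk (Ideal.ofList rs)) ⊥ = p := by
      rw [sup_eq_left, ← RingHom.ker_eq_comap_bot, Ideal.mk_ker]; exact hp1
    rw [this] at hmax2
    exact hlt.ne (eq_maximalIdeal hmax2)
  have hN : N ∈ upn d 𝒴 := by
    refine finlen_mem (upn_resolving hY d) hk N ((upn_resolving hLF d).fg N n1) ?_
    exact hrad.trans (Ideal.radical_mono (Ideal.span_le.2 r4))
  exact hY.summand_closed M (ModuleCat.of S S) ((n2 𝒴 hY).2 hN)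

end Loc

section MinSyz
open IsLocalRing
variable {S : Type u} [CommRing S] [IsLocalRing S] {𝒴 : Set (ModuleCat.{u} S)}

lemma map_eq_sum {n : ℕ} {M : Type u} [AddCommGroup M] [Module S M] (f : (Fin n → S) →ₗ[S] M)
    (w : Fin n → S) : f w = ∑ j, w j • f (Pi.single j 1) := by
  conv_lhs => rw [pi_eq_sum_univ' w]
  simp only [map_sum, map_smul]

lemma exists_min_cover (M : Type u) [AddCommGroup M] [Module S M] [Module.Finite S M] :
    ∃ (n : ℕ) (f : (Fin n → S) →ₗ[S] M), Function.Surjective f ∧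
      LinearMap.ker f ≤ (maximalIdeal S) • (⊤ : Submodule S (Fin n → S)) := by
  classical
  have hex := exists_cover (S := S) M
  obtain ⟨f, hf⟩ := Nat.find_spec hex
  have hmin := fun m => Nat.find_min hex (m := m)
  generalize Nat.find hex = n at f hf hmin
  refine ⟨n, f, hf, ?_⟩
  intro v hv
  by_contra hnot
  have : ∃ i, v i ∉ maximalIdeal S := by
    by_contra hc
    push Not at hc
    apply hnot
    rw [pi_eq_sum_univ' v]
    exact Submodule.sum_mem _ fun i _ => Submodule.smul_mem_smul (hc i) trivial
  obtain ⟨i, hi⟩ := this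
  have hu : IsUnit (v i) := by simpa [mem_maximalIdeal] using hi
  obtain ⟨c, hc⟩ := hu.exists_left_inv
  cases n with
  | zero => exact i.elim0
  | succ n =>
    apply hmin n (Nat.lt_succ_self n)
    refine ⟨Fintype.linearCombination S (fun j : Fin n => f (Pi.single (i.succAbove j) 1)), ?_⟩
    intro m
    obtain ⟨w, rfl⟩ := hf m
    let w' := w - (w i * c) • v
    have h1 : f w' = f w := by
      rw [map_sub, map_smul, show f v = 0 from hv]; simp
    have h2 : w' i = 0 := by
      simp [w', mul_assoc, hc]
    refine ⟨fun j => w' (i.succAbove j), ?_⟩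
    rw [← h1, map_eq_sum f w', Fin.sum_univ_succAbove _ i, h2, Fintype.linearCombination_apply]
    simp

lemma exists_minSyz [IsNoetherianRing S] (n : ℕ) (M : ModuleCat.{u} S) (hM : Module.Finite S M) :
    ∃ K, IsMinSyz S n M K := by
  induction n generalizing M with
  | zero => exact ⟨M, ⟨LinearEquiv.refl _ _⟩⟩
  | succ n ih =>
    obtain ⟨r, f, h1, h2⟩ := exists_min_cover (S := S) M
    obtain ⟨K, hK⟩ := ih (ModuleCat.of S (LinearMap.ker f)) inferInstance
    exact ⟨K, ModuleCat.of S (Fin r → S), f, ModuleCat.of S (LinearMap.ker f),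
      (LinearMap.ker f).subtype, inferInstance, inferInstance, h1, h2,
      Subtype.val_injective, Submodule.range_subtype _, hK⟩

lemma upn_of_minSyz [IsNoetherianRing S] (hY : IsResolving S 𝒴) (n : ℕ) :
    ∀ M K : ModuleCat.{u} S, IsMinSyz S n M K → K ∈ 𝒴 → M ∈ upn n 𝒴 := by
  induction n with
  | zero => rintro M K ⟨e⟩ h; exact hY.equiv e h
  | succ n ih =>
    rintro M K ⟨F, g, K', i, h1, h2, h3, -, h4, h5, h6⟩ h
    rw [upn_succ]
    have := Module.Projective.of_free (R := S) (P := F)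
    exact mem_up_of_ses (upn_resolving hY n) ⟨h4, h3, h5⟩ (ih _ _ h6 h)

end MinSyz

section Reg
open IsLocalRing RingTheory.Sequence
open scoped Pointwise
variable {S : Type u} [CommRing S] [IsLocalRing S]
variable {A B : Type u} [AddCommGroup A] [Module S A] [AddCommGroup B] [Module S B]

lemma exists_regular_notin_sq [IsNoetherianRing S] [Module.Finite S A] (hA : Dge S 1 A)
    (hS : Dge S 1 S) :
    ∃ x ∈ maximalIdeal S, x ∉ (maximalIdeal S)^2 ∧ IsSMulRegular A x ∧ IsSMulRegular S x := by
  classical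
  have hP : Dge S 1 (A × S) := Dge_prod hA hS
  have hfin := associatedPrimes.finite S (A × S)
  obtain ⟨y, hy, hyr⟩ := exists_regular_of_Dge hP
  have hun := biUnion_associatedPrimes_eq_compl_regular S (M := A × S)
  have hsplit : ∀ x : S, IsSMulRegular (A × S) x → IsSMulRegular A x ∧ IsSMulRegular S x := by
    intro x hx
    constructor
    · intro a b hab
      have := @hx (a, 0) (b, 0) (by simpa using hab)
      simpa using this
    · intro a b hab
      have := @hx (0, a) (0, b) (by simpa using hab)
      simpa using this
  by_contra hc
  push Not at hc
  have hsub : (maximalIdeal S : Set S) ⊆ ((maximalIdeal S)^2 : Ideal S) ∪ ((maximalIdeal S)^2 : Ideal S)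
      ∪ ⋃ p ∈ (hfin.toFinset : Set (Ideal S)), (p : Set S) := by
    intro x hx
    by_cases h2 : x ∈ (maximalIdeal S)^2
    · left; left; exact h2
    · right
      have : x ∈ ({ r : S | IsSMulRegular (A × S) r }ᶜ : Set S) := by
        intro hr
        exact hc x hx h2 (hsplit x hr).1 (hsplit x hr).2
      rw [← hun] at this
      simpa using this
  have := (Ideal.subset_union_prime' (f := fun p : Ideal S => p) (s := hfin.toFinset)
    (a := (maximalIdeal S)^2) (b := (maximalIdeal S)^2) (I := maximalIdeal S)
    (fun p hp => ((hfin.mem_toFinset).1 hp).isPrime)).1 hsub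
  have hcase : maximalIdeal S ≤ (maximalIdeal S)^2 → False := by
    intro h
    have hbot : maximalIdeal S = ⊥ := by
      apply Submodule.eq_bot_of_le_smul_of_le_jacobson_bot (maximalIdeal S) (maximalIdeal S)
        (IsNoetherian.noetherian _)
      · rw [smul_eq_mul, ← pow_two]; exact h
      · exact (jacobson_eq_maximalIdeal ⊥ bot_ne_top).ge
    rw [hbot] at hy
    have h0 : y = 0 := by simpa using hy
    subst h0
    have := @(hsplit 0 hyr).2 1 0 (by simp)
    exact one_ne_zero this
  rcases this with h | h | ⟨p, hp, h⟩
  · exact hcase h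
  · exact hcase h
  · have : y ∈ ⋃ p ∈ associatedPrimes S (A × S), (p : Set S) := by
      simp only [Set.mem_iUnion]
      exact ⟨p, (hfin.mem_toFinset).1 hp, h hy⟩
    rw [hun] at this
    exact this hyr

lemma Dge_change {x : S} [IsNoetherianRing S] (hx : x ∈ maximalIdeal S) [IsLocalRing (S ⧸ Ideal.span {x})]
    [Module (S ⧸ Ideal.span {x}) A] [IsScalarTower S (S ⧸ Ideal.span {x}) A] [Module.Finite S A]
    {t : ℕ} (h : Dge S t A) : Dge (S ⧸ Ideal.span {x}) t A := by
  obtain ⟨rs, h1, h2, h3⟩ := exists_weaklyRegular_of_Dge t A h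
  have := (isWeaklyRegular_map_algebraMap_iff (R := S) (S := S ⧸ Ideal.span {x}) (M := A) rs).2 h2
  have h4 := Dge_of_weaklyRegular (rs.map (algebraMap S (S ⧸ Ideal.span {x}))) (by
    intro r hr
    obtain ⟨s, hs, rfl⟩ := List.mem_map.1 hr
    have : IsLocalHom (Ideal.Quotient.mk (Ideal.span {x})) :=
      IsLocalHom.of_surjective _ Ideal.Quotient.mk_surjective
    exact map_maximalIdeal_le (Ideal.Quotient.mk (Ideal.span {x})) (Ideal.mem_map_of_mem _ (h1 s hs))) this
  rwa [List.length_map, h3] at h4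

lemma free_of_Dge (h : ℕ) : ∀ (S : Type u) [CommRing S] [IsLocalRing S] [IsNoetherianRing S]
    (v : Fin h → S), Ideal.span (Set.range v) = maximalIdeal S → Dge S h S →
    ∀ (A : Type u) [AddCommGroup A] [Module S A] [Module.Finite S A], Dge S h A → Module.Free S A := by
  induction h with
  | zero =>
    intro S _ _ _ v hv _ A _ _ _ _
    have : maximalIdeal S = ⊥ := by
      rw [← hv, Set.range_eq_empty, Ideal.span_empty]
    have hf : IsField S := isField_iff_maximalIdeal_eq.2 this
    let := hf.toField
    exact Module.Free.of_divisionRing S A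
  | succ h ih =>
    intro S _ _ _ v hv hS A _ _ _ hA
    obtain ⟨x, hx, hx2, hxA, hxS⟩ := exists_regular_notin_sq (hA.mono (by omega)) (hS.mono (by omega) : Dge S 1 S)
    have hne : Ideal.span {x} ≠ ⊤ := fun hc =>
      (maximalIdeal.isMaximal S).ne_top (top_le_iff.1 (hc ▸ (Ideal.span_le.2 (by simpa using hx))))
    have hnt : Nontrivial (S ⧸ Ideal.span {x}) := Ideal.Quotient.nontrivial_iff.2 hne
    have hloc : IsLocalRing (S ⧸ Ideal.span {x}) :=
      IsLocalRing.of_surjective' (Ideal.Quotient.mk (Ideal.span {x})) Ideal.Quotient.mk_surjective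
    -- the coefficients
    have hx' := hx
    rw [← hv, Ideal.mem_span_range_iff_exists_fun] at hx'
    obtain ⟨c, hc⟩ := hx'
    have : ∃ i, c i ∉ maximalIdeal S := by
      by_contra hcc
      push Not at hcc
      apply hx2
      rw [← hc, pow_two]
      refine Ideal.sum_mem _ fun i _ => Ideal.mul_mem_mul (hcc i) ?_
      rw [← hv]; exact Ideal.subset_span ⟨i, rfl⟩
    obtain ⟨i, hi⟩ := this
    have hu : IsUnit (c i) := by simpa [mem_maximalIdeal] using hi
    let w : Fin h → S ⧸ Ideal.span {x} := fun j => Ideal.Quotient.mk _ (v (i.succAbove j))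
    have hw : Ideal.span (Set.range w) = maximalIdeal (S ⧸ Ideal.span {x}) := by
      have hmap : maximalIdeal (S ⧸ Ideal.span {x}) =
          (maximalIdeal S).map (Ideal.Quotient.mk (Ideal.span {x})) :=
        (map_maximalIdeal_of_surjective _ Ideal.Quotient.mk_surjective).symm
      have hs1 : ∀ j, w j ∈ Ideal.span (Set.range w) := fun j => Ideal.subset_span ⟨j, rfl⟩
      apply le_antisymm
      · rw [hmap]
        refine Ideal.span_le.2 ?_
        rintro _ ⟨j, rfl⟩
        apply Ideal.mem_map_of_mem
        rw [← hv]; exact Ideal.subset_span ⟨_, rfl⟩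
      · rw [hmap, ← hv, Ideal.map_span]
        refine Ideal.span_le.2 ?_
        rintro _ ⟨_, ⟨k, rfl⟩, rfl⟩
        by_cases hk : k = i
        · subst hk
          have h0 : Ideal.Quotient.mk (Ideal.span {x}) x = 0 :=
            Ideal.Quotient.eq_zero_iff_mem.2 (Ideal.mem_span_singleton_self x)
          have h0 : Ideal.Quotient.mk (Ideal.span {x}) (∑ i, c i * v i) = 0 := by rw [hc]; exact h0
          rw [map_sum, Fin.sum_univ_succAbove _ k] at h0
          have h3 := eq_neg_of_add_eq_zero_left h0
          rw [map_mul] at h3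
          have h4 : Ideal.Quotient.mk (Ideal.span {x}) (c k) * Ideal.Quotient.mk (Ideal.span {x}) (v k)
              ∈ Ideal.span (Set.range w) := by
            rw [h3]
            refine neg_mem (Ideal.sum_mem _ fun j _ => ?_)
            rw [map_mul]
            exact Ideal.mul_mem_left _ _ (hs1 j)
          exact (Ideal.unit_mul_mem_iff_mem _ (hu.map _)).1 h4
        · obtain ⟨j, rfl⟩ := Fin.exists_succAbove_eq hk
          exact hs1 j
    have hS' : Dge (S ⧸ Ideal.span {x}) h (S ⧸ Ideal.span {x}) := by
      apply Dge_change hx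
      have := (Dge_succ_iff_quot hxS hx).1 hS
      refine Dge_equiv (Submodule.quotEquivOfEq _ _ ?_) this
      ext y
      simp [Ideal.mem_span_singleton, Submodule.mem_smul_pointwise_iff_exists, dvd_def, eq_comm]
    have hA' : Dge (S ⧸ Ideal.span {x}) h (QuotSMulTop x A) :=
      Dge_change hx ((Dge_succ_iff_quot hxA hx).1 hA)
    have := Module.Finite.of_restrictScalars_finite S (S ⧸ Ideal.span {x}) (QuotSMulTop x A)
    have hfree := ih (S ⧸ Ideal.span {x}) w hw hS' (QuotSMulTop x A) hA'
    have := Module.finitePresentation_of_finite S A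
    refine (Module.free_quotSMulTop_iff_free S A ?_ hxA).1 hfree
    rw [jacobson_eq_maximalIdeal ⊥ bot_ne_top]; exact hx

end Reg

section Lz
open IsLocalRing RingTheory.Sequence
open scoped Pointwise
variable {R : Type u} [CommRing R]
variable {A B C : Type u} [AddCommGroup A] [Module R A] [AddCommGroup B] [Module R B]
  [AddCommGroup C] [Module R C]

/-- the local ring at `p` -/
abbrev Lr (p : PrimeSpectrum R) : Type u := Localization.AtPrime p.asIdeal
/-- the localized module at `p` -/
abbrev Lm (p : PrimeSpectrum R) (M : Type u) [AddCommGroup M] [Module R M] : Type u :=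
  LocalizedModule p.asIdeal.primeCompl M
/-- the localized map at `p` -/
noncomputable abbrev lmap (p : PrimeSpectrum R) (f : A →ₗ[R] B) : Lm p A →ₗ[Lr p] Lm p B :=
  LocalizedModule.map p.asIdeal.primeCompl f

lemma lmap_comp (p : PrimeSpectrum R) (f : A →ₗ[R] B) (g : B →ₗ[R] C) :
    lmap p (g ∘ₗ f) = lmap p g ∘ₗ lmap p f := by
  ext x
  induction x using LocalizedModule.induction_on with
  | h m s => simp

lemma lmap_id (p : PrimeSpectrum R) : lmap p (LinearMap.id : A →ₗ[R] A) = LinearMap.id := by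
  ext x
  induction x using LocalizedModule.induction_on with
  | h m s => simp

lemma lmap_smul (p : PrimeSpectrum R) (r : R) (f : A →ₗ[R] B) :
    lmap p (r • f) = algebraMap R (Lr p) r • lmap p f := by
  ext x
  induction x using LocalizedModule.induction_on with
  | h m s =>
    rw [LinearMap.smul_apply, algebraMap_smul, LocalizedModule.map_mk, LocalizedModule.map_mk,
      LocalizedModule.smul'_mk]
    rfl

lemma Lses (p : PrimeSpectrum R) {f : A →ₗ[R] B} {g : B →ₗ[R] C} (h : IsSES f g) :
    IsSES (lmap p f) (lmap p g) := by
  refine ⟨IsLocalizedModule.map_injective _ _ _ f h.1, IsLocalizedModule.map_surjective _ _ _ g h.2.1, ?_⟩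
  have := LocalizedModule.map_exact p.asIdeal.primeCompl f g (LinearMap.exact_iff.2 h.2.2.symm)
  ext y
  exact (this y).symm

instance (p : PrimeSpectrum R) [Module.Finite R A] : Module.Finite (Lr p) (Lm p A) :=
  inferInstance

instance (p : PrimeSpectrum R) [IsNoetherianRing R] : IsNoetherianRing (Lr p) :=
  inferInstance

/-- depth at p at least t -/
def Lge (p : PrimeSpectrum R) (t : ℕ) (A : Type u) [AddCommGroup A] [Module R A] : Prop :=
  Dge (Lr p) t (Lm p A)

lemma Lm_exists (p : PrimeSpectrum R) (u : Lm p A) : ∃ (m : A) (s : p.asIdeal.primeCompl),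
    u = LocalizedModule.mk m s := by
  induction u using LocalizedModule.induction_on with
  | h m s => exact ⟨m, s, rfl⟩

lemma Lm_mk_zero {p : PrimeSpectrum R} {m : A} {s : p.asIdeal.primeCompl} :
    (LocalizedModule.mk m s : Lm p A) = 0 ↔ ∃ c ∉ p.asIdeal, c • m = 0 := by
  rw [← LocalizedModule.zero_mk 1, LocalizedModule.mk_eq]
  constructor
  · rintro ⟨u, hu⟩
    exact ⟨u, u.2, by simpa [Submonoid.smul_def] using hu⟩
  · rintro ⟨c, hc, h⟩
    exact ⟨⟨c, hc⟩, by simpa [Submonoid.smul_def] using h⟩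

lemma Lreg_iff {p : PrimeSpectrum R} {x : R} : IsSMulRegular (Lm p A) (algebraMap R (Lr p) x) ↔
    ∀ m : A, (∃ c ∉ p.asIdeal, c • x • m = 0) → ∃ c ∉ p.asIdeal, c • m = 0 := by
  rw [isSMulRegular_iff_right_eq_zero_of_smul]
  constructor
  · rintro h m ⟨c, hc, h0⟩
    have := h (LocalizedModule.mk m 1) (by
      rw [algebraMap_smul, LocalizedModule.smul'_mk]
      exact Lm_mk_zero.2 ⟨c, hc, h0⟩)
    exact Lm_mk_zero.1 this
  · intro h u hu
    obtain ⟨m, s, rfl⟩ := Lm_exists p u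
    rw [algebraMap_smul, LocalizedModule.smul'_mk] at hu
    exact Lm_mk_zero.2 (h m (Lm_mk_zero.1 hu))

lemma Lreg_mono {p q : PrimeSpectrum R} (hpq : p.asIdeal ≤ q.asIdeal) {x : R}
    (h : IsSMulRegular (Lm q A) (algebraMap R (Lr q) x)) :
    IsSMulRegular (Lm p A) (algebraMap R (Lr p) x) := by
  rw [Lreg_iff] at h ⊢
  rintro m ⟨c, hc, h0⟩
  obtain ⟨c', hc', h1⟩ := h (c • m) ⟨1, fun h => q.2.ne_top ((Ideal.eq_top_iff_one _).2 h), by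
    rw [one_smul, smul_comm]; exact h0⟩
  refine ⟨c' * c, fun hm => ?_, by rw [mul_smul]; exact h1⟩
  rcases p.2.mem_or_mem hm with h | h
  · exact hc' (hpq h)
  · exact hc h

lemma Lge_succ_iff_quot {p : PrimeSpectrum R} {x : R} (hx : x ∈ p.asIdeal)
    (h : IsSMulRegular (Lm p A) (algebraMap R (Lr p) x)) {t : ℕ} :
    Lge p (t+1) A ↔ Lge p t (QuotSMulTop x A) := by
  have hm : algebraMap R (Lr p) x ∈ maximalIdeal (Lr p) :=
    (IsLocalization.AtPrime.to_map_mem_maximal_iff (Lr p) p.asIdeal x).2 hx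
  unfold Lge
  rw [Dge_succ_iff_quot h hm]
  let g : Lm p A →ₗ[Lr p] Lm p (QuotSMulTop x A) := lmap p (Submodule.mkQ (x • (⊤ : Submodule R A)))
  have hg : Function.Surjective g := IsLocalizedModule.map_surjective _ _ _ _ (Submodule.mkQ_surjective _)
  have hk : (algebraMap R (Lr p) x) • (⊤ : Submodule (Lr p) (Lm p A)) = LinearMap.ker g := by
    have hex : Function.Exact (LinearMap.lsmul R A x) (Submodule.mkQ (x • (⊤ : Submodule R A))) := by
      intro y
      rw [Submodule.mkQ_apply, Submodule.Quotient.mk_eq_zero, Submodule.mem_smul_pointwise_iff_exists]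
      simp
    have := LocalizedModule.map_exact p.asIdeal.primeCompl _ _ hex
    ext y
    rw [Submodule.mem_smul_pointwise_iff_exists]
    refine Iff.trans ?_ (this y).symm
    constructor
    · rintro ⟨z, -, rfl⟩
      obtain ⟨m, s, rfl⟩ := Lm_exists p z
      refine ⟨LocalizedModule.mk m s, ?_⟩
      rw [IsLocalizedModule.map_LocalizedModules, algebraMap_smul, LocalizedModule.smul'_mk]; rfl
    · rintro ⟨z, rfl⟩
      obtain ⟨m, s, rfl⟩ := Lm_exists p z
      refine ⟨LocalizedModule.mk m s, trivial, ?_⟩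
      rw [IsLocalizedModule.map_LocalizedModules, algebraMap_smul, LocalizedModule.smul'_mk]; rfl
  let e : QuotSMulTop (algebraMap R (Lr p) x) (Lm p A) ≃ₗ[Lr p] Lm p (QuotSMulTop x A) :=
    (Submodule.quotEquivOfEq _ _ hk).trans (g.quotKerEquivOfSurjective hg)
  exact ⟨Dge_equiv e.symm, Dge_equiv e⟩

end Lz

section Step
open IsLocalRing
open scoped Pointwise
variable {S : Type u} [CommRing S] [IsLocalRing S]

lemma not_Dge_two [IsNoetherianRing S] {P : Ideal S} (hP : P.IsPrime) (hne : P ≠ maximalIdeal S)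
    (hcov : ∀ Q : Ideal S, Q.IsPrime → P ≤ Q → Q = P ∨ Q = maximalIdeal S)
    {N : Type u} [AddCommGroup N] [Module S N] [Module.Finite S N] (u : N) (hu : u ≠ 0)
    (hPu : ∀ r, r ∈ P ↔ r • u = 0) : ¬ Dge S 2 N := by
  intro hd
  obtain ⟨y, hy, hyr⟩ := exists_regular_of_Dge (t := 1) hd
  have hd1 : Dge S 1 (QuotSMulTop y N) := (Dge_succ_iff_quot hyr hy).1 hd
  obtain ⟨z, hz, hzr⟩ := exists_regular_of_Dge (t := 0) hd1
  have hyP : y ∉ P := by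
    intro h
    have := (hPu y).1 h
    exact hu (@hyr u 0 (by simpa using this))
  -- z^k ∈ P + (y)
  have hrad : z ∈ (P ⊔ Ideal.span {y}).radical := by
    rw [Ideal.radical_eq_sInf, Ideal.mem_sInf]
    rintro Q ⟨hQ1, hQ2⟩
    rcases hcov Q hQ2 (le_sup_left.trans hQ1) with h | h
    · exfalso; apply hyP; rw [← h]
      exact hQ1 (Ideal.mem_sup_right (Ideal.mem_span_singleton_self y))
    · rw [h]; exact hz
  obtain ⟨k, hk⟩ := hrad
  let U : Submodule S N := Submodule.torsionBySet S N P
  have hmemU : ∀ w, w ∈ U ↔ ∀ r ∈ P, r • w = 0 := by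
    intro w
    simp [U, Submodule.mem_torsionBySet_iff]
  have huU : u ∈ U := (hmemU u).2 fun r hr => (hPu r).1 hr
  -- U ≤ y U
  have hle : U ≤ (Ideal.span {y}) • U := by
    intro w hw
    have h1 : z^k • (Submodule.mkQ (y • (⊤ : Submodule S N)) w) = 0 := by
      rw [← map_smul, Submodule.mkQ_apply, Submodule.Quotient.mk_eq_zero]
      obtain ⟨a, ha, b, hb, hab⟩ := Submodule.mem_sup.1 hk
      obtain ⟨c, rfl⟩ := Ideal.mem_span_singleton'.1 hb
      rw [← hab, add_smul, (hmemU w).1 hw a ha, zero_add, mul_comm, mul_smul]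
      exact Submodule.smul_mem_pointwise_smul _ _ _ trivial
    have h2 : Submodule.mkQ (y • (⊤ : Submodule S N)) w = 0 :=
      isSMulRegular_iff_right_eq_zero_of_smul.1 (hzr.pow k) _ h1
    rw [Submodule.mkQ_apply, Submodule.Quotient.mk_eq_zero,
      Submodule.mem_smul_pointwise_iff_exists] at h2
    obtain ⟨v, -, rfl⟩ := h2
    refine Submodule.smul_mem_smul (Ideal.mem_span_singleton_self y) ((hmemU v).2 fun r hr => ?_)
    have := (hmemU _).1 hw r hr
    rw [smul_comm] at this
    exact @hyr _ 0 (by simpa using this)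
  have hbot : U = ⊥ := by
    apply Submodule.eq_bot_of_le_smul_of_le_jacobson_bot (Ideal.span {y}) U (IsNoetherian.noetherian _) hle
    rw [jacobson_eq_maximalIdeal ⊥ bot_ne_top]
    exact Ideal.span_le.2 (by simpa using hy)
  rw [hbot] at huU
  exact hu (by simpa using huU)

end Step

section Mono
open IsLocalRing
open scoped Pointwise
variable {R : Type u} [CommRing R] [IsNoetherianRing R]

lemma Lge_step {p q : PrimeSpectrum R} (hpq : p.asIdeal < q.asIdeal)
    (hcov : ∀ r : Ideal R, r.IsPrime → p.asIdeal ≤ r → r ≤ q.asIdeal → r = p.asIdeal ∨ r = q.asIdeal)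
    (t : ℕ) : ∀ (A : Type u) [AddCommGroup A] [Module R A] [Module.Finite R A], Lge q (t+1) A → Lge p t A := by
  induction t with
  | zero => intro A _ _ _ _; exact Dge_zero
  | succ t ih =>
    intro A _ _ _ h
    classical
    let S := Lr q
    have hfin := associatedPrimes.finite S (Lm q A)
    have hun := biUnion_associatedPrimes_eq_compl_regular S (M := Lm q A)
    have hone : Dge S 1 (Lm q A) := Dge.mono (by omega) h
    by_cases hx : ∃ x ∈ p.asIdeal, IsSMulRegular (Lm q A) (algebraMap R S x)
    · obtain ⟨x, hx, hr⟩ := hx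
      rw [Lge_succ_iff_quot hx (Lreg_mono hpq.le hr)]
      rw [Lge_succ_iff_quot (hpq.le hx) hr] at h
      exact ih _ h
    · exfalso
      push Not at hx
      have hsub : (p.asIdeal : Set R) ⊆ ⋃ P ∈ (hfin.toFinset : Set (Ideal S)),
          ((P.comap (algebraMap R S) : Ideal R) : Set R) := by
        intro x hxp
        have : algebraMap R S x ∈ ({ r : S | IsSMulRegular (Lm q A) r }ᶜ : Set S) := hx x hxp
        rw [← hun] at this
        simpa using this
      rw [Ideal.subset_union_prime ⊤ ⊤ (fun P hP _ _ => by
        have := ((hfin.mem_toFinset).1 hP).isPrime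
        exact Ideal.comap_isPrime _ _)] at hsub
      obtain ⟨P, hP, hle⟩ := hsub
      rw [hfin.mem_toFinset] at hP
      have hPp := hP.isPrime
      have hcm : ∀ Q : Ideal S, Q.IsPrime → Q.comap (algebraMap R S) ≤ q.asIdeal := by
        intro Q hQ
        intro x hx
        rw [← IsLocalization.AtPrime.to_map_mem_maximal_iff S q.asIdeal x]
        exact le_maximalIdeal hQ.ne_top hx
      have hinj : ∀ Q Q' : Ideal S, Q.comap (algebraMap R S) = Q'.comap (algebraMap R S) → Q = Q' := by
        intro Q Q' hQ
        have h1 := IsLocalization.map_under q.asIdeal.primeCompl S Q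
        have h2 := IsLocalization.map_under q.asIdeal.primeCompl S Q'
        rw [← h1, ← h2]
        exact congrArg (Ideal.map _) hQ
      have hmq : (maximalIdeal S).comap (algebraMap R S) = q.asIdeal :=
        IsLocalization.AtPrime.under_maximalIdeal S q.asIdeal
      obtain ⟨-, u, hu⟩ := isAssociatedPrime_iff.1 hP
      have hu' : ∀ r, r ∈ P ↔ r • u = 0 := by
        intro r; rw [hu]; simp [Submodule.mem_colon_singleton]
      have hu0 : u ≠ 0 := by
        rintro rfl
        exact hPp.ne_top ((Ideal.eq_top_iff_one _).2 ((hu' 1).2 (by simp)))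
      have hneq : P ≠ maximalIdeal S := by
        rintro rfl
        obtain ⟨x, hx1, hx2⟩ := exists_regular_of_Dge (t := 0) hone
        exact hu0 (isSMulRegular_iff_right_eq_zero_of_smul.1 hx2 u ((hu' x).1 hx1))
      have hPc : P.comap (algebraMap R S) = p.asIdeal := by
        rcases hcov _ (Ideal.comap_isPrime _ _) hle (hcm P hPp) with h | h
        · exact h
        · exact absurd (hinj _ _ (h.trans hmq.symm)) hneq
      refine not_Dge_two hPp hneq ?_ u hu0 hu' (Dge.mono (by omega) h : Dge S 2 (Lm q A))
      intro Q hQ hPQ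
      rcases hcov _ (Ideal.comap_isPrime (algebraMap R S) Q) (hPc ▸ Ideal.comap_mono hPQ) (hcm Q hQ) with h | h
      · left; exact hinj _ _ (h.trans hPc.symm)
      · right; exact hinj _ _ (h.trans hmq.symm)

/-- height as a natural number -/
noncomputable def ht (p : PrimeSpectrum R) : ℕ := (Order.height p).toNat

lemma heightE_eq (p : PrimeSpectrum R) : heightE R p = (ht p : ℕ∞) := by
  have : Order.height p ≠ ⊤ := by
    have := Ideal.height_ne_top p.2.ne_top
    rwa [PrimeSpectrum.height_eq_orderHeight] at this
  unfold heightE ht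
  exact (ENat.natCast_toNat this).symm

lemma ht_lt {p q : PrimeSpectrum R} (h : p < q) : ht p < ht q := by
  have h1 : Order.height p < Order.height q := by
    apply Order.height_strictMono h
    have := heightE_eq p
    unfold heightE at this
    rw [this]; exact ENat.natCast_lt_top _
  change heightE R p < heightE R q at h1
  rw [heightE_eq, heightE_eq] at h1
  exact_mod_cast h1

lemma ht_mono {p q : PrimeSpectrum R} (h : p ≤ q) : ht p ≤ ht q := by
  rcases h.eq_or_lt with rfl | h
  · rfl
  · exact (ht_lt h).le

lemma Lge_mono {A : Type u} [AddCommGroup A] [Module R A] [Module.Finite R A] (j : ℕ) (n : ℕ) :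
    ∀ p q : PrimeSpectrum R, ht q = n → p ≤ q → Lge q (ht q - j) A → Lge p (ht p - j) A := by
  induction n using Nat.strong_induction_on with
  | _ n ih =>
    intro p q hn hpq h
    rcases hpq.eq_or_lt with rfl | hlt
    · exact h
    -- choose q'
    have hwf : WellFounded ((· > ·) : Ideal R → Ideal R → Prop) := wellFounded_gt
    obtain ⟨r, ⟨hr1, hr2, hr3⟩, hmax⟩ := hwf.has_min
      {r : Ideal R | r.IsPrime ∧ p.asIdeal ≤ r ∧ r < q.asIdeal} ⟨p.asIdeal, p.2, le_rfl, hlt⟩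
    let q' : PrimeSpectrum R := ⟨r, hr1⟩
    have hq' : q' < q := hr3
    have h1 := ht_lt hq'
    refine ih (ht q') (hn ▸ h1) p q' rfl hr2 ?_
    by_cases hj : ht q' ≤ j
    · rw [Nat.sub_eq_zero_of_le hj]; exact Dge_zero
    · have h2 : Lge q' (ht q - j - 1) A := by
        apply Lge_step (p := q') (q := q) hr3
        · intro s hs h3 h4
          by_contra hc
          push Not at hc
          exact hmax s ⟨hs, hr2.trans h3, lt_of_le_of_ne h4 hc.2⟩ (lt_of_le_of_ne h3 hc.1.symm)
        · rw [Nat.sub_add_cancel (by omega)]; exact h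
      exact Dge.mono (by omega) h2

end Mono

section Lz2
open IsLocalRing RingTheory.Sequence
variable {R : Type u} [CommRing R]
variable {A B C : Type u} [AddCommGroup A] [Module R A] [AddCommGroup B] [Module R B]
  [AddCommGroup C] [Module R C]

lemma Lunit {p : PrimeSpectrum R} {s : R} (hs : s ∉ p.asIdeal) : IsUnit (algebraMap R (Lr p) s) :=
  IsLocalization.map_units (Lr p) (⟨s, hs⟩ : p.asIdeal.primeCompl)

lemma Lret {p : PrimeSpectrum R} {s : R} (hs : s ∉ p.asIdeal) (a : A →ₗ[R] B) (b : B →ₗ[R] A)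
    (h : b ∘ₗ a = s • LinearMap.id) :
    ∃ (a' : Lm p A →ₗ[Lr p] Lm p B) (b' : Lm p B →ₗ[Lr p] Lm p A), b' ∘ₗ a' = LinearMap.id := by
  obtain ⟨w, hw⟩ := Lunit hs
  refine ⟨lmap p a, ((w⁻¹ : (Lr p)ˣ) : Lr p) • lmap p b, ?_⟩
  rw [LinearMap.smul_comp, ← lmap_comp, h, lmap_smul, lmap_id, ← hw, smul_smul]
  simp

lemma Lge_ret {p : PrimeSpectrum R} {s : R} (hs : s ∉ p.asIdeal) (a : A →ₗ[R] B) (b : B →ₗ[R] A)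
    (h : b ∘ₗ a = s • LinearMap.id) {t : ℕ} (hB : Lge p t B) : Lge p t A := by
  obtain ⟨a', b', h'⟩ := Lret hs a b h
  exact Dge_retract a' b' h' hB

lemma exists_lmapR (p : PrimeSpectrum R) : Nonempty (Lm p R ≃ₗ[Lr p] Lr p) := by
  let e : Lm p R ≃ₗ[R] Lr p := IsLocalizedModule.iso p.asIdeal.primeCompl (Algebra.linearMap R (Lr p))
  exact ⟨LinearEquiv.extendScalarsOfIsLocalization p.asIdeal.primeCompl (Lr p) e⟩

lemma Lge_R {p : PrimeSpectrum R} {t : ℕ} : Lge p t R ↔ Dge (Lr p) t (Lr p) := by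
  obtain ⟨e⟩ := exists_lmapR p
  exact ⟨Dge_equiv e.symm, Dge_equiv e⟩

lemma Lm_projective (p : PrimeSpectrum R) [Module.Projective R A] :
    Module.Projective (Lr p) (Lm p A) := by
  exact Module.projective_of_isLocalizedModule p.asIdeal.primeCompl (LocalizedModule.mkLinearMap p.asIdeal.primeCompl A)

lemma Lge_proj {p : PrimeSpectrum R} {t : ℕ} (h : Lge p t R) [Module.Finite R A]
    [Module.Projective R A] : Lge p t A := by
  have := Lm_projective (A := A) p
  exact Dge_projective (Lge_R.1 h)

lemma Lge_sann {p : PrimeSpectrum R} {t : ℕ} (h : Lge p t R) (hs : ¬ sann R A ≤ p.asIdeal) :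
    Lge p t A := by
  obtain ⟨s, hs, hsp⟩ := Set.not_subset.1 hs
  obtain ⟨n, a, b, hab⟩ := mem_sann_fin hs
  exact Lge_ret hsp a b (LinearMap.ext hab) (Lge_proj h)

/-- over a local ring, depth at the closed point -/
lemma Lge_closed [IsLocalRing R] [IsNoetherianRing R] (t : ℕ) :
    ∀ (A : Type u) [AddCommGroup A] [Module R A] [Module.Finite R A],
    Dge R t A ↔ Lge (closedPoint R) t A := by
  induction t with
  | zero => intro A _ _ _; exact ⟨fun _ => Dge_zero, fun _ => Dge_zero⟩
  | succ t ih =>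
    intro A _ _ _
    have hu : ∀ c ∉ (closedPoint R).asIdeal, ∀ m : A, c • m = 0 → m = 0 := by
      intro c hc m h
      have : IsUnit c := by
        by_contra h'
        exact hc ((mem_maximalIdeal c).2 h')
      exact (this.smul_eq_zero).1 h
    have hreg : ∀ x : R, IsSMulRegular A x ↔
        IsSMulRegular (Lm (closedPoint R) A) (algebraMap R (Lr (closedPoint R)) x) := by
      intro x
      rw [Lreg_iff, isSMulRegular_iff_right_eq_zero_of_smul]
      constructor
      · rintro h m ⟨c, hc, h0⟩
        exact ⟨1, fun h1 => (closedPoint R).2.ne_top ((Ideal.eq_top_iff_one _).2 h1), by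
          rw [one_smul]; exact h m (hu c hc _ h0)⟩
      · intro h m h0
        obtain ⟨c, hc, h1⟩ := h m ⟨1, fun h1 => (closedPoint R).2.ne_top ((Ideal.eq_top_iff_one _).2 h1), by rw [one_smul]; exact h0⟩
        exact hu c hc _ h1
    constructor
    · intro h
      obtain ⟨x, hx, hxr⟩ := exists_regular_of_Dge h
      rw [Lge_succ_iff_quot (p := closedPoint R) hx ((hreg x).1 hxr), ← ih]
      exact (Dge_succ_iff_quot hxr hx).1 h
    · intro h
      obtain ⟨y, hy, hyr⟩ := exists_regular_of_Dge h
      obtain ⟨⟨x, s⟩, hxs⟩ := IsLocalization.surj (closedPoint R).asIdeal.primeCompl y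
      have hsu := Lunit s.2
      have hx : x ∈ (closedPoint R).asIdeal := by
        rw [← IsLocalization.AtPrime.to_map_mem_maximal_iff (Lr (closedPoint R)) (closedPoint R).asIdeal x]
        change y * _ = algebraMap _ _ x at hxs
        rw [← hxs]
        exact Ideal.mul_mem_right _ _ hy
      have hxr : IsSMulRegular (Lm (closedPoint R) A) (algebraMap R (Lr (closedPoint R)) x) := by
        change y * _ = algebraMap _ _ x at hxs
        rw [← hxs]
        exact hyr.mul (hsu.isSMulRegular _)
      rw [Dge_succ_iff_quot ((hreg x).2 hxr) hx, ih]
      exact (Lge_succ_iff_quot hx hxr).1 h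

lemma exists_reg_in_prime [IsNoetherianRing R] [Module.Finite R A] (p : PrimeSpectrum R)
    (h : ∀ q : PrimeSpectrum R, p ≤ q → Lge q 1 A) : ∃ x ∈ p.asIdeal, IsSMulRegular A x := by
  classical
  by_contra hx
  push Not at hx
  have hfin := associatedPrimes.finite R A
  have hun := biUnion_associatedPrimes_eq_compl_regular R (M := A)
  have hsub : (p.asIdeal : Set R) ⊆ ⋃ P ∈ (hfin.toFinset : Set (Ideal R)), ((P : Ideal R) : Set R) := by
    intro x hxp
    have : x ∈ ({ r : R | IsSMulRegular A r }ᶜ : Set R) := hx x hxp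
    rw [← hun] at this
    simpa using this
  rw [Ideal.subset_union_prime ⊤ ⊤ (fun P hP _ _ => ((hfin.mem_toFinset).1 hP).isPrime)] at hsub
  obtain ⟨P, hP, hle⟩ := hsub
  rw [hfin.mem_toFinset] at hP
  obtain ⟨hPp, u, hu⟩ := isAssociatedPrime_iff.1 hP
  have hu' : ∀ r, r ∈ P ↔ r • u = 0 := by
    intro r; rw [hu]; simp [Submodule.mem_colon_singleton]
  let q : PrimeSpectrum R := ⟨P, hPp⟩
  obtain ⟨y, hy, hyr⟩ := exists_regular_of_Dge (t := 0) (h q hle)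
  obtain ⟨⟨x, s⟩, hxs⟩ := IsLocalization.surj q.asIdeal.primeCompl y
  have hsu := Lunit s.2
  change y * _ = algebraMap _ _ x at hxs
  have hx : x ∈ q.asIdeal := by
    rw [← IsLocalization.AtPrime.to_map_mem_maximal_iff (Lr q) q.asIdeal x, ← hxs]
    exact Ideal.mul_mem_right _ _ hy
  have hxr : IsSMulRegular (Lm q A) (algebraMap R (Lr q) x) := by
    rw [← hxs]
    exact hyr.mul (hsu.isSMulRegular _)
  obtain ⟨c, hc, h0⟩ := Lreg_iff.1 hxr u ⟨1, fun h1 => q.2.ne_top ((Ideal.eq_top_iff_one _).2 h1), by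
    rw [(hu' x).1 hx, smul_zero]⟩
  exact hc ((hu' c).2 h0)

lemma le_localDepth_iff [IsNoetherianRing R] (p : PrimeSpectrum R) (M : ModuleCat.{u} R)
    [Module.Finite R M] (n : ℕ) : (n : ℕ∞) ≤ localDepth R p M ↔ Lge p n M :=
  le_depthE_iff n

lemma iInf_localDepth [IsNoetherianRing R] (𝒳 : Set (ModuleCat.{u} R)) (p : PrimeSpectrum R) (n : ℕ)
    (hf : ∀ X ∈ 𝒳, Module.Finite R X) (h1 : ∀ X ∈ 𝒳, Lge p n X) (h2 : ∃ X ∈ 𝒳, ¬ Lge p (n+1) X) :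
    (⨅ X ∈ 𝒳, localDepth R p X) = (n : ℕ∞) := by
  apply le_antisymm
  · obtain ⟨X, hX, h⟩ := h2
    have := hf X hX
    rw [← le_localDepth_iff] at h
    refine (iInf₂_le X hX).trans ?_
    rw [not_le] at h
    exact Order.le_of_lt_add_one (by exact_mod_cast h)
  · refine le_iInf₂ fun X hX => ?_
    have := hf X hX
    exact (le_localDepth_iff p X n).2 (h1 X hX)

lemma psi_iff [IsNoetherianRing R] (f : PrimeSpectrum R → ℕ) (M : ModuleCat.{u} R) :
    M ∈ psiDepth R f ↔ Module.Finite R M ∧ ∀ p, Lge p (ht p - f p) M := by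
  refine and_congr_right fun _ => forall_congr' fun p => ?_
  rw [heightE_eq, ← le_localDepth_iff, ENat.natCast_sub]

lemma ringKrullDim_Lr [IsNoetherianRing R] (p : PrimeSpectrum R) :
    ringKrullDim (Lr p) = ((ht p : ℕ) : WithBot ℕ∞) := by
  rw [IsLocalization.AtPrime.ringKrullDim_eq_height p.asIdeal (Lr p),
    PrimeSpectrum.height_eq_orderHeight]
  have := heightE_eq p
  unfold heightE at this
  rw [this]; rfl

lemma not_Lge_R [IsNoetherianRing R] (p : PrimeSpectrum R) : ¬ Lge p (ht p + 1) R := by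
  intro h
  have := Dge_le_dim (Lge_R.1 h)
  rw [ringKrullDim_Lr] at this
  have h2 : ht p + 1 ≤ ht p := by exact_mod_cast this
  omega

lemma ht_closed [IsNoetherianRing R] [IsLocalRing R] {d : ℕ} (hd : ringKrullDim R = (d : WithBot ℕ∞)) :
    ht (closedPoint R) = d := by
  have h1 := IsLocalRing.maximalIdeal_height_eq_ringKrullDim (R := R)
  have h2 := heightE_eq (closedPoint R)
  unfold heightE at h2
  rw [← PrimeSpectrum.height_eq_orderHeight] at h2
  change (maximalIdeal R).height = _ at h2
  rw [h2, hd] at h1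
  exact_mod_cast h1

lemma CM_Dge [IsNoetherianRing R] [IsLocalRing R] (hCM : IsCMLocalRing R) {d : ℕ}
    (hd : ringKrullDim R = (d : WithBot ℕ∞)) : Dge R d R := by
  rw [← le_depthE_iff]
  have := hCM.2
  rw [hd] at this
  exact_mod_cast this.ge

lemma CM_Lge [IsNoetherianRing R] [IsLocalRing R] (hCM : IsCMLocalRing R) {d : ℕ}
    (hd : ringKrullDim R = (d : WithBot ℕ∞)) (p : PrimeSpectrum R) : Lge p (ht p) R := by
  have h := (Lge_closed d R).1 (CM_Dge hCM hd)
  refine Lge_mono 0 _ p (closedPoint R) rfl (le_maximalIdeal p.2.ne_top) ?_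
  rw [ht_closed hd]; exact h

lemma Lge_of_weaklyRegular {p : PrimeSpectrum R} (rs : List R) (h : ∀ r ∈ rs, r ∈ p.asIdeal)
    (hr : IsWeaklyRegular A rs) : Lge p rs.length A := by
  have := IsWeaklyRegular.of_isLocalizedModule (R := R) (Lr p) p.asIdeal.primeCompl (M := A)
    (LocalizedModule.mkLinearMap p.asIdeal.primeCompl A) hr
  have h2 := Dge_of_weaklyRegular (S := Lr p) _ (by
    intro r hr
    obtain ⟨x, hx, rfl⟩ := List.mem_map.1 hr
    exact (IsLocalization.AtPrime.to_map_mem_maximal_iff (Lr p) p.asIdeal x).2 (h x hx)) this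
  rw [List.length_map] at h2
  exact h2

lemma grade_le [IsNoetherianRing R] (p : PrimeSpectrum R) : gradeE R p.asIdeal ≤ (ht p : ℕ∞) := by
  refine sSup_le ?_
  rintro _ ⟨rs, h1, h2, rfl⟩
  have := Lge_of_weaklyRegular (p := p) rs h1 h2
  have h3 := Dge_le_dim (Lge_R.1 this)
  rw [ringKrullDim_Lr] at h3
  exact_mod_cast h3

open scoped Pointwise in
lemma exists_weaklyRegular_in_prime [IsNoetherianRing R] (p : PrimeSpectrum R) (n : ℕ) :
    ∀ (A : Type u) [AddCommGroup A] [Module R A] [Module.Finite R A],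
    (∀ q : PrimeSpectrum R, p ≤ q → Lge q n A) →
    ∃ rs : List R, (∀ r ∈ rs, r ∈ p.asIdeal) ∧ IsWeaklyRegular A rs ∧ rs.length = n := by
  induction n with
  | zero => intro A _ _ _ _; exact ⟨[], by simp, by simp, rfl⟩
  | succ n ih =>
    intro A _ _ _ h
    obtain ⟨x, hx, hr⟩ := exists_reg_in_prime (A := A) p (fun q hq => Dge.mono (by omega) (h q hq))
    obtain ⟨rs, h1, h2, h3⟩ := ih (QuotSMulTop x A) (fun q hq =>
      (Lge_succ_iff_quot (hq hx) (Lreg_iff.2 (by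
        rintro m ⟨c, hc, h0⟩
        refine ⟨c, hc, isSMulRegular_iff_right_eq_zero_of_smul.1 hr _ ?_⟩
        rw [smul_comm]; exact h0))).1 (h q hq))
    refine ⟨x :: rs, ?_, IsWeaklyRegular.cons hr h2, by simp [h3]⟩
    intro r hr
    rcases List.mem_cons.1 hr with rfl | hr
    · exact hx
    · exact h1 r hr

lemma ht_le_grade [IsNoetherianRing R] (hR : ∀ p : PrimeSpectrum R, Lge p (ht p) R)
    (p : PrimeSpectrum R) : (ht p : ℕ∞) ≤ gradeE R p.asIdeal := by
  obtain ⟨rs, h1, h2, h3⟩ := exists_weaklyRegular_in_prime p (ht p) R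
    (fun q hq => Dge.mono (ht_mono hq) (hR q))
  exact le_sSup ⟨rs, h1, h2, by rw [h3]⟩

end Lz2

section AL
open IsLocalRing
variable {R : Type u} [CommRing R]
variable {A B C : Type u} [AddCommGroup A] [Module R A] [AddCommGroup B] [Module R B]
  [AddCommGroup C] [Module R C]

lemma IsSES.lift_map {D : Type u} [AddCommGroup D] [Module R D] {f : A →ₗ[R] B} {g : B →ₗ[R] C}
    (h : IsSES f g) (φ : D →ₗ[R] B) (hφ : ∀ x, g (φ x) = 0) :
    ∃ ψ : D →ₗ[R] A, ∀ x, f (ψ x) = φ x := by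
  let e := LinearEquiv.ofInjective f h.1
  refine ⟨e.symm.toLinearMap ∘ₗ φ.codRestrict (LinearMap.range f) (fun x => h.2.2 ▸ hφ x), fun x => ?_⟩
  have := LinearEquiv.apply_symm_apply e (φ.codRestrict (LinearMap.range f) (fun x => h.2.2 ▸ hφ x) x)
  exact congrArg Subtype.val this

lemma IsSES.desc {D : Type u} [AddCommGroup D] [Module R D] {f : A →ₗ[R] B} {g : B →ₗ[R] C}
    (h : IsSES f g) (φ : B →ₗ[R] D) (hφ : ∀ x, φ (f x) = 0) :
    ∃ ψ : C →ₗ[R] D, ∀ x, ψ (g x) = φ x := by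
  let e := g.quotKerEquivOfSurjective h.2.1
  have hk : LinearMap.ker g ≤ LinearMap.ker φ := by
    rw [← h.2.2]; rintro _ ⟨x, rfl⟩; exact hφ x
  refine ⟨(LinearMap.ker g).liftQ φ hk ∘ₗ e.symm.toLinearMap, fun x => ?_⟩
  have : e.symm (g x) = Submodule.Quotient.mk x := by
    rw [LinearEquiv.symm_apply_eq]; rfl
  simp [this]

lemma exists_lift_hom [IsNoetherianRing R] [Module.Finite R A] (p : PrimeSpectrum R)
    (h : Lm p A →ₗ[Lr p] Lm p B) : ∃ s ∉ p.asIdeal, ∃ h0 : A →ₗ[R] B,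
      lmap p h0 = algebraMap R (Lr p) s • h := by
  have : Module.FinitePresentation R A := Module.finitePresentation_of_finite R A
  obtain ⟨⟨h0, s⟩, hs⟩ := IsLocalizedModule.surj p.asIdeal.primeCompl
    (LocalizedModule.map p.asIdeal.primeCompl (M := A) (N := B)) h
  refine ⟨s, s.2, h0, ?_⟩
  rw [algebraMap_smul]
  exact hs.symm

lemma exists_eq_hom [IsNoetherianRing R] [Module.Finite R A] (p : PrimeSpectrum R)
    (g h : A →ₗ[R] B) (e : lmap p g = lmap p h) : ∃ s ∉ p.asIdeal, s • g = s • h := by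
  have : Module.FinitePresentation R A := Module.finitePresentation_of_finite R A
  obtain ⟨s, hs⟩ := IsLocalizedModule.exists_of_eq (S := p.asIdeal.primeCompl)
    (f := LocalizedModule.map p.asIdeal.primeCompl (M := A) (N := B)) e
  exact ⟨s, s.2, hs⟩

/-- `A ≤_p B` -/
def Lle (p : PrimeSpectrum R) (A B : Type u) [AddCommGroup A] [Module R A] [AddCommGroup B]
    [Module R B] : Prop :=
  ∃ s ∉ p.asIdeal, ∃ (a : A →ₗ[R] B) (b : B →ₗ[R] A), b ∘ₗ a = s • LinearMap.id

lemma Lle_of_ret [IsNoetherianRing R] [Module.Finite R A] [Module.Finite R B] (p : PrimeSpectrum R)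
    (a : Lm p A →ₗ[Lr p] Lm p B) (b : Lm p B →ₗ[Lr p] Lm p A) (h : b ∘ₗ a = LinearMap.id) :
    Lle p A B := by
  obtain ⟨s, hs, a0, ha⟩ := exists_lift_hom p a
  obtain ⟨t, ht, b0, hb⟩ := exists_lift_hom p b
  have h1 : lmap p (b0 ∘ₗ a0) = lmap p ((t * s) • (LinearMap.id : A →ₗ[R] A)) := by
    rw [lmap_comp, ha, hb, LinearMap.comp_smul, LinearMap.smul_comp, h, lmap_smul, lmap_id, smul_smul,
      map_mul, mul_comm]
  obtain ⟨w, hw, h2⟩ := exists_eq_hom p _ _ h1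
  refine ⟨w * (t * s), fun hm => ?_, a0, w • b0, ?_⟩
  · rcases p.2.mem_or_mem hm with h | h
    · exact hw h
    rcases p.2.mem_or_mem h with h | h
    · exact ht h
    · exact hs h
  · rw [LinearMap.smul_comp, h2, smul_smul]

/-- retracts of localizations of members of `𝒳` -/
def AL (𝒳 : Set (ModuleCat.{u} R)) (p : PrimeSpectrum R) : Set (ModuleCat.{u} (Lr p)) :=
  {N | ∃ X ∈ 𝒳, ∃ (a : N →ₗ[Lr p] Lm p X) (b : Lm p X →ₗ[Lr p] N), b ∘ₗ a = LinearMap.id}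

variable {𝒳 : Set (ModuleCat.{u} R)} {p : PrimeSpectrum R}
variable {N N' N'' : Type u} [AddCommGroup N] [Module (Lr p) N] [AddCommGroup N'] [Module (Lr p) N']
  [AddCommGroup N''] [Module (Lr p) N'']

lemma AL_mk (X : Type u) [AddCommGroup X] [Module R X] (hX : ModuleCat.of R X ∈ 𝒳)
    (a : N →ₗ[Lr p] Lm p X) (b : Lm p X →ₗ[Lr p] N) (h : b ∘ₗ a = LinearMap.id) :
    ModuleCat.of (Lr p) N ∈ AL 𝒳 p := ⟨ModuleCat.of R X, hX, a, b, h⟩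

lemma AL_ret (a : N →ₗ[Lr p] N') (b : N' →ₗ[Lr p] N) (h : b ∘ₗ a = LinearMap.id)
    (h' : ModuleCat.of (Lr p) N' ∈ AL 𝒳 p) : ModuleCat.of (Lr p) N ∈ AL 𝒳 p := by
  obtain ⟨X, hX, a', b', h'⟩ := h'
  refine AL_mk X hX (a' ∘ₗ a) (b ∘ₗ b') ?_
  rw [LinearMap.comp_assoc, ← LinearMap.comp_assoc a, h']
  exact h

lemma AL_of (X : Type u) [AddCommGroup X] [Module R X] (hX : ModuleCat.of R X ∈ 𝒳) :
    ModuleCat.of (Lr p) (Lm p X) ∈ AL 𝒳 p := AL_mk X hX LinearMap.id LinearMap.id rfl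

lemma lmap_zero (p : PrimeSpectrum R) : lmap p (0 : A →ₗ[R] B) = 0 := map_zero _
lemma lmap_add (p : PrimeSpectrum R) (f g : A →ₗ[R] B) : lmap p (f + g) = lmap p f + lmap p g :=
  map_add _ _ _
lemma lmap_comp_apply (p : PrimeSpectrum R) (f : A →ₗ[R] B) (g : B →ₗ[R] C) (x : Lm p A) :
    lmap p g (lmap p f x) = lmap p (g ∘ₗ f) x := by rw [lmap_comp]; rfl

lemma Lm_prod (p : PrimeSpectrum R) : Nonempty ((Lm p A × Lm p B) ≃ₗ[Lr p] Lm p (A × B)) := by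
  refine ⟨LinearEquiv.ofLinearMap ((lmap p (LinearMap.inl R A B)).coprod (lmap p (LinearMap.inr R A B)))
    ((lmap p (LinearMap.fst R A B)).prod (lmap p (LinearMap.snd R A B))) ?_ ?_⟩
  · rw [LinearMap.coprod_comp_prod, ← lmap_comp, ← lmap_comp, ← lmap_add, ← lmap_id]
    congr 1
    ext <;> simp
  · have key : ∀ (x : Lm p A) (y : Lm p B),
        lmap p (LinearMap.fst R A B) (lmap p (LinearMap.inl R A B) x + lmap p (LinearMap.inr R A B) y) = x ∧
        lmap p (LinearMap.snd R A B) (lmap p (LinearMap.inl R A B) x + lmap p (LinearMap.inr R A B) y) = y := by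
      intro x y
      simp only [map_add, lmap_comp_apply, LinearMap.fst_comp_inl, LinearMap.snd_comp_inl,
        LinearMap.fst_comp_inr, LinearMap.snd_comp_inr, lmap_id, lmap_zero, LinearMap.id_apply,
        LinearMap.zero_apply, add_zero, zero_add, and_self]
    apply LinearMap.ext
    rintro ⟨x, y⟩
    exact Prod.ext (key x y).1 (key x y).2

lemma AL_prod (hX : IsResolving R 𝒳) (h : ModuleCat.of (Lr p) N ∈ AL 𝒳 p)
    (h' : ModuleCat.of (Lr p) N' ∈ AL 𝒳 p) : ModuleCat.of (Lr p) (N × N') ∈ AL 𝒳 p := by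
  obtain ⟨X, hX1, a, b, hab⟩ := h
  obtain ⟨Y, hY1, a', b', hab'⟩ := h'
  obtain ⟨e⟩ := Lm_prod (A := X) (B := Y) p
  refine AL_mk (X × Y) (hX.prod hX1 hY1) (e.toLinearMap ∘ₗ (a.prodMap a'))
    ((b.prodMap b') ∘ₗ e.symm.toLinearMap) ?_
  ext x
  · have := LinearMap.congr_fun hab x; simpa using this
  · have := LinearMap.congr_fun hab' 0; simpa using this
  · have := LinearMap.congr_fun hab 0; simpa using this
  · have := LinearMap.congr_fun hab' x; simpa using this

lemma Lm_fin (p : PrimeSpectrum R) (n : ℕ) : Nonempty ((Fin n → Lr p) ≃ₗ[Lr p] Lm p (Fin n → R)) := by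
  induction n with
  | zero =>
    have : Subsingleton (Lm p (Fin 0 → R)) := by
      refine ⟨fun x y => ?_⟩
      obtain ⟨m, s, rfl⟩ := Lm_exists p x
      obtain ⟨m', s', rfl⟩ := Lm_exists p y
      rw [Subsingleton.elim m 0, Subsingleton.elim m' 0, LocalizedModule.zero_mk, LocalizedModule.zero_mk]
    exact ⟨LinearEquiv.ofSubsingleton _ _⟩
  | succ n ih =>
    obtain ⟨e⟩ := ih
    obtain ⟨e1⟩ := exists_lmapR p
    obtain ⟨e2⟩ := Lm_prod (A := R) (B := Fin n → R) p
    let c1 : (R × (Fin n → R)) ≃ₗ[R] (Fin (n+1) → R) := Fin.consLinearEquiv R (fun _ => R)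
    let c2 : (Lr p × (Fin n → Lr p)) ≃ₗ[Lr p] (Fin (n+1) → Lr p) := Fin.consLinearEquiv (Lr p) (fun _ => Lr p)
    let c3 : Lm p (R × (Fin n → R)) ≃ₗ[Lr p] Lm p (Fin (n+1) → R) :=
      LinearEquiv.ofLinearMap (lmap p c1.toLinearMap) (lmap p c1.symm.toLinearMap)
        (by rw [← lmap_comp, LinearEquiv.comp_symm, lmap_id])
        (by rw [← lmap_comp, LinearEquiv.symm_comp, lmap_id])
    exact ⟨(c2.symm.trans ((e1.symm.prodCongr e).trans e2)).trans c3⟩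

lemma proj_ret_fin [Module.Finite (Lr p) N] [Module.Projective (Lr p) N] :
    ∃ (n : ℕ) (a : N →ₗ[Lr p] Lm p (Fin n → R)) (b : Lm p (Fin n → R) →ₗ[Lr p] N),
      b ∘ₗ a = LinearMap.id := by
  obtain ⟨n, f, hf⟩ := exists_cover (S := Lr p) N
  obtain ⟨g, hg⟩ := Module.projective_lifting_property f LinearMap.id hf
  obtain ⟨e⟩ := Lm_fin p n
  refine ⟨n, e.toLinearMap ∘ₗ g, f ∘ₗ e.symm.toLinearMap, ?_⟩
  rw [← hg]; ext x; simp

lemma AL_proj (hX : IsResolving R 𝒳) [Module.Finite (Lr p) N] [Module.Projective (Lr p) N] :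
    ModuleCat.of (Lr p) N ∈ AL 𝒳 p := by
  obtain ⟨n, a, b, h⟩ := proj_ret_fin (p := p) (N := N)
  exact AL_mk (Fin n → R) hX.proj a b h

lemma sann_of_free [IsNoetherianRing R] [Module.Finite R A] (h : Module.Projective (Lr p) (Lm p A)) :
    ¬ sann R A ≤ p.asIdeal := by
  obtain ⟨n, a, b, h⟩ := proj_ret_fin (p := p) (N := Lm p A)
  obtain ⟨s, hs, a, b, hab⟩ := Lle_of_ret p a b h
  exact fun hle => hs (hle (mem_sann_of a b (fun x => by simpa using LinearMap.congr_fun hab x)))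

/-- syzygies -/
lemma AL_syz [IsNoetherianRing R] (hX : IsResolving R 𝒳) {K P N : Type u} [AddCommGroup K]
    [Module (Lr p) K] [AddCommGroup P] [Module (Lr p) P] [AddCommGroup N] [Module (Lr p) N]
    [Module.Finite (Lr p) P] [Module.Projective (Lr p) P] {i : K →ₗ[Lr p] P} {q : P →ₗ[Lr p] N}
    (hs : IsSES i q) (h : ModuleCat.of (Lr p) N ∈ AL 𝒳 p) : ModuleCat.of (Lr p) K ∈ AL 𝒳 p := by
  obtain ⟨X, hX1, a, b, hab⟩ := h
  change N →ₗ[Lr p] Lm p X at a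
  change Lm p X →ₗ[Lr p] N at b
  have := hX.fg X hX1
  obtain ⟨n, c, hc⟩ := exists_cover (S := R) X
  have hcs := isSES_ker hc
  have hΩ : ModuleCat.of R (LinearMap.ker c) ∈ 𝒳 := hX.syz hcs hX1
  have hL := Lses p hcs
  have := Lm_projective (A := Fin n → R) p
  obtain ⟨α, hα⟩ := Module.projective_lifting_property (lmap p c) (a ∘ₗ q) hL.2.1
  obtain ⟨β, hβ⟩ := Module.projective_lifting_property q (b ∘ₗ lmap p c) hs.2.1
  have hα' : ∀ x, lmap p c (α x) = a (q x) := fun x => LinearMap.congr_fun hα x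
  have hβ' : ∀ x, q (β x) = b (lmap p c x) := fun x => LinearMap.congr_fun hβ x
  have hab' : ∀ x, b (a x) = x := fun x => LinearMap.congr_fun hab x
  have hqi : ∀ x, q (i x) = 0 := hs.zero
  have hcj := hL.zero
  obtain ⟨α', hα1⟩ := hL.lift_map (α ∘ₗ i) (fun x => by simp [hα', hqi])
  obtain ⟨β', hβ1⟩ := hs.lift_map (β ∘ₗ lmap p (LinearMap.ker c).subtype) (fun x => by simp [hβ', hcj])
  obtain ⟨δ, hδ⟩ := hs.lift_map (LinearMap.id - β ∘ₗ α) (fun x => by simp [hβ', hα', hab'])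
  refine AL_ret (α'.prod i) (β'.coprod δ) ?_ (AL_prod hX (AL_of _ hΩ) (AL_proj (N := P) hX))
  ext x
  apply hs.1
  simp [hβ1, hδ, hα1]

/-- extensions, when the right end is a localization -/
lemma AL_ext' [IsNoetherianRing R] (hX : IsResolving R 𝒳) {N B : Type u} [AddCommGroup N]
    [Module (Lr p) N] [AddCommGroup B] [Module (Lr p) B] {Z : Type u} [AddCommGroup Z] [Module R Z]
    {f : N →ₗ[Lr p] B} {g : B →ₗ[Lr p] Lm p Z}
    (hs : IsSES f g) (h : ModuleCat.of (Lr p) N ∈ AL 𝒳 p) (hZ : ModuleCat.of R Z ∈ 𝒳) :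
    ModuleCat.of (Lr p) B ∈ AL 𝒳 p := by
  obtain ⟨X, hX1, a, b, hab⟩ := h
  change N →ₗ[Lr p] Lm p X at a
  change Lm p X →ₗ[Lr p] N at b
  have hab' : ∀ x, b (a x) = x := fun x => LinearMap.congr_fun hab x
  have := hX.fg X hX1
  have := hX.fin hZ
  obtain ⟨n, c, hc⟩ := exists_cover (S := R) Z
  have hcs := isSES_ker hc
  have hL := Lses p hcs
  have := Lm_projective (A := Fin n → R) p
  have hfk : Module.Finite R (LinearMap.ker c) := fin_left _ hcs.1
  set ι := (LinearMap.ker c).subtype with hι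
  obtain ⟨l, hl⟩ := Module.projective_lifting_property g (lmap p c) hs.2.1
  have hl' : ∀ x, g (l x) = lmap p c x := fun x => LinearMap.congr_fun hl x
  obtain ⟨h, hh⟩ := hs.lift_map (l ∘ₗ lmap p ι) (fun x => by
    rw [LinearMap.comp_apply, hl']; exact hL.zero x)
  obtain ⟨s, hsp, h0, hh0⟩ := exists_lift_hom p (a ∘ₗ h)
  obtain ⟨w, hw⟩ := Lunit hsp
  rw [← hw] at hh0
  have hh0' : ∀ k, lmap p h0 k = (w : Lr p) • a (h k) := fun k => LinearMap.congr_fun hh0 k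
  -- presentation of B
  have hB : IsSES (h.prod (-lmap p ι)) (f.coprod l) := by
    refine IsSES.of ?_ ?_ ?_ ?_
    · intro x y hxy
      have : -lmap p ι x = -lmap p ι y := congrArg Prod.snd hxy
      exact hL.1 (neg_injective this)
    · intro y
      obtain ⟨z, hz⟩ := hL.2.1 (g y)
      obtain ⟨m, hm⟩ := hs.lift (y := y - l z) (by rw [map_sub, hl', hz, sub_self])
      exact ⟨(m, z), by simp [hm]⟩
    · intro x
      have := hh x
      simp only [LinearMap.comp_apply] at this
      simp [this]
    · rintro ⟨m, y⟩ hy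
      have hy' : f m + l y = 0 := hy
      have h1 : lmap p c y = 0 := by
        have := congrArg g hy'
        rwa [map_add, hs.zero, zero_add, hl', map_zero] at this
      obtain ⟨k, hk⟩ := hL.lift h1
      refine ⟨-k, Prod.ext (hs.1 ?_) ?_⟩
      · have := hh (-k)
        simp only [LinearMap.comp_apply, map_neg] at this
        change f (h (-k)) = f m
        rw [map_neg, map_neg, this, hk]
        exact (eq_neg_of_add_eq_zero_left hy').symm
      · change - lmap p ι (-k) = y
        rw [map_neg, neg_neg, hk]
  -- the global extension
  let j0 : LinearMap.ker c →ₗ[R] X × (Fin n → R) := h0.prod (-ι)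
  have hj0 : Function.Injective j0 := by
    intro x y hxy
    have : -ι x = -ι y := congrArg Prod.snd hxy
    exact hcs.1 (neg_injective this)
  let E := (X × (Fin n → R)) ⧸ LinearMap.range j0
  let Q : X × (Fin n → R) →ₗ[R] E := (LinearMap.range j0).mkQ
  have hQ : IsSES j0 Q := ⟨hj0, Submodule.mkQ_surjective _, (Submodule.ker_mkQ _).symm⟩
  obtain ⟨r, hr⟩ := hQ.desc (c ∘ₗ LinearMap.snd R X (Fin n → R)) (fun k => by
    change c (-ι k) = 0
    rw [map_neg, neg_eq_zero]; exact hcs.zero k)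
  have hE : IsSES (Q ∘ₗ LinearMap.inl R X (Fin n → R)) r := by
    refine IsSES.of ?_ ?_ ?_ ?_
    · rw [injective_iff_map_eq_zero]
      intro x hx
      obtain ⟨k, hk⟩ := hQ.lift (y := (x, 0)) hx
      have h1 : -ι k = 0 := congrArg Prod.snd hk
      have h2 : h0 k = x := congrArg Prod.fst hk
      have h3 : k = 0 := hcs.1 (by rw [map_zero]; exact neg_eq_zero.1 h1)
      rw [← h2, h3, map_zero]
    · intro z
      obtain ⟨y, hy⟩ := hc z
      exact ⟨Q (0, y), by rw [hr]; exact hy⟩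
    · intro x
      rw [LinearMap.comp_apply, hr]; simp
    · intro e he
      obtain ⟨⟨x, y⟩, rfl⟩ := hQ.2.1 e
      rw [hr] at he
      obtain ⟨k, hk⟩ := hcs.lift (y := y) he
      refine ⟨x + h0 k, ?_⟩
      rw [LinearMap.comp_apply, ← sub_eq_zero, ← map_sub]
      have : (LinearMap.inl R X (Fin n → R)) (x + h0 k) - (x, y) = j0 k := by
        ext1
        · simp [j0]
        · change 0 - y = -ι k
          rw [zero_sub, ← hk]
      rw [this]; exact hQ.zero k
  have hEX : ModuleCat.of R E ∈ 𝒳 := hX.ext hE hX1 hZ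
  have hLQ := Lses p hQ
  -- maps
  have hj1 : ∀ k, lmap p (LinearMap.fst R X (Fin n → R)) (lmap p j0 k) = (w : Lr p) • a (h k) := by
    intro k
    rw [lmap_comp_apply, ← hh0']; congr 2
  have hj2 : ∀ k, lmap p (LinearMap.snd R X (Fin n → R)) (lmap p j0 k) = - lmap p ι k := by
    intro k
    rw [lmap_comp_apply]
    have : (LinearMap.snd R X (Fin n → R)) ∘ₗ j0 = -ι := by ext1; rfl
    rw [this]
    have h2 : lmap p (-ι) = - lmap p ι := map_neg _ _
    rw [h2]; rfl
  have hj3 : ∀ z, lmap p (LinearMap.inl R X (Fin n → R)) (lmap p (LinearMap.fst R X (Fin n → R)) z) +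
      lmap p (LinearMap.inr R X (Fin n → R)) (lmap p (LinearMap.snd R X (Fin n → R)) z) = z := by
    intro z
    rw [lmap_comp_apply, lmap_comp_apply, ← LinearMap.add_apply, ← lmap_add]
    have : (LinearMap.inl R X (Fin n → R)) ∘ₗ (LinearMap.fst R X (Fin n → R)) +
      (LinearMap.inr R X (Fin n → R)) ∘ₗ (LinearMap.snd R X (Fin n → R)) = LinearMap.id := by
      apply LinearMap.ext; rintro ⟨x, y⟩; simp
    rw [this, lmap_id]; rfl
  obtain ⟨α, hα⟩ := hB.desc (lmap p Q ∘ₗ (((w : Lr p) • (lmap p (LinearMap.inl R X (Fin n → R)) ∘ₗ a)).coprod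
      (lmap p (LinearMap.inr R X (Fin n → R))))) (fun k => by
    have : (((w : Lr p) • (lmap p (LinearMap.inl R X (Fin n → R)) ∘ₗ a)).coprod
      (lmap p (LinearMap.inr R X (Fin n → R)))) ((h.prod (-lmap p ι)) k) = lmap p j0 k := by
      rw [← hj3 (lmap p j0 k), hj1, hj2]
      simp
    rw [LinearMap.comp_apply, this]
    exact hLQ.zero k)
  obtain ⟨β, hβ⟩ := hLQ.desc (((w⁻¹ : (Lr p)ˣ) : Lr p) • (f ∘ₗ b ∘ₗ lmap p (LinearMap.fst R X (Fin n → R))) +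
      l ∘ₗ lmap p (LinearMap.snd R X (Fin n → R))) (fun k => by
    have h1 := hh k
    rw [LinearMap.comp_apply] at h1
    simp only [LinearMap.add_apply, LinearMap.smul_apply, LinearMap.comp_apply]
    rw [hj1, hj2, map_smul, map_smul, hab', smul_smul, h1, map_neg]
    simp)
  refine AL_ret α β ?_ (AL_of E hEX)
  ext y
  obtain ⟨⟨m, z⟩, rfl⟩ := hB.2.1 y
  rw [LinearMap.comp_apply, hα, LinearMap.comp_apply, hβ]
  have e1 : ∀ x, lmap p (LinearMap.fst R X (Fin n → R)) (lmap p (LinearMap.inl R X (Fin n → R)) x) = x := by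
    intro x; rw [lmap_comp_apply, LinearMap.fst_comp_inl, lmap_id]; rfl
  have e2 : ∀ x, lmap p (LinearMap.fst R X (Fin n → R)) (lmap p (LinearMap.inr R X (Fin n → R)) x) = 0 := by
    intro x; rw [lmap_comp_apply, LinearMap.fst_comp_inr, lmap_zero]; rfl
  have e3 : ∀ x, lmap p (LinearMap.snd R X (Fin n → R)) (lmap p (LinearMap.inl R X (Fin n → R)) x) = 0 := by
    intro x; rw [lmap_comp_apply, LinearMap.snd_comp_inl, lmap_zero]; rfl
  have e4 : ∀ x, lmap p (LinearMap.snd R X (Fin n → R)) (lmap p (LinearMap.inr R X (Fin n → R)) x) = x := by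
    intro x; rw [lmap_comp_apply, LinearMap.snd_comp_inr, lmap_id]; rfl
  simp only [LinearMap.add_apply, LinearMap.smul_apply, LinearMap.comp_apply, LinearMap.coprod_apply,
    map_add, map_smul, e1, e2, e3, e4, map_zero, add_zero, zero_add, hab', smul_zero, smul_smul,
    Units.inv_mul, Units.mul_inv, one_smul, LinearMap.id_apply]

lemma AL_ext [IsNoetherianRing R] (hX : IsResolving R 𝒳) {N B N₂ : Type u} [AddCommGroup N]
    [Module (Lr p) N] [AddCommGroup B] [Module (Lr p) B] [AddCommGroup N₂] [Module (Lr p) N₂]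
    {f : N →ₗ[Lr p] B} {g : B →ₗ[Lr p] N₂}
    (hs : IsSES f g) (h : ModuleCat.of (Lr p) N ∈ AL 𝒳 p) (h2 : ModuleCat.of (Lr p) N₂ ∈ AL 𝒳 p) :
    ModuleCat.of (Lr p) B ∈ AL 𝒳 p := by
  obtain ⟨Z, hZ, a, b, hab⟩ := h2
  change N₂ →ₗ[Lr p] Lm p Z at a
  change Lm p Z →ₗ[Lr p] N₂ at b
  have hab' : ∀ x, b (a x) = x := fun x => LinearMap.congr_fun hab x
  have := AL_ext' (Z := Z) hX (PB_ses_snd hs b) h hZ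
  refine AL_ret (PBlift LinearMap.id (a ∘ₗ g) (fun x => by simp [hab'])) (PBfst g b) ?_ this
  ext x; simp

lemma AL_resolving [IsNoetherianRing R] (hX : IsResolving R 𝒳) : IsResolving (Lr p) (AL 𝒳 p) where
  fg := by
    rintro N ⟨X, hX1, a, b, hab⟩
    have := hX.fg X hX1
    exact Module.Finite.of_surjective b (fun x => ⟨a x, LinearMap.congr_fun hab x⟩)
  iso_closed := by
    rintro M N ⟨e⟩ h
    exact AL_ret (N := N) (N' := M) e.symm.toLinearMap e.toLinearMap (by ext x; simp) h
  proj_mem := by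
    intro M _ _
    exact AL_proj (N := M) hX
  summand_closed := by
    intro M N h
    exact AL_ret (N := M) (N' := M × N) (LinearMap.inl _ M N) (LinearMap.fst _ M N) (by ext x; simp) h
  ext_closed := by
    intro A B C f g h hA hC
    exact AL_ext (N := A) (B := B) (N₂ := C) hX h hA hC
  syzygy_closed := by
    intro K P M f g h _ _ _ hM
    exact AL_syz (K := K) (P := P) (N := M) hX h hM

end AL

section PartTwo
open IsLocalRing
variable {R : Type u} [CommRing R]

lemma Lge.mono {A : Type u} [AddCommGroup A] [Module R A] {p : PrimeSpectrum R} {s t : ℕ}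
    (h : s ≤ t) (hA : Lge p t A) : Lge p s A := Dge.mono h hA

lemma Lge_retract {A B : Type u} [AddCommGroup A] [Module R A] [AddCommGroup B] [Module R B]
    {p : PrimeSpectrum R} {t : ℕ} (a : A →ₗ[R] B) (b : B →ₗ[R] A) (h : b ∘ₗ a = LinearMap.id)
    (hB : Lge p t B) : Lge p t A :=
  Lge_ret (s := 1) (fun h1 => p.2.ne_top ((Ideal.eq_top_iff_one _).2 h1)) a b (by rw [h, one_smul]) hB

lemma psi_resolving [IsNoetherianRing R] (hR : ∀ p : PrimeSpectrum R, Lge p (ht p) R)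
    (f : PrimeSpectrum R → ℕ) : IsResolving R (psiDepth R f) where
  fg := fun M h => h.1
  iso_closed := by
    rintro M N ⟨e⟩ h
    rw [psi_iff] at h ⊢
    have := h.1
    refine ⟨Module.Finite.equiv e, fun p => ?_⟩
    exact Lge_retract e.symm.toLinearMap e.toLinearMap (by ext x; simp) (h.2 p)
  proj_mem := by
    intro M _ _
    rw [psi_iff]
    exact ⟨inferInstance, fun p => Lge_proj ((hR p).mono (Nat.sub_le _ _))⟩
  summand_closed := by
    intro M N h
    rw [psi_iff] at h ⊢
    have h1 : Module.Finite R (M × N) := h.1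
    refine ⟨Module.Finite.of_surjective (LinearMap.fst R M N) LinearMap.fst_surjective, fun p => ?_⟩
    exact Lge_retract (B := M × N) (LinearMap.inl R M N) (LinearMap.fst R M N) (by ext x; simp) (h.2 p)
  ext_closed := by
    intro A B C f g h hA hC
    rw [psi_iff] at hA hC ⊢
    have := hA.1
    have := hC.1
    exact ⟨fin_mid h, fun p => Dge_mid (Lses p h) (hA.2 p) (hC.2 p)⟩
  syzygy_closed := by
    intro K P M f g h _ _ _ hM
    rw [psi_iff] at hM ⊢
    exact ⟨inferInstance, fun p => Dge_ker (Lses p h)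
      (Lge_proj ((hR p).mono (Nat.sub_le _ _))) (hM.2 p)⟩

lemma minSyz_Lge [IsNoetherianRing R] [IsLocalRing R] (p : PrimeSpectrum R) (hR : Lge p (ht p) R) (n : ℕ) :
    ∀ (t : ℕ) (M K : ModuleCat.{u} R), IsMinSyz R n M K → Module.Finite R M →
      Lge p (min (ht p) t) M → Module.Finite R K ∧ Lge p (min (ht p) (t + n)) K := by
  induction n with
  | zero =>
    rintro t M K ⟨e⟩ _ h
    exact ⟨Module.Finite.equiv e.symm,
      Lge_retract e.toLinearMap e.symm.toLinearMap (by ext x; simp) h⟩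
  | succ n ih =>
    rintro t M K ⟨F, g, K', i, hF, hF', hg, -, hi, hgi, h⟩ _ hM
    have hs : IsSES i g := ⟨hi, hg, hgi⟩
    have h1 := ih (t + 1) K' K h (fin_left i hi) (by
      rcases Nat.lt_or_ge t (ht p) with h1 | h1
      · rw [min_eq_right (by omega)] at hM ⊢
        exact Dge_left (Lses p hs) (Lge_proj (hR.mono (by omega))) hM
      · rw [min_eq_left (by omega)] at hM ⊢
        exact Dge_ker (Lses p hs) (Lge_proj hR) hM)
    rwa [show t + 1 + n = t + (n + 1) by omega] at h1

lemma syz_mem_psi [IsNoetherianRing R] [IsLocalRing R] {d : ℕ}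
    (hd : ringKrullDim R = (d : WithBot ℕ∞)) (hR : ∀ p : PrimeSpectrum R, Lge p (ht p) R)
    (f : PrimeSpectrum R → ℕ) (K : ModuleCat.{u} R) (hK : IsMinSyz R d (residueMod R) K) :
    K ∈ psiDepth R f := by
  rw [psi_iff]
  have hfin : Module.Finite R (residueMod R) := (residue_mem_LF (S := R)).1
  refine ⟨(minSyz_Lge (closedPoint R) (hR _) d 0 _ _ hK hfin (by
    rw [Nat.min_zero]; exact Dge_zero)).1, fun p => ?_⟩
  refine Lge.mono (Nat.sub_le _ _) ?_
  by_cases hp : p = closedPoint R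
  · subst hp
    have := (minSyz_Lge (closedPoint R) (hR _) d 0 _ _ hK hfin (by rw [Nat.min_zero]; exact Dge_zero)).2
    rw [ht_closed hd, zero_add, min_self] at this
    rwa [ht_closed hd]
  · have hlt : ∃ c ∈ maximalIdeal R, c ∉ p.asIdeal := by
      by_contra! hcon
      exact hp (PrimeSpectrum.ext (le_antisymm (IsLocalRing.le_maximalIdeal p.2.ne_top) hcon))
    obtain ⟨c, hc, hcp⟩ := hlt
    have hsub : Subsingleton (Lm p (residueMod R)) := by
      refine subsingleton_of_forall_eq 0 fun u => ?_
      obtain ⟨m, s, rfl⟩ := Lm_exists p u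
      rw [Lm_mk_zero]
      refine ⟨c, hcp, ?_⟩
      have h0 : residue R c = 0 := (residue_eq_zero_iff c).2 hc
      change c • (m : ResidueField R) = 0
      rw [Algebra.smul_def]
      change residue R c * _ = 0
      rw [h0, zero_mul]
    have := (minSyz_Lge p (hR p) d (ht p) _ _ hK hfin (Dge_of_subsingleton _)).2
    rwa [min_eq_left (by omega)] at this

lemma exists_wit0 [IsNoetherianRing R] (hR : ∀ p : PrimeSpectrum R, Lge p (ht p) R)
    (p : PrimeSpectrum R) (a : ℕ) (ha : a ≤ ht p) :
    ∃ A : ModuleCat.{u} R, Module.Finite R A ∧ (∀ q, p ≤ q → Lge q (ht q - a) A) ∧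
      ¬ Lge p (ht p - a + 1) A := by
  induction a with
  | zero =>
    exact ⟨ModuleCat.of R R, inferInstanceAs (Module.Finite R R), fun q _ => hR q, not_Lge_R p⟩
  | succ a ih =>
    obtain ⟨A, hA, h1, h2⟩ := ih (by omega)
    obtain ⟨x, hx, hreg⟩ := exists_reg_in_prime (A := A) p (fun q hq => (h1 q hq).mono (by
      have := ht_mono hq; omega))
    have hL : ∀ q : PrimeSpectrum R, IsSMulRegular (Lm q A) (algebraMap R (Lr q) x) := by
      intro q
      rw [Lreg_iff]
      rintro m ⟨c, hc, h0⟩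
      refine ⟨c, hc, isSMulRegular_iff_right_eq_zero_of_smul.1 hreg _ ?_⟩
      rw [smul_comm]; exact h0
    refine ⟨ModuleCat.of R (QuotSMulTop x A), inferInstanceAs (Module.Finite R (QuotSMulTop x A)),
      fun q hq => ?_, fun h => h2 ?_⟩
    · have := ht_mono hq
      refine (Lge_succ_iff_quot (hq hx) (hL q)).1 ?_
      rw [show ht q - (a + 1) + 1 = ht q - a by omega]
      exact h1 q hq
    · have := (Lge_succ_iff_quot hx (hL p)).2 h
      rwa [show ht p - (a + 1) + 1 + 1 = ht p - a + 1 by omega] at this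

lemma Lge_PB {X F : Type u} [AddCommGroup X] [Module R X] [AddCommGroup F] [Module R F]
    {π : F →ₗ[R] X} (hπ : Function.Surjective π) {p : PrimeSpectrum R} {z : R} (hz : z ∈ p.asIdeal)
    {t : ℕ} (h : Lge p t (PB π (z • LinearMap.id))) : Lge p t X := by
  have hs := Lses p (PB_ses hπ (z • LinearMap.id))
  refine Dge_trick hs (lmap p (LinearMap.inr R F X)) (lmap p (LinearMap.snd R F X)) ?_
    (c := algebraMap R (Lr p) (-z)) ?_ ?_ h
  · rw [← lmap_comp, LinearMap.snd_comp_inr, lmap_id]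
  · have := (IsLocalization.AtPrime.to_map_mem_maximal_iff (Lr p) p.asIdeal (-z)).2 (neg_mem hz)
    exact this
  · rw [← lmap_comp, ← lmap_id, ← lmap_smul]
    congr 1
    ext x; simp

lemma exists_wit [IsNoetherianRing R] (hR : ∀ p : PrimeSpectrum R, Lge p (ht p) R)
    (f : PrimeSpectrum R → ℕ) (hf : ∀ p q : PrimeSpectrum R, p.asIdeal ≤ q.asIdeal → f p ≤ f q)
    (p : PrimeSpectrum R) (ha : f p ≤ ht p) :
    ∃ Y ∈ psiDepth R f, ¬ Lge p (ht p - f p + 1) Y := by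
  obtain ⟨A, hA, h1, h2⟩ := exists_wit0 hR p (f p) ha
  obtain ⟨Y, hY, ⟨h3, h4⟩, h5⟩ := Ytower p.asIdeal (fun Y => (∀ q, p ≤ q → Lge q (ht q - f p) Y) ∧
      ¬ Lge p (ht p - f p + 1) Y) (by
    rintro X n π z hz hπ _ ⟨h1, h2⟩
    refine ⟨fun q hq => ?_, fun h => h2 (Lge_PB hπ hz h)⟩
    have hF : Lge q (ht q - f p) (Fin n → R) := Lge_proj ((hR q).mono (Nat.sub_le _ _))
    have hK : Lge q (ht q - f p) (LinearMap.ker π) := Dge_ker (Lses q (isSES_ker hπ)) hF (h1 q hq)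
    exact Dge_mid (Lses q (PB_ses_snd (isSES_ker hπ) (z • LinearMap.id))) hK (h1 q hq)) A hA ⟨h1, h2⟩
  refine ⟨Y, (psi_iff f Y).2 ⟨hY, fun q => ?_⟩, h4⟩
  by_cases hq : p ≤ q
  · exact (h3 q hq).mono (Nat.sub_le_sub_left (hf p q hq) _)
  · refine Lge_sann ((hR q).mono (Nat.sub_le _ _)) fun hs => hq ?_
    exact h5.trans (q.2.radical_le_iff.2 hs)

lemma part_two [IsNoetherianRing R] [IsLocalRing R] {d : ℕ}
    (hd : ringKrullDim R = (d : WithBot ℕ∞)) (hR : ∀ p : PrimeSpectrum R, Lge p (ht p) R)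
    (f : PrimeSpectrum R → ℕ) (hf : GradeConsistent R f) :
    IsResolving R (psiDepth R f) ∧
      (∀ K : ModuleCat.{u} R, IsMinSyz R d (residueMod R) K → K ∈ psiDepth R f) ∧
      (∀ p : PrimeSpectrum R,
        (f p : ℕ∞) = heightE R p - ⨅ X ∈ psiDepth R f, localDepth R p X) := by
  refine ⟨psi_resolving hR f, syz_mem_psi hd hR f, fun p => ?_⟩
  have hle : f p ≤ ht p := by
    have := (hf.1 p).trans (grade_le p)
    exact_mod_cast this
  rw [iInf_localDepth (psiDepth R f) p (ht p - f p) (fun X hX => hX.1)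
    (fun X hX => ((psi_iff f X).1 hX).2 p) (exists_wit hR f hf.2 p hle), heightE_eq]
  norm_cast
  omega

end PartTwo

section PartOne
open IsLocalRing
variable {R : Type u} [CommRing R]
variable {A : Type u} [AddCommGroup A] [Module R A]

lemma sann_loc (p : PrimeSpectrum R) {y : R} (h : y ∈ sann R A) :
    algebraMap R (Lr p) y ∈ sann (Lr p) (Lm p A) := by
  obtain ⟨P, a, b, hf, hp, hab⟩ := mem_sann_iff.1 h
  have := Lm_projective (A := P) p
  refine mem_sann_of (lmap p a) (lmap p b) fun x => ?_
  rw [lmap_comp_apply, show b ∘ₗ a = y • LinearMap.id from LinearMap.ext hab, lmap_smul, lmap_id]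
  rfl

lemma LF_of_min [Module.Finite R A] (p : PrimeSpectrum R) {I : Ideal R}
    (hp : p.asIdeal ∈ I.minimalPrimes) (hI : I ≤ (sann R A).radical) :
    ModuleCat.of (Lr p) (Lm p A) ∈ LF (Lr p) := by
  refine ⟨inferInstanceAs (Module.Finite (Lr p) (Lm p A)), ?_⟩
  change maximalIdeal (Lr p) ≤ (sann (Lr p) (Lm p A)).radical
  rw [Ideal.radical_eq_sInf]
  refine le_sInf ?_
  rintro Q ⟨hle, hQ⟩
  have hc : (Q.comap (algebraMap R (Lr p))).IsPrime := Ideal.IsPrime.comap _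
  have h1 : I ≤ Q.comap (algebraMap R (Lr p)) :=
    hI.trans (hc.radical_le_iff.2 fun y hy => hle (sann_loc p hy))
  have h2 : Q.comap (algebraMap R (Lr p)) ≤ p.asIdeal := by
    intro s hs
    by_contra hsp
    exact hQ.ne_top (Ideal.eq_top_of_isUnit_mem _ hs (Lunit hsp))
  have h3 : p.asIdeal ≤ Q.comap (algebraMap R (Lr p)) := hp.2 ⟨hc, h1⟩ h2
  rw [← Localization.AtPrime.map_eq_maximalIdeal]
  exact Ideal.map_le_iff_le_comap.2 h3

lemma free_of_reg [IsNoetherianRing R] (p : PrimeSpectrum R) (hreg : IsRegLocalRing (Lr p))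
    (hR : Lge p (ht p) R) (N : Type u) [AddCommGroup N] [Module (Lr p) N] [Module.Finite (Lr p) N]
    (hN : Dge (Lr p) (ht p) N) : Module.Free (Lr p) N := by
  obtain ⟨_, s, hs, hdim⟩ := hreg
  rw [ringKrullDim_Lr] at hdim
  have hcard : s.card = ht p := by exact_mod_cast hdim.symm
  let e := s.equivFinOfCardEq hcard
  refine free_of_Dge (ht p) (Lr p) (fun i => ((e.symm i : s) : Lr p)) ?_ (Lge_R.1 hR) N hN
  rw [← hs]
  congr 1
  ext x
  constructor
  · rintro ⟨i, rfl⟩; exact (e.symm i).2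
  · intro hx; exact ⟨e ⟨x, hx⟩, by simp⟩

variable {𝒳 : Set (ModuleCat.{u} R)}

lemma Lle_tower [IsNoetherianRing R] (hX : IsResolving R 𝒳) (p : PrimeSpectrum R)
    (X : ModuleCat.{u} R) (hX1 : X ∈ 𝒳) (h : Lle p A X) :
    ∃ Y ∈ 𝒳, Lle p A Y ∧ sann R A ≤ (sann R Y).radical := by
  obtain ⟨Y, -, ⟨h1, h2⟩, h3⟩ := Ytower (sann R A) (fun Y => Y ∈ 𝒳 ∧ Lle p A Y) (by
    rintro X n π z hz hπ _ ⟨hX1, s, hs, a, b, hab⟩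
    refine ⟨hX.ext (PB_ses_snd (isSES_ker hπ) _) (hX.syz (isSES_ker hπ) hX1) hX1, s, hs, ?_⟩
    obtain ⟨P, a', b', hf, hp, hab'⟩ := mem_sann_iff.1 hz
    obtain ⟨g, hg⟩ := Module.projective_lifting_property π (a ∘ₗ b') hπ
    have hg' : ∀ x, π (g x) = a (b' x) := fun x => LinearMap.congr_fun hg x
    refine ⟨PBlift (g ∘ₗ a') a (fun x => ?_), b ∘ₗ PBsnd _ _, ?_⟩
    · simp [hg', hab']
    · rw [← hab]; ext x; simp) X (hX.fg X hX1) ⟨hX1, h⟩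
  exact ⟨Y, h1, h2, h3⟩

lemma Lle_V {M X F : Type u} [AddCommGroup M] [Module R M] [AddCommGroup X] [Module R X]
    [AddCommGroup F] [Module R F] [Module.Projective R F] (p : PrimeSpectrum R)
    {π : F →ₗ[R] X} (hπ : Function.Surjective π) {s : R} (hs : s ∉ p.asIdeal)
    (a : M →ₗ[R] X) (b : X →ₗ[R] M) (hab : b ∘ₗ a = s • LinearMap.id) :
    Lle p (PB π a) (LinearMap.ker π × F) := by
  have hab' : ∀ x, b (a x) = s • x := fun x => LinearMap.congr_fun hab x
  obtain ⟨e, he⟩ := Module.projective_lifting_property π (a ∘ₗ b ∘ₗ π) hπ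
  have he' : ∀ x, π (e x) = a (b (π x)) := fun x => LinearMap.congr_fun he x
  have hV : ∀ v : PB π a, π v.1.1 = a v.1.2 := fun v => mem_PB.1 v.2
  obtain ⟨ψ, hψ⟩ := (isSES_ker hπ).lift_map (s • PBfst π a - e ∘ₗ PBfst π a) (fun v => by
    simp [he', hV, hab'])
  refine ⟨s, hs, ψ.prod (PBfst π a), PBlift ((LinearMap.ker π).subtype.coprod e)
    ((0 : LinearMap.ker π →ₗ[R] M).coprod (b ∘ₗ π)) ?_, ?_⟩
  · rintro ⟨k, y⟩
    simp [he', k.2]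
  · ext1 v
    apply PB_ext
    · have := hψ v
      simp only [Submodule.subtype_apply] at this
      simp [this]
    · simp [hV, hab']

lemma P_step [IsNoetherianRing R] (hX : IsResolving R 𝒳) (f : PrimeSpectrum R → ℕ)
    (hR : ∀ p : PrimeSpectrum R, Lge p (ht p) R) (hsub : 𝒳 ⊆ psiDepth R f)
    (p : PrimeSpectrum R) (I : Ideal R) (hIp : I ≤ p.asIdeal)
    (hfree : ∀ M : ModuleCat.{u} R, Module.Finite R M → Lge p (ht p) M → ¬ sann R M ≤ p.asIdeal)
    (IH : ∀ I' : Ideal R, I < I' → ∀ M ∈ psiDepth R f, I' ≤ (sann R M).radical → M ∈ 𝒳) (j : ℕ) :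
    ∀ M X : ModuleCat.{u} R, M ∈ psiDepth R f → I ≤ (sann R M).radical → X ∈ 𝒳 →
      I ≤ (sann R X).radical → Lle p M X → Lge p (ht p - j) X → M ∈ 𝒳 := by
  induction j with
  | zero =>
    rintro M X hM hIM hX1 hIX ⟨s, hs, a, b, hab⟩ hL
    have h1 := hfree M hM.1 (Lge_ret hs a b hab hL)
    refine IH (I ⊔ sann R M) ?_ M hM (sup_le hIM Ideal.le_radical)
    refine lt_of_le_of_ne le_sup_left fun heq => h1 ?_
    exact (le_sup_right.trans heq.ge).trans hIp
  | succ j ih =>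
    rintro M X hM hIM hX1 hIX ⟨s, hs, a, b, hab⟩ hL
    rcases Nat.lt_or_ge j (ht p) with hj | hj
    · have := hX.fg X hX1
      have := hM.1
      obtain ⟨n, π, hπ⟩ := exists_cover (S := R) X
      have hK := isSES_ker hπ
      have hK1 : ModuleCat.of R (LinearMap.ker π) ∈ 𝒳 := hX.syz hK hX1
      have hF : ModuleCat.of R (Fin n → R) ∈ 𝒳 := hX.proj
      have hIK : I ≤ (sann R (LinearMap.ker π)).radical :=
        hIX.trans (Ideal.radical_mono (sann_syz hK))
      have hV := ih (ModuleCat.of R (PB π a)) (ModuleCat.of R (LinearMap.ker π × (Fin n → R)))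
        ((psi_resolving hR f).ext (PB_ses_snd hK a) (hsub hK1) hM)
        (rad_sann_ext (PB_ses_snd hK a) hIK hIM)
        (hX.prod hK1 hF)
        (rad_sann_ext isSES_prod hIK (by rw [sann_proj, Ideal.radical_top]; exact le_top))
        (Lle_V p hπ hs a b hab)
        (by
          have h1 : Lge p (ht p - j) (LinearMap.ker π) := by
            rw [show ht p - j = ht p - (j + 1) + 1 by omega]
            exact Dge_left (Lses p hK) (Lge_proj ((hR p).mono (by omega))) hL
          have h2 : Lge p (ht p - j) (Fin n → R) := Lge_proj ((hR p).mono (by omega))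
          exact Dge_mid (Lses p isSES_prod) h1 h2)
      have h3 := hX.ext (PB_ses hπ a) hV hX1
      exact hX.retract (LinearMap.inr R (Fin n → R) M) (LinearMap.snd R (Fin n → R) M)
        (by ext x; simp) h3
    · refine ih M X hM hIM hX1 hIX ⟨s, hs, a, b, hab⟩ ?_
      rwa [show ht p - j = ht p - (j + 1) by omega]

lemma psi_sub [IsNoetherianRing R] [IsLocalRing R] {d : ℕ}
    (hd : ringKrullDim R = (d : WithBot ℕ∞)) (hRd : Dge R d R)
    (hreg : ∀ p : PrimeSpectrum R, p.asIdeal ≠ maximalIdeal R → IsRegLocalRing (Lr p))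
    (hR : ∀ p : PrimeSpectrum R, Lge p (ht p) R)
    (hX : IsResolving R 𝒳) (hk : residueMod R ∈ upn d 𝒳) (f : PrimeSpectrum R → ℕ)
    (hsub : 𝒳 ⊆ psiDepth R f) (hf : ∀ p, f p ≤ ht p)
    (hatt : ∀ p : PrimeSpectrum R, ∃ X ∈ 𝒳, ¬ Lge p (ht p - f p + 1) X) (I : Ideal R) :
    ∀ M ∈ psiDepth R f, I ≤ (sann R M).radical → M ∈ 𝒳 := by
  induction I using WellFoundedGT.induction with
  | ind I IH =>
  intro M hM hIM
  have hMf := hM.1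
  have hM2 := ((psi_iff f M).1 hM).2
  by_cases hI : maximalIdeal R ≤ I.radical
  · obtain ⟨X, hX1, hX2⟩ := hatt (closedPoint R)
    have hXf := hX.fg X hX1
    have hX3 := ((psi_iff f X).1 (hsub hX1)).2 (closedPoint R)
    have hle := hf (closedPoint R)
    refine local_thm hRd hX (top_case hd hRd hX hk) (f (closedPoint R))
      (ht (closedPoint R) - f (closedPoint R)) ?_ X hX1 ((Lge_closed _ _).2 hX3)
      (fun h => hX2 ((Lge_closed _ _).1 h)) M ⟨hMf, ?_⟩ ((Lge_closed _ _).2 (hM2 _))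
    · have := ht_closed hd
      omega
    · exact hI.trans (Ideal.radical_le_radical_iff.2 hIM)
  · obtain ⟨P, hP, hne⟩ : ∃ P ∈ I.minimalPrimes, P ≠ maximalIdeal R := by
      by_contra! hcon
      apply hI
      rw [← Ideal.sInf_minimalPrimes]
      exact le_sInf fun P hP => (hcon P hP).ge
    let p : PrimeSpectrum R := ⟨P, hP.1.1⟩
    have hp : p.asIdeal ∈ I.minimalPrimes := hP
    have hrp := hreg p hne
    obtain ⟨X, hX1, hX2⟩ := hatt p
    have hXf := hX.fg X hX1
    have hX3 := ((psi_iff f X).1 (hsub hX1)).2 p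
    have hALM : ModuleCat.of (Lr p) (Lm p M) ∈ AL 𝒳 p := by
      refine local_thm (Lge_R.1 (hR p)) (AL_resolving hX) ?_ (f p) (ht p - f p)
        (Nat.sub_add_cancel (hf p)) (ModuleCat.of (Lr p) (Lm p X)) (AL_of X hX1) hX3 hX2 _
        (LF_of_min p hp hIM) (hM2 p)
      intro N hN hN2
      have := hN.1
      have := free_of_reg p hrp (hR p) N hN2
      exact AL_proj (N := N) hX
    obtain ⟨X', hX', a, b, hab⟩ := hALM
    have hXf' := hX.fg X' hX'
    obtain ⟨Y, hY, h1, h2⟩ := Lle_tower (A := M) hX p X' hX' (Lle_of_ret p a b hab)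
    refine P_step hX f hR hsub p I hp.1.2 ?_ (fun I' hI' => IH I' hI') (ht p) M Y hM hIM hY
      (hIM.trans (Ideal.radical_le_radical_iff.2 h2)) h1 (by rw [Nat.sub_self]; exact Dge_zero)
    intro N _ hN
    have := free_of_reg p hrp (hR p) (Lm p N) hN
    exact sann_of_free (Module.Projective.of_free)

lemma part_one [IsNoetherianRing R] [IsLocalRing R] {d : ℕ}
    (hd : ringKrullDim R = (d : WithBot ℕ∞)) (hRd : Dge R d R)
    (hreg : ∀ p : PrimeSpectrum R, p.asIdeal ≠ maximalIdeal R → IsRegLocalRing (Lr p))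
    (hR : ∀ p : PrimeSpectrum R, Lge p (ht p) R)
    (hX : IsResolving R 𝒳)
    (hk : ∀ K : ModuleCat.{u} R, IsMinSyz R d (residueMod R) K → K ∈ 𝒳) :
    ∃ f : PrimeSpectrum R → ℕ, GradeConsistent R f ∧
        (∀ p : PrimeSpectrum R,
          (f p : ℕ∞) = heightE R p - ⨅ X ∈ 𝒳, localDepth R p X) ∧
        psiDepth R f = 𝒳 := by
  classical
  have hex : ∀ p : PrimeSpectrum R, ∃ n, ∃ X ∈ 𝒳, ¬ Lge p (n + 1) X := fun p =>
    ⟨ht p, ModuleCat.of R R, hX.proj, not_Lge_R p⟩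
  have hc : ∀ p : PrimeSpectrum R, ∃ n, n ≤ ht p ∧ (∃ X ∈ 𝒳, ¬ Lge p (n + 1) X) ∧
      ∀ X ∈ 𝒳, Lge p n X := by
    intro p
    refine ⟨Nat.find (hex p), Nat.find_min' _ ⟨ModuleCat.of R R, hX.proj, not_Lge_R p⟩,
      Nat.find_spec (hex p), fun X hX1 => ?_⟩
    rcases h0 : Nat.find (hex p) with _ | n
    · exact Dge_zero
    · have := Nat.find_min (hex p) (m := n) (by omega)
      by_contra hcon
      exact this ⟨X, hX1, hcon⟩
  choose n hn hw hn2 using hc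
  have hsub : 𝒳 ⊆ psiDepth R (fun p => ht p - n p) := by
    intro X hX1
    rw [psi_iff]
    refine ⟨hX.fg X hX1, fun p => (hn2 p X hX1).mono ?_⟩
    have := hn p
    omega
  refine ⟨fun p => ht p - n p, ⟨fun p => ?_, fun p q hpq => ?_⟩, fun p => ?_,
    le_antisymm ?_ hsub⟩
  · refine le_trans ?_ (ht_le_grade hR p)
    exact_mod_cast Nat.sub_le _ _
  · obtain ⟨X, hX1, hX2⟩ := hw p
    have := hX.fg X hX1
    have h1 : Lge p (ht p - (ht q - n q)) X := Lge_mono (ht q - n q) (ht q) p q rfl hpq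
      ((hn2 q X hX1).mono (by have := hn q; omega))
    have h2 : ¬ (n p + 1 ≤ ht p - (ht q - n q)) := fun h => hX2 (h1.mono h)
    change ht p - n p ≤ ht q - n q
    omega
  · rw [iInf_localDepth 𝒳 p (n p) hX.fg (hn2 p) (hw p), heightE_eq]
    norm_cast
  · obtain ⟨K, hK⟩ := exists_minSyz (S := R) d (residueMod R) (residue_mem_LF (S := R)).1
    intro M hM
    refine psi_sub hd hRd hreg hR hX (upn_of_minSyz hX d _ K hK (hk K hK)) _ hsub
      (fun p => Nat.sub_le _ _) (fun p => ?_) ⊥ M hM bot_le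
    have := hn p
    rw [show ht p - (ht p - n p) = n p by omega]
    exact hw p

end PartOne

/-- Corollary: over a `d`-dimensional Cohen-Macaulay local ring with an isolated
singularity, `φ` and `ψ` are mutually inverse bijections between the resolving
subcategories of `mod R` containing `Ω^d k` and the grade consistent functions on
`Spec R`. -/
theorem isolated_singularity_classification [IsNoetherianRing R] [IsLocalRing R]
    (hCM : IsCMLocalRing R) (d : ℕ) (hd : ringKrullDim R = (d : WithBot ℕ∞))
    (hisol : ∀ p : PrimeSpectrum R, p.asIdeal ≠ IsLocalRing.maximalIdeal R →
      IsRegLocalRing (Localization.AtPrime p.asIdeal)) :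
    (∀ 𝒳 : Set (ModuleCat.{u} R), IsResolving R 𝒳 →
      (∀ K : ModuleCat.{u} R, IsMinSyz R d (residueMod R) K → K ∈ 𝒳) →
      ∃ f : PrimeSpectrum R → ℕ, GradeConsistent R f ∧
        (∀ p : PrimeSpectrum R,
          (f p : ℕ∞) = heightE R p - ⨅ X ∈ 𝒳, localDepth R p X) ∧
        psiDepth R f = 𝒳) ∧
    (∀ f : PrimeSpectrum R → ℕ, GradeConsistent R f →
      IsResolving R (psiDepth R f) ∧
      (∀ K : ModuleCat.{u} R, IsMinSyz R d (residueMod R) K → K ∈ psiDepth R f) ∧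
      (∀ p : PrimeSpectrum R,
        (f p : ℕ∞) = heightE R p - ⨅ X ∈ psiDepth R f, localDepth R p X)) := by
  have hR := CM_Lge hCM hd
  exact ⟨fun 𝒳 hX hk => part_one hd (CM_Dge hCM hd) hisol hR hX hk,
    fun f hf => part_two hd hR f hf⟩

end ResolvPaper
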